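/- arXiv:1506.06819 — 2 statements merged into one kernel-verified Lean document; each statement's English description precedes it below -/
import Mathlib

section
/- Let r ≥ 2 and n_1,…,n_r be positive integers, let K = K_{n_1,…,n_r} be the complete colorful complex, and fix 1 ≤ k ≤ r−1. Call a set T ⊆ F_k a maximal spanning k-forest of K if the columns of ∂_k indexed by T are linearly independent over ℚ and |T| = rank_ℚ(∂_k), and set t(T) := the cardinality of the torsion subgroup of ker_ℤ(∂_{k−1}) / (the subgroup generated by the columns of ∂_k indexed by T). Then Adin's formula holds: ∑_T t(T)² = ∏_{D⊆[r], |D|≤k} σ_D^{C(r−2−|D|, k−|D|)·π_D}, where σ_D = ∑_{i∈[r]∖D} n_i, π_D = ∏_{i∈D}(n_i−1), and the binomial coefficient C(a,b) is taken to be 1 when b = 0 (even when a < 0) and 0 when 0 ≤ a < b. -/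
open Matrix

namespace ColorfulComplex

variable {r : ℕ} (n : Fin r → ℕ)

/-- The vertex set of the complete colorful complex: the `t`-th vertex of color `j` is
`⟨j, t⟩`. -/
abbrev Vtx (n : Fin r → ℕ) := Σ j : Fin r, Fin (n j)

/-- A fixed linear order on the vertices, compatible with the color classes:
vertices of smaller colors come first. -/
def ord (v : Vtx n) : ℕ := (∑ i ∈ Finset.univ.filter (fun i => i < v.1), n i) + v.2

/-- The `c`-element faces of the complete colorful complex: `c`-element sets of vertices
with at most one vertex of each color. -/
def Face (c : ℕ) :=
  {σ : Finset (Vtx n) // σ.card = c ∧ ∀ v ∈ σ, ∀ w ∈ σ, v.1 = w.1 → v = w}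

instance (c : ℕ) : Fintype (Face n c) := by unfold Face; infer_instance
instance (c : ℕ) : DecidableEq (Face n c) := by unfold Face; infer_instance

/-- The `k`-th boundary matrix of the complete colorful complex: rows are indexed by
`k`-element faces, columns by `(k+1)`-element faces; the `(σ, τ)` entry is `(-1)^i` if
`σ = τ ∖ {x}` with `x` the `i`-th smallest element of `τ` in the fixed order, and `0`
otherwise.  (`k = 0` gives the all-ones augmentation row `∂_0`.) -/
def bdry (k : ℕ) : Matrix (Face n k) (Face n (k + 1)) ℤ :=
  fun σ τ => ∑ x ∈ τ.1,
    if σ.1 = τ.1.erase x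
      then (-1 : ℤ) ^ ((τ.1.filter (fun y => ord n y < ord n x)).card) else 0

/-- `T` is a maximal spanning `k`-forest of the complete colorful complex (here
`k = e + 1`): the columns of `∂_k` indexed by `T` are linearly independent over `ℚ`, and
`|T| = rank_ℚ ∂_k`. -/
def IsForest (e : ℕ) (T : Finset (Face n (e + 2))) : Prop :=
  LinearIndependent ℚ (fun τ : T => fun σ => ((bdry n (e + 1) σ τ.1 : ℤ) : ℚ)) ∧
    T.card = ((bdry n (e + 1)).map (Int.cast : ℤ → ℚ)).rank

/-- The group `ker_ℤ(∂_{k-1}) / (subgroup generated by the columns of `∂_k` indexed by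
`T`)`, for `k = e + 1`. -/
def Hgrp (e : ℕ) (T : Finset (Face n (e + 2))) : Type _ :=
  LinearMap.ker (bdry n e).mulVecLin ⧸
    Submodule.comap (LinearMap.ker (bdry n e).mulVecLin).subtype
      (Submodule.span ℤ ((fun τ => (bdry n (e + 1))ᵀ τ) '' ↑T))

noncomputable instance (e : ℕ) (T : Finset (Face n (e + 2))) :
    AddCommGroup (Hgrp n e T) := by
  unfold Hgrp; infer_instance

noncomputable instance (e : ℕ) (T : Finset (Face n (e + 2))) : Module ℤ (Hgrp n e T) := by
  unfold Hgrp; infer_instance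

/-- `t(T)`: the number of torsion elements of `ker_ℤ(∂_{k-1}) / im_ℤ(∂_k|_T)`. -/
noncomputable def torsionCount (e : ℕ) (T : Finset (Face n (e + 2))) : ℕ :=
  Nat.card (Submodule.torsion ℤ (Hgrp n e T))

end ColorfulComplex

open ColorfulComplex

/-!
Factor `∂_c = B_c M_c` through its image lattice, so that the columns of `B_c` form a basis of the
image. By the Cauchy–Binet formula the weighted number of `k`-forests is `τ_k = det (M_k M_kᵀ)`,
since the maximal minor of `M_k` on `T` is nonzero exactly when `T` is a forest, and then equals
`± t(T)`.

The augmented chain complex of `K` is exact below the top degree. Exactness yields a unimodular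
splitting, which gives `det (B_{c+1}ᵀ B_{c+1}) = τ_c` and
`det (∂_{c+1} ∂_{c+1}ᵀ + ∂_cᵀ ∂_c) = ω_{c+1} ω_c`, where `ω_c = τ_c · det (B_cᵀ B_c) = τ_c τ_{c-1}`.
So the determinants of the Laplacians determine `ω`, which in turn determines `τ`.

The complex is the tensor product, with Koszul signs, of the two-term complexes `ℤ^{n_i} → ℤ`, so
its Laplacian is the sum of the Laplacians of the factors, and its eigenvalues are the sums
`∑_{i ∉ D} n_i`. Counting eigenvectors gives the product in Adin's formula with `r` in place of
`r - 2`, and by Pascal's rule each of the two recursions lowers that parameter by one.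
-/

namespace AdinFormula

open Finset

section CauchyBinet

variable {ι F R : Type*} [Fintype ι] [DecidableEq ι] [CommRing R]

/-- The maximal minor of `A` on the columns in `T`, and `0` if `T` has the wrong size. The columns
are enumerated by an arbitrary bijection, so that only products of two minors on the same columns
have a meaningful sign. -/
noncomputable def maxMinor (A : Matrix ι F R) (T : Finset F) : R :=
  if h : Fintype.card ι = Fintype.card T then
    det (A.submatrix id fun i => (Fintype.equivOfCardEq h i : F)) else 0

theorem det_mul_transpose_eq_sum [Fintype F] (A B : Matrix ι F R) :
    det (A * Bᵀ) = ∑ p : ι → F, (∏ i, A i (p i)) * det (B.submatrix id p) := by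
  classical
  have rows : A * Bᵀ = fun i => ∑ f : F, A i f • Bᵀ f := by
    ext i j
    simp [Matrix.mul_apply, Finset.sum_apply]
  calc det (A * Bᵀ) = ∑ p : ι → F, det (fun i => A i (p i) • Bᵀ (p i)) := by
        rw [rows]
        exact (detRowAlternating (n := ι) (R := R)).toMultilinearMap.map_sum
          fun i f => A i f • Bᵀ f
    _ = ∑ p : ι → F, (∏ i, A i (p i)) * det (B.submatrix id p) := by
        refine sum_congr rfl fun p _ => ?_
        rw [← det_transpose (B.submatrix id p)]
        exact (detRowAlternating (n := ι) (R := R)).toMultilinearMap.map_smul_univ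
          (fun i => A i (p i)) (fun i => Bᵀ (p i))

theorem sum_filter_image_eq_sum_perm {M : Type*} [AddCommMonoid M] [Fintype F] [DecidableEq F]
    (T : Finset F) (e : ι ≃ T) (f : (ι → F) → M) :
    ∑ p with univ.image p = T, f p = ∑ π : Equiv.Perm ι, f fun i => e (π i) := by
  symm
  refine sum_bij (fun π _ i => (e (π i) : F)) (fun π _ => ?_) (fun π _ π' _ h => ?_)
    (fun p hp => ?_) fun _ _ => rfl
  · rw [mem_filter_univ]
    ext x
    simp only [mem_image, mem_univ, true_and]
    exact ⟨fun ⟨i, hi⟩ => hi ▸ (e (π i)).2, fun hx => ⟨π.symm (e.symm ⟨x, hx⟩), by simp⟩⟩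
  · ext i
    simpa using congrFun h i
  · rw [mem_filter_univ] at hp
    have mem (i) : p i ∈ T := hp ▸ mem_image_of_mem p (mem_univ i)
    have surj : Function.Surjective fun i => e.symm ⟨p i, mem i⟩ := fun j => by
      obtain ⟨i, -, hi⟩ := mem_image.1 (hp ▸ (e j).2 : (e j : F) ∈ univ.image p)
      exact ⟨i, by simp [hi]⟩
    exact ⟨.ofBijective _ (Finite.surjective_iff_bijective.1 surj), mem_univ _, by ext; simp⟩

theorem sum_filter_image_eq_maxMinor_mul [Fintype F] [DecidableEq F] (A B : Matrix ι F R)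
    (T : Finset F) :
    ∑ p with univ.image p = T, (∏ i, A i (p i)) * det (B.submatrix id p) =
      maxMinor A T * maxMinor B T := by
  unfold maxMinor
  split_ifs with h
  · set e : ι ≃ T := Fintype.equivOfCardEq h
    have sign_det (π : Equiv.Perm ι) : det (B.submatrix id fun i => (e (π i) : F)) =
        Equiv.Perm.sign π * det (B.submatrix id fun i => (e i : F)) :=
      det_permute' π (B.submatrix id fun i => (e i : F))
    rw [sum_filter_image_eq_sum_perm T e, ← det_transpose (A.submatrix _ _), det_apply', sum_mul]
    refine sum_congr rfl fun π _ => ?_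
    simp only [sign_det, transpose_apply, submatrix_apply, id_eq]
    ring
  · rw [zero_mul]
    refine sum_eq_zero fun p hp => ?_
    rw [mem_filter_univ] at hp
    have not_inj : ¬ Function.Injective p := fun hi =>
      h (by rw [← hp, Fintype.card_coe, card_image_of_injective _ hi, card_univ])
    obtain ⟨i, j, hij, hne⟩ : ∃ i j, p i = p j ∧ i ≠ j := by
      simpa [Function.Injective] using not_inj
    rw [det_zero_of_column_eq hne fun k => by simp [hij], mul_zero]

theorem det_mul_transpose_eq_sum_maxMinor [Fintype F] (A B : Matrix ι F R) :
    det (A * Bᵀ) = ∑ T, maxMinor A T * maxMinor B T := by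
  classical
  rw [det_mul_transpose_eq_sum, ← sum_fiberwise (g := fun p : ι → F => univ.image p)]
  exact sum_congr rfl fun T _ => sum_filter_image_eq_maxMinor_mul A B T

theorem det_mul_transpose_self_nonneg [Fintype F] (A : Matrix ι F ℤ) : 0 ≤ det (A * Aᵀ) := by
  rw [det_mul_transpose_eq_sum_maxMinor]
  exact sum_nonneg fun T _ => mul_self_nonneg (maxMinor A T)

end CauchyBinet

section SplitExact

variable {ι κ F G R : Type*} [Fintype ι] [CommRing R]

theorem mul_left_cancel_of_mulVec_injective {B : Matrix F ι R} (inj : Function.Injective B.mulVec)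
    {X Y : Matrix ι G R} (h : B * X = B * Y) : X = Y :=
  ext fun i g => congrFun (inj (a₁ := X.col g) (a₂ := Y.col g)
    (funext fun f => congrFun (congrFun h f) g)) i

variable [Fintype F]

theorem mul_eq_zero_of_exact {B : Matrix F ι R} {M : Matrix κ F R}
    (hexact : Function.Exact B.mulVec M.mulVec) : M * B = 0 := by
  refine ext_iff_mulVec.2 fun x => ?_
  rw [← mulVec_mulVec, hexact.apply_apply_eq_zero, zero_mulVec]

theorem exists_mul_eq_of_exact {B : Matrix F ι R} {M : Matrix κ F R}
    (hexact : Function.Exact B.mulVec M.mulVec) {Y : Matrix F G R} (hY : M * Y = 0) :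
    ∃ X, B * X = Y := by
  have hcol (g : G) : ∃ x, B *ᵥ x = Y.col g :=
    (hexact _).1 <| funext fun k => congrFun (congrFun hY k) g
  choose X hX using hcol
  exact ⟨(of X)ᵀ, ext fun f g => congrFun (hX g) f⟩

variable [DecidableEq ι] [Fintype κ] [DecidableEq κ]

theorem exists_splitting [DecidableEq F] {B : Matrix F ι R} {M : Matrix κ F R}
    (inj : Function.Injective B.mulVec) (surj : Function.Surjective M.mulVec)
    (hexact : Function.Exact B.mulVec M.mulVec) :
    ∃ (N : Matrix ι F R) (S : Matrix F κ R),
      fromCols B S * fromRows N M = 1 ∧ fromRows N M * fromCols B S = 1 := by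
  have hMB : M * B = 0 := mul_eq_zero_of_exact hexact
  obtain ⟨S, hMS⟩ := mulVec_surjective_iff_exists_right_inverse.1 surj
  obtain ⟨N, hBN⟩ : ∃ N : Matrix ι F R, B * N = 1 - S * M := exists_mul_eq_of_exact hexact <| by
    rw [Matrix.mul_sub, ← Matrix.mul_assoc, hMS, Matrix.mul_one, Matrix.one_mul, sub_self]
  have hNB : N * B = 1 := mul_left_cancel_of_mulVec_injective inj <| by
    rw [← Matrix.mul_assoc, hBN, Matrix.sub_mul, Matrix.mul_assoc, hMB, Matrix.one_mul,
      Matrix.mul_zero, sub_zero, Matrix.mul_one]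
  have hNS : N * S = 0 := mul_left_cancel_of_mulVec_injective inj <| by
    rw [← Matrix.mul_assoc, hBN, Matrix.sub_mul, Matrix.mul_assoc, hMS, Matrix.one_mul,
      Matrix.mul_one, sub_self, Matrix.mul_zero]
  exact ⟨N, S, by simp [fromCols_mul_fromRows, hBN], by simp [hNB, hNS, hMS, hMB]⟩

theorem det_add_of_exact [DecidableEq F] {B : Matrix F ι R} {M : Matrix κ F R}
    (inj : Function.Injective B.mulVec) (surj : Function.Surjective M.mulVec)
    (hexact : Function.Exact B.mulVec M.mulVec) (X : Matrix ι ι R) (Y : Matrix κ κ R) :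
    det (B * X * Bᵀ + Mᵀ * Y * M) = det X * det (Bᵀ * B) * det (M * Mᵀ) * det Y := by
  obtain ⟨N, S, hUV, hVU⟩ := exists_splitting inj surj hexact
  obtain ⟨hNB, -, hMB, hMS⟩ : N * B = 1 ∧ N * S = 0 ∧ M * B = 0 ∧ M * S = 1 := by
    rwa [fromRows_mul_fromCols, ← fromBlocks_one, fromBlocks_inj] at hVU
  have hVW : det (fromRows N M * fromCols B Mᵀ) = det (M * Mᵀ) := by simp [hNB, hMB]
  have hWU : det (fromRows Bᵀ M * fromCols B S) = det (Bᵀ * B) := by simp [hMB, hMS]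
  have factor : B * X * Bᵀ + Mᵀ * Y * M =
      fromCols B Mᵀ * (fromBlocks X 0 0 Y * fromRows Bᵀ M) := by
    simp only [fromBlocks_mul_fromRows, fromCols_mul_fromRows, Matrix.zero_mul, add_zero, zero_add,
      Matrix.mul_assoc]
  calc det (B * X * Bᵀ + Mᵀ * Y * M)
      = det (fromCols B S * (fromRows N M * fromCols B Mᵀ * (fromBlocks X 0 0 Y *
          fromRows Bᵀ M))) := by
        rw [factor, ← Matrix.mul_assoc (fromCols B S), ← Matrix.mul_assoc (fromCols B S), hUV,
          Matrix.one_mul]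
    _ = det (fromRows N M * fromCols B Mᵀ * fromBlocks X 0 0 Y *
          (fromRows Bᵀ M * fromCols B S)) := by
        rw [det_comm' hUV hVU]
        simp only [Matrix.mul_assoc]
    _ = det X * det (Bᵀ * B) * det (M * Mᵀ) * det Y := by
        rw [det_mul, det_mul, hVW, hWU, det_fromBlocks_zero₂₁]
        ring

theorem det_transpose_mul_eq_det_mul_transpose_of_exact {B : Matrix F ι ℤ} {M : Matrix κ F ℤ}
    (inj : Function.Injective B.mulVec) (surj : Function.Surjective M.mulVec)
    (hexact : Function.Exact B.mulVec M.mulVec) : det (Bᵀ * B) = det (M * Mᵀ) := by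
  classical
  obtain ⟨N, S, hUV, hVU⟩ := exists_splitting inj surj hexact
  obtain ⟨hNB, -, hMB, hMS⟩ : N * B = 1 ∧ N * S = 0 ∧ M * B = 0 ∧ M * S = 1 := by
    rwa [fromRows_mul_fromCols, ← fromBlocks_one, fromBlocks_inj] at hVU
  set U := fromCols B S
  set V := fromRows N M
  set W := fromCols B Mᵀ
  have hBM : Bᵀ * Mᵀ = 0 := by rw [← transpose_mul, hMB, transpose_zero]
  have hSM : Sᵀ * Mᵀ = 1 := by rw [← transpose_mul, hMS, transpose_one]
  have unimodular : det (Uᵀ * U) = 1 := by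
    have inverse : det (Uᵀ * U) * det (V * Vᵀ) = 1 := by
      rw [← det_mul, Matrix.mul_assoc, ← Matrix.mul_assoc U, hUV, Matrix.one_mul,
        ← transpose_mul, hVU, transpose_one, det_one]
    have nonneg : 0 ≤ det (Uᵀ * U) := by simpa using det_mul_transpose_self_nonneg Uᵀ
    exact (Int.eq_one_or_neg_one_of_mul_eq_one inverse).resolve_right (by lia)
  calc det (Bᵀ * B) = det (Uᵀ * W) := by simp [U, W, transpose_fromCols, hBM, hSM]
    _ = det (Uᵀ * U * (V * W)) := by
        rw [Matrix.mul_assoc, ← Matrix.mul_assoc U, hUV, Matrix.one_mul]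
    _ = det (M * Mᵀ) := by
        rw [det_mul, unimodular, one_mul]
        simp [V, W, hNB, hMB]

end SplitExact

theorem col_mem_range_mulVecLin {F G R : Type*} [Fintype G] [CommSemiring R] (A : Matrix F G R)
    (τ : G) : A.col τ ∈ A.mulVecLin.range :=
  A.range_mulVecLin ▸ Submodule.subset_span (Set.mem_range_self τ)

section RankFactorization

variable {F G H R : Type*} [Fintype G] [CommRing R] [IsDomain R]
  [IsPrincipalIdealRing R]

/-- A basis of the column space of `A`. -/
noncomputable def imageBasis (A : Matrix F G R) :
    Module.Basis (Fin (Module.finrank R A.mulVecLin.range)) R A.mulVecLin.range :=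
  Module.finBasis R _

/-- The left factor of the rank factorization of `A`: its columns are a basis of the column space
of `A`. -/
noncomputable def imageMatrix (A : Matrix F G R) :
    Matrix F (Fin (Module.finrank R A.mulVecLin.range)) R :=
  of fun σ i => (imageBasis A i : F → R) σ

/-- The right factor of the rank factorization of `A`: its columns are the coordinates of the
columns of `A` in the basis `imageBasis A`. -/
noncomputable def coordMatrix (A : Matrix F G R) :
    Matrix (Fin (Module.finrank R A.mulVecLin.range)) G R :=
  of fun i τ => (imageBasis A).repr ⟨A.col τ, col_mem_range_mulVecLin A τ⟩ i

theorem imageMatrix_mulVec (A : Matrix F G R) (x : Fin _ → R) :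
    imageMatrix A *ᵥ x = ((imageBasis A).equivFun.symm x : F → R) := by
  ext σ
  simp [imageMatrix, mulVec, dotProduct, Module.Basis.equivFun_symm_apply, Finset.sum_apply,
    mul_comm]

theorem imageMatrix_mul_coordMatrix (A : Matrix F G R) : imageMatrix A * coordMatrix A = A := by
  ext σ τ
  have coordinates : imageMatrix A *ᵥ (coordMatrix A).col τ = A.col τ := by
    rw [imageMatrix_mulVec]
    exact congrArg Subtype.val ((imageBasis A).equivFun.symm_apply_apply ⟨A.col τ, _⟩)
  exact congrFun coordinates σ

theorem imageMatrix_mulVec_injective (A : Matrix F G R) :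
    Function.Injective (imageMatrix A).mulVec := fun x y h => by
  rw [imageMatrix_mulVec, imageMatrix_mulVec] at h
  exact (imageBasis A).equivFun.symm.injective (Subtype.ext h)

theorem coordMatrix_mulVec_surjective (A : Matrix F G R) :
    Function.Surjective (coordMatrix A).mulVec := fun x => by
  obtain ⟨y, hy⟩ := ((imageBasis A).equivFun.symm x).2
  refine ⟨y, imageMatrix_mulVec_injective A ?_⟩
  rw [mulVec_mulVec, imageMatrix_mul_coordMatrix, imageMatrix_mulVec, ← hy, mulVecLin_apply]

theorem range_imageMatrix_mulVec (A : Matrix F G R) :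
    Set.range (imageMatrix A).mulVec = Set.range A.mulVec := by
  conv_rhs => rw [← imageMatrix_mul_coordMatrix A]
  rw [← (coordMatrix_mulVec_surjective A).range_comp]
  congr 1
  ext1 y
  exact mulVec_mulVec y _ _

theorem exact_imageMatrix_coordMatrix [Fintype H] {A' : Matrix G H R}
    {A : Matrix F G R} (hexact : Function.Exact A'.mulVec A.mulVec) :
    Function.Exact (imageMatrix A').mulVec (coordMatrix A).mulVec := fun y => by
  rw [range_imageMatrix_mulVec, ← hexact y, ← imageMatrix_mul_coordMatrix A, ← mulVec_mulVec,
    imageMatrix_mul_coordMatrix A]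
  exact ⟨fun h => by rw [h, mulVec_zero], fun h =>
    imageMatrix_mulVec_injective A (h.trans (mulVec_zero _).symm)⟩

end RankFactorization

section GramDeterminants

variable {F G H : Type*} [Fintype G] [Fintype H]

/-- The squared covolume of the lattice spanned by the columns of `A`. -/
noncomputable def imageGram [Fintype F] (A : Matrix F G ℤ) : ℤ :=
  det ((imageMatrix A)ᵀ * imageMatrix A)

/-- The Gram determinant of the right factor of `A`: by Cauchy–Binet, the sum of the squared
maximal minors of `A` in a basis of its column space. For `A = ∂_k` with trivial homology below
this is the weighted number of `k`-forests. -/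
noncomputable def coordGram (A : Matrix F G ℤ) : ℤ :=
  det (coordMatrix A * (coordMatrix A)ᵀ)

theorem imageGram_eq_coordGram_of_exact {A' : Matrix G H ℤ} {A : Matrix F G ℤ}
    (hexact : Function.Exact A'.mulVec A.mulVec) : imageGram A' = coordGram A :=
  det_transpose_mul_eq_det_mul_transpose_of_exact (imageMatrix_mulVec_injective A')
    (coordMatrix_mulVec_surjective A) (exact_imageMatrix_coordMatrix hexact)

theorem det_laplacian_of_exact [Fintype F] [DecidableEq G] {A' : Matrix G H ℤ} {A : Matrix F G ℤ}
    (hexact : Function.Exact A'.mulVec A.mulVec) :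
    det (A' * A'ᵀ + Aᵀ * A) =
      (coordGram A' * imageGram A') * (coordGram A * imageGram A) := by
  calc det (A' * A'ᵀ + Aᵀ * A)
      = det (imageMatrix A' * (coordMatrix A' * (coordMatrix A')ᵀ) * (imageMatrix A')ᵀ +
          (coordMatrix A)ᵀ * ((imageMatrix A)ᵀ * imageMatrix A) * coordMatrix A) := by
        conv_lhs => rw [← imageMatrix_mul_coordMatrix A', ← imageMatrix_mul_coordMatrix A]
        simp only [transpose_mul, Matrix.mul_assoc]
    _ = _ := by
        rw [det_add_of_exact (imageMatrix_mulVec_injective A') (coordMatrix_mulVec_surjective A)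
          (exact_imageMatrix_coordMatrix hexact), imageGram, imageGram, coordGram, coordGram]
        ring

theorem isEmpty_fin_finrank_range_zero :
    IsEmpty (Fin (Module.finrank ℤ (0 : Matrix F G ℤ).mulVecLin.range)) := by
  rw [mulVecLin_zero, LinearMap.range_zero, finrank_bot]
  infer_instance

theorem coordGram_zero : coordGram (0 : Matrix F G ℤ) = 1 :=
  have := isEmpty_fin_finrank_range_zero (F := F) (G := G)
  det_isEmpty

theorem imageGram_zero [Fintype F] : imageGram (0 : Matrix F G ℤ) = 1 :=
  have := isEmpty_fin_finrank_range_zero (F := F) (G := G)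
  det_isEmpty

theorem exact_zero_of_surjective [Fintype F] {A : Matrix F G ℤ}
    (surj : Function.Surjective A.mulVec) :
    Function.Exact A.mulVec (0 : Matrix Empty F ℤ).mulVec := fun y => by
  simp [surj.range_eq]

theorem imageGram_of_surjective [Fintype F] {A : Matrix F G ℤ}
    (surj : Function.Surjective A.mulVec) : imageGram A = 1 := by
  rw [imageGram_eq_coordGram_of_exact (exact_zero_of_surjective surj), coordGram_zero]

theorem det_mul_transpose_of_surjective [Fintype F] [DecidableEq F] {A : Matrix F G ℤ}
    (surj : Function.Surjective A.mulVec) : det (A * Aᵀ) = coordGram A * imageGram A := by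
  simpa [coordGram_zero, imageGram_zero] using
    det_laplacian_of_exact (exact_zero_of_surjective surj)

end GramDeterminants

section IndependentColumns

variable {F G : Type*} [Fintype G]

theorem imageMatrix_map_mulVec_injective (A : Matrix F G ℤ) :
    Function.Injective ((imageMatrix A).map (Int.castRingHom ℚ)).mulVec := by
  have independent : LinearIndependent ℤ (imageMatrix A).col :=
    mulVec_injective_iff.1 (imageMatrix_mulVec_injective A)
  let castLin : (F → ℤ) →ₗ[ℤ] F → ℚ := (Int.castAddHom ℚ).toIntLinearMap.compLeft F
  have castLin_ker : castLin.ker = ⊥ := LinearMap.ker_eq_bot.2 fun x y h =>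
    funext fun f => Int.cast_injective (congrFun h f)
  rw [mulVec_injective_iff, ← LinearIndependent.iff_fractionRing ℤ ℚ]
  exact independent.map' castLin castLin_ker

theorem map_eq_imageMatrix_mul_coordMatrix (A : Matrix F G ℤ) :
    A.map (Int.castRingHom ℚ) =
      (imageMatrix A).map (Int.castRingHom ℚ) * (coordMatrix A).map (Int.castRingHom ℚ) := by
  rw [← Matrix.map_mul, imageMatrix_mul_coordMatrix]

theorem rank_map_intCast (A : Matrix F G ℤ) :
    (A.map (Int.castRingHom ℚ)).rank = Module.finrank ℤ A.mulVecLin.range := by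
  classical
  obtain ⟨S, hS⟩ := mulVec_surjective_iff_exists_right_inverse.1 (coordMatrix_mulVec_surjective A)
  have surj : ((coordMatrix A).map (Int.castRingHom ℚ)).mulVecLin.range = ⊤ :=
    LinearMap.range_eq_top.2 <| mulVec_surjective_iff_exists_right_inverse.2
      ⟨S.map (Int.castRingHom ℚ), by rw [← Matrix.map_mul, hS, Matrix.map_one] <;> simp⟩
  rw [map_eq_imageMatrix_mul_coordMatrix, rank, mulVecLin_mul,
    LinearMap.range_comp_of_range_eq_top _ surj,
    LinearMap.finrank_range_of_inj (imageMatrix_map_mulVec_injective A), Module.finrank_fin_fun]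

theorem linearIndependent_cols_iff_det_coordMatrix_ne_zero (A : Matrix F G ℤ) {T : Finset G}
    (e : Fin (Module.finrank ℤ A.mulVecLin.range) ≃ T) :
    LinearIndependent ℚ (fun τ : T => (A.map (Int.castRingHom ℚ)).col τ) ↔
      det ((coordMatrix A).submatrix id fun i => (e i : G)) ≠ 0 := by
  set P := (coordMatrix A).submatrix id fun i => (e i : G)
  have factor : (fun τ : T => (A.map (Int.castRingHom ℚ)).col τ) ∘ e =
      ((imageMatrix A).map (Int.castRingHom ℚ) * P.map (Int.castRingHom ℚ)).col := by
    rw [map_eq_imageMatrix_mul_coordMatrix]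
    rfl
  have comp : ((imageMatrix A).map (Int.castRingHom ℚ) * P.map (Int.castRingHom ℚ)).mulVec =
      ((imageMatrix A).map (Int.castRingHom ℚ)).mulVec ∘ (P.map (Int.castRingHom ℚ)).mulVec :=
    funext fun x => (mulVec_mulVec x _ _).symm
  rw [← linearIndependent_equiv e, factor, ← mulVec_injective_iff, comp,
    (imageMatrix_map_mulVec_injective A).of_comp_iff, mulVec_injective_iff_isUnit,
    isUnit_iff_isUnit_det, isUnit_iff_ne_zero, ← RingHom.mapMatrix_apply, ← RingHom.map_det,
    eq_intCast, Int.cast_ne_zero]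

theorem linearIndependent_cols_and_card_eq_rank_iff (A : Matrix F G ℤ) (T : Finset G) :
    LinearIndependent ℚ (fun τ : T => (A.map (Int.castRingHom ℚ)).col τ) ∧
      T.card = (A.map (Int.castRingHom ℚ)).rank ↔ maxMinor (coordMatrix A) T ≠ 0 := by
  rw [rank_map_intCast, maxMinor]
  split_ifs with h
  · rw [linearIndependent_cols_iff_det_coordMatrix_ne_zero A (Fintype.equivOfCardEq h)]
    rw [Fintype.card_fin, Fintype.card_coe] at h
    simp [h]
  · rw [Fintype.card_fin, Fintype.card_coe] at h
    simp [Ne.symm h]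

end IndependentColumns

section Torsion

theorem torsion_eq_top_of_finite (M : Type*) [AddCommGroup M] [Finite M] :
    Submodule.torsion ℤ M = ⊤ :=
  (Submodule.isTorsion'_iff_torsion'_eq_top _).1 <|
    isAddTorsion_iff_isTorsion_int.1 isAddTorsion_of_finite

theorem comap_subtype_span_range {M ι : Type*} [AddCommGroup M] (L : Submodule ℤ M)
    (v : ι → L) :
    (Submodule.span ℤ (Set.range fun i => (v i : M))).comap L.subtype =
      Submodule.span ℤ (Set.range v) := by
  have range_val : Set.range (fun i => (v i : M)) = L.subtype '' Set.range v :=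
    Set.range_comp _ v
  rw [range_val, Submodule.span_image, Submodule.comap_map_eq_of_injective L.injective_subtype]

variable {L ι : Type*} [AddCommGroup L] [Fintype ι] [DecidableEq ι]

theorem card_quotient_span_eq_natAbs_det (b : Module.Basis ι ℤ L) {v : ι → L}
    (hv : b.det v ≠ 0) :
    Nat.card (L ⧸ Submodule.span ℤ (Set.range v)) = (b.det v).natAbs := by
  have := Module.Free.of_basis b
  have := Module.Finite.of_basis b
  have independent : LinearIndependent ℤ v :=
    .of_comp b.equivFun.toLinearMap (linearIndependent_cols_of_det_ne_zero hv)
  rw [← Submodule.natAbs_det_basis_change b _ (Module.Basis.span independent)]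
  congr 2
  ext i
  simp [Module.Basis.span_apply]

theorem card_torsion_quotient_span_eq_natAbs_det (b : Module.Basis ι ℤ L) {v : ι → L}
    (hv : b.det v ≠ 0) :
    Nat.card (Submodule.torsion ℤ (L ⧸ Submodule.span ℤ (Set.range v))) = (b.det v).natAbs := by
  have card := card_quotient_span_eq_natAbs_det b hv
  have : Finite (L ⧸ Submodule.span ℤ (Set.range v)) :=
    Nat.finite_of_card_ne_zero (by rw [card]; exact Int.natAbs_ne_zero.2 hv)
  rw [torsion_eq_top_of_finite, ← card]
  exact Nat.card_congr (Equiv.Set.univ _)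

theorem card_torsion_range_quotient_eq_natAbs_maxMinor {G H : Type*} [Fintype H]
    (A : Matrix G H ℤ) {T : Finset H} (hT : maxMinor (coordMatrix A) T ≠ 0) :
    Nat.card (Submodule.torsion ℤ (A.mulVecLin.range ⧸
      (Submodule.span ℤ (A.col '' (T : Set H))).comap A.mulVecLin.range.subtype)) =
      (maxMinor (coordMatrix A) T).natAbs := by
  unfold maxMinor at hT ⊢
  split_ifs at hT ⊢ with h
  · set e := Fintype.equivOfCardEq h
    let v (i) : A.mulVecLin.range := ⟨A.col (e i), col_mem_range_mulVecLin A (e i)⟩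
    have image_eq : A.col '' (T : Set H) = Set.range fun i => (v i : G → ℤ) := by
      rw [Set.image_eq_range, ← e.surjective.range_comp]
      rfl
    rw [image_eq, comap_subtype_span_range]
    exact card_torsion_quotient_span_eq_natAbs_det (imageBasis A) (v := v) hT
  · exact absurd rfl hT

end Torsion

section PiKronecker

variable {ι R : Type*} [Fintype ι] [CommRing R] {O P Q : ι → Type*}

/-- The Kronecker product of a family of matrices. -/
def piKronecker :
    MultilinearMap R (fun i => Matrix (O i) (P i) R) (Matrix (∀ i, O i) (∀ i, P i) R) where
  toFun A := of fun f g => ∏ i, A i (f i) (g i)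
  map_update_add' A j X Y := by
    ext f g
    exact ((MultilinearMap.mkPiAlgebra R ι R).compLinearMap fun i =>
      entryLinearMap R R (f i) (g i)).map_update_add A j X Y
  map_update_smul' A j c X := by
    ext f g
    exact ((MultilinearMap.mkPiAlgebra R ι R).compLinearMap fun i =>
      entryLinearMap R R (f i) (g i)).map_update_smul A j c X

theorem piKronecker_apply (A : ∀ i, Matrix (O i) (P i) R) (f g) :
    piKronecker A f g = ∏ i, A i (f i) (g i) :=
  rfl

theorem piKronecker_mul [DecidableEq ι] [∀ i, Fintype (P i)] (A : ∀ i, Matrix (O i) (P i) R)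
    (B : ∀ i, Matrix (P i) (Q i) R) :
    piKronecker A * piKronecker B = piKronecker fun i => A i * B i := by
  ext f g
  simp only [piKronecker_apply, mul_apply, ← prod_mul_distrib]
  rw [prod_univ_sum, Fintype.piFinset_univ]

theorem piKronecker_one [∀ i, DecidableEq (O i)] :
    piKronecker (fun i => (1 : Matrix (O i) (O i) R)) = 1 := by
  ext f g
  rw [piKronecker_apply]
  rcases eq_or_ne f g with rfl | h
  · simp
  · obtain ⟨i, hi⟩ := Function.ne_iff.1 h
    rw [one_apply_ne h]
    exact prod_eq_zero (mem_univ i) (one_apply_ne hi)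

theorem piKronecker_transpose (A : ∀ i, Matrix (O i) (P i) R) :
    (piKronecker A)ᵀ = piKronecker fun i => (A i)ᵀ :=
  rfl

theorem piKronecker_smul_one [∀ i, DecidableEq (O i)] (c : ι → R) :
    piKronecker (fun i => c i • (1 : Matrix (O i) (O i) R)) = (∏ i, c i) • 1 := by
  rw [MultilinearMap.map_smul_univ, piKronecker_one]

variable [DecidableEq ι]

theorem piKronecker_commute [∀ i, Fintype (O i)] {A B : ∀ i, Matrix (O i) (O i) R}
    (h : ∀ i, A i * B i = B i * A i) :
    piKronecker A * piKronecker B = piKronecker B * piKronecker A := by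
  rw [piKronecker_mul, piKronecker_mul, funext h]

variable [∀ i, DecidableEq (O i)]

/-- The operator acting as `X` on the tensor factor `j` and trivially on the others. -/
def localAt (j : ι) (X : Matrix (O j) (O j) R) : Matrix (∀ i, O i) (∀ i, O i) R :=
  piKronecker (Function.update (fun i => (1 : Matrix (O i) (O i) R)) j X)

theorem localAt_one (j : ι) : localAt j (1 : Matrix (O j) (O j) R) = 1 := by
  rw [localAt, Function.update_eq_self_iff.2 rfl, piKronecker_one]

theorem localAt_zero (j : ι) : localAt (O := O) j (0 : Matrix (O j) (O j) R) = 0 :=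
  piKronecker.map_update_zero _ j

theorem localAt_add (j : ι) (X Y : Matrix (O j) (O j) R) :
    localAt j (X + Y) = localAt j X + localAt j Y :=
  piKronecker.map_update_add _ j X Y

theorem localAt_mul_piKronecker [∀ i, Fintype (O i)] (j : ι) (X : Matrix (O j) (O j) R)
    (A : ∀ i, Matrix (O i) (O i) R) :
    localAt j X * piKronecker A = piKronecker (Function.update A j (X * A j)) := by
  rw [localAt, piKronecker_mul]
  congr 1
  funext i
  rcases eq_or_ne i j with rfl | h <;> simp [*]

theorem piKronecker_mul_localAt [∀ i, Fintype (O i)] (j : ι) (X : Matrix (O j) (O j) R)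
    (A : ∀ i, Matrix (O i) (O i) R) :
    piKronecker A * localAt j X = piKronecker (Function.update A j (A j * X)) := by
  rw [localAt, piKronecker_mul]
  congr 1
  funext i
  rcases eq_or_ne i j with rfl | h <;> simp [*]

end PiKronecker

section Koszul

variable {ι R : Type*} [Fintype ι] [LinearOrder ι] [CommRing R] {O : ι → Type*}
  [∀ i, DecidableEq (O i)] {ε : ∀ i, Matrix (O i) (O i) R}

/-- The operator acting as `X` on the tensor factor `j`, with the Koszul sign: on the factors
before `j` it acts as the grading involution `ε`. -/
def koszulAt (ε : ∀ i, Matrix (O i) (O i) R) (j : ι) (X : Matrix (O j) (O j) R) :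
    Matrix (∀ i, O i) (∀ i, O i) R :=
  piKronecker (Function.update (fun i => if i < j then ε i else 1) j X)

theorem koszulAt_transpose (hε : ∀ i, (ε i)ᵀ = ε i) (j : ι) (X : Matrix (O j) (O j) R) :
    (koszulAt ε j X)ᵀ = koszulAt ε j Xᵀ := by
  rw [koszulAt, piKronecker_transpose, koszulAt]
  congr 1
  funext i
  rcases eq_or_ne i j with rfl | h
  · simp
  · by_cases h' : i < j <;> simp [*]

variable [∀ i, Fintype (O i)]

theorem koszulAt_mul_koszulAt_same (hε : ∀ i, ε i * ε i = 1) (j : ι)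
    (X Y : Matrix (O j) (O j) R) : koszulAt ε j X * koszulAt ε j Y = localAt j (X * Y) := by
  rw [koszulAt, koszulAt, piKronecker_mul, localAt]
  congr 1
  funext i
  rcases eq_or_ne i j with rfl | h
  · simp
  · by_cases h' : i < j <;> simp [*]

theorem koszulAt_anticommute_of_lt {i j : ι} (hij : i < j) {X : Matrix (O i) (O i) R}
    (hX : ε i * X = -(X * ε i)) (Y : Matrix (O j) (O j) R) :
    koszulAt ε i X * koszulAt ε j Y + koszulAt ε j Y * koszulAt ε i X = 0 := by
  set A := Function.update (fun k => if k < i then ε k else 1) i X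
  set B := Function.update (fun k => if k < j then ε k else 1) j Y
  have comm (k : ι) (hk : k ≠ i) : A k * B k = B k * A k := by
    rcases eq_or_ne k j with rfl | h
    · simp [A, hk, hij.not_gt]
    · by_cases h' : k < i <;> by_cases h'' : k < j <;> simp [A, B, *]
  have slot : B i * A i = -(A i * B i) := by simp [A, B, hij.ne, hij, hX]
  have swap : (fun k => B k * A k) = Function.update (fun k => A k * B k) i (-(A i * B i)) := by
    funext k
    rcases eq_or_ne k i with rfl | hk
    · simp [slot]
    · simp [hk, comm k hk]
  change piKronecker A * piKronecker B + piKronecker B * piKronecker A = 0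
  rw [piKronecker_mul, piKronecker_mul, swap, MultilinearMap.map_update_neg,
    Function.update_eq_self, add_neg_cancel]

theorem sum_koszulAt_anticommutator (hε : ∀ i, ε i * ε i = 1) {X : ∀ i, Matrix (O i) (O i) R}
    (hX : ∀ i, ε i * X i = -(X i * ε i)) {j : ι} {Y : Matrix (O j) (O j) R}
    (hY : ε j * Y = -(Y * ε j)) :
    (∑ i, koszulAt ε i (X i)) * koszulAt ε j Y + koszulAt ε j Y * ∑ i, koszulAt ε i (X i) =
      localAt j (X j * Y + Y * X j) := by
  rw [sum_mul, mul_sum, ← sum_add_distrib, sum_eq_single_of_mem j (mem_univ j),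
    koszulAt_mul_koszulAt_same hε, koszulAt_mul_koszulAt_same hε, localAt_add]
  intro i _ hij
  rcases hij.lt_or_gt with h | h
  · exact koszulAt_anticommute_of_lt h (hX i) Y
  · rw [add_comm, koszulAt_anticommute_of_lt h hY (X i)]

theorem sum_koszulAt_mul_piKronecker {X A : ∀ i, Matrix (O i) (O i) R}
    (hX : ∀ i, X i * A i = A i * X i) (hA : ∀ i, ε i * A i = A i * ε i) :
    (∑ j, koszulAt ε j (X j)) * piKronecker A = piKronecker A * ∑ j, koszulAt ε j (X j) := by
  rw [sum_mul, mul_sum]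
  refine sum_congr rfl fun j _ => piKronecker_commute fun i => ?_
  rcases eq_or_ne i j with rfl | h
  · simp [hX]
  · by_cases h' : i < j <;> simp [*]

theorem sum_koszulAt_mul_self [IsAddTorsionFree R] (hε : ∀ i, ε i * ε i = 1)
    {d : ∀ i, Matrix (O i) (O i) R} (hεd : ∀ i, ε i * d i = -(d i * ε i))
    (hd : ∀ i, d i * d i = 0) :
    (∑ j, koszulAt ε j (d j)) * ∑ j, koszulAt ε j (d j) = 0 := by
  set D := ∑ j, koszulAt ε j (d j)
  have double : D * D + D * D = 0 := calc
    D * D + D * D = ∑ j, (D * koszulAt ε j (d j) + koszulAt ε j (d j) * D) := by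
      rw [sum_add_distrib, ← mul_sum, ← sum_mul]
    _ = 0 := sum_eq_zero fun j _ => by
      rw [sum_koszulAt_anticommutator hε hεd (hεd j), hd j, add_zero, localAt_zero]
  ext f g
  exact self_eq_neg.1 (eq_neg_of_add_eq_zero_left (congrFun₂ double f g))

/-- The endomorphism `1 - (d h + h d)` homotopic to the identity, on the tensor factors in `s`. -/
def retractOn (d h : ∀ i, Matrix (O i) (O i) R) (s : Finset ι) :
    Matrix (∀ i, O i) (∀ i, O i) R :=
  piKronecker fun i => if i ∈ s then 1 - (d i * h i + h i * d i) else 1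

theorem sum_koszulAt_mul_retractOn {d h : ∀ i, Matrix (O i) (O i) R}
    (hεd : ∀ i, ε i * d i = -(d i * ε i)) (hεh : ∀ i, ε i * h i = -(h i * ε i))
    (hd : ∀ i, d i * d i = 0) (s : Finset ι) :
    (∑ j, koszulAt ε j (d j)) * retractOn d h s = retractOn d h s * ∑ j, koszulAt ε j (d j) := by
  have d_comm (i) : d i * (1 - (d i * h i + h i * d i)) =
      (1 - (d i * h i + h i * d i)) * d i := by
    simp only [mul_sub, sub_mul, mul_add, add_mul, mul_one, one_mul, ← mul_assoc, hd i, zero_mul]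
    simp [mul_assoc, hd i]
  have ε_comm (i) : ε i * (1 - (d i * h i + h i * d i)) =
      (1 - (d i * h i + h i * d i)) * ε i := by
    simp only [mul_sub, sub_mul, mul_add, add_mul, mul_one, one_mul, ← mul_assoc, hεd i, hεh i]
    simp [mul_assoc, hεd i, hεh i]
  exact sum_koszulAt_mul_piKronecker (fun i => by by_cases i ∈ s <;> simp [*])
    (fun i => by by_cases i ∈ s <;> simp [*])

theorem retractOn_insert (d h : ∀ i, Matrix (O i) (O i) R) {s : Finset ι} {j : ι} (hj : j ∉ s) :
    retractOn d h (insert j s) = localAt j (1 - (d j * h j + h j * d j)) * retractOn d h s := by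
  rw [retractOn, retractOn, localAt_mul_piKronecker]
  congr 1
  funext i
  rcases eq_or_ne i j with rfl | hi <;> simp [*]

theorem exists_mulVec_sum_koszulAt_eq_sub_retractOn (hε : ∀ i, ε i * ε i = 1)
    {d h : ∀ i, Matrix (O i) (O i) R} (hεd : ∀ i, ε i * d i = -(d i * ε i))
    (hεh : ∀ i, ε i * h i = -(h i * ε i)) (hd : ∀ i, d i * d i = 0) (s : Finset ι)
    {z : (∀ i, O i) → R} (hz : (∑ j, koszulAt ε j (d j)) *ᵥ z = 0) :
    ∃ w, (∑ j, koszulAt ε j (d j)) *ᵥ w = z - retractOn d h s *ᵥ z := by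
  set D := ∑ j, koszulAt ε j (d j)
  induction s using Finset.induction_on with
  | empty => exact ⟨0, by simp [retractOn, piKronecker_one]⟩
  | insert j s hj ih =>
    obtain ⟨w, hw⟩ := ih
    set H := koszulAt ε j (h j)
    have homotopy : D * H + H * D + localAt j (1 - (d j * h j + h j * d j)) = 1 := by
      rw [sum_koszulAt_anticommutator hε hεd (hεh j), ← localAt_add, add_sub_cancel, localAt_one]
    have cycle : D *ᵥ retractOn d h s *ᵥ z = 0 := by
      rw [mulVec_mulVec, sum_koszulAt_mul_retractOn hεd hεh hd, ← mulVec_mulVec, hz, mulVec_zero]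
    refine ⟨w + H *ᵥ retractOn d h s *ᵥ z, ?_⟩
    rw [retractOn_insert d h hj, ← mulVec_mulVec, eq_sub_of_add_eq' homotopy, sub_mulVec,
      add_mulVec, one_mulVec, ← mulVec_mulVec _ H D, cycle, mulVec_zero, add_zero, mulVec_add, hw,
      mulVec_mulVec]
    abel

end Koszul

section LocalDiagonal

variable {ι R : Type*} [Fintype ι] [DecidableEq ι] [CommRing R] {O : ι → Type*}
  [∀ i, DecidableEq (O i)]

theorem localAt_diagonal (j : ι) (c : O j → R) :
    localAt j (diagonal c) = diagonal fun f => c (f j) := by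
  ext f g
  rw [localAt, piKronecker_apply]
  rcases eq_or_ne f g with rfl | hfg
  · rw [diagonal_apply_eq, prod_eq_single j (fun i _ hi => by simp [hi]) (by simp),
      Function.update_self, diagonal_apply_eq]
  · obtain ⟨i, hi⟩ := Function.ne_iff.1 hfg
    rw [diagonal_apply_ne _ hfg]
    refine prod_eq_zero (mem_univ i) ?_
    rcases eq_or_ne i j with rfl | hij <;> simp [*]

theorem sum_localAt_diagonal (c : ∀ i, O i → R) :
    ∑ j, localAt j (diagonal (c j)) = diagonal fun f => ∑ j, c j (f j) := by
  ext f g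
  rw [Matrix.sum_apply]
  rcases eq_or_ne f g with rfl | hfg
  · simp [localAt_diagonal]
  · simp [localAt_diagonal, hfg]

theorem sum_localAt_mul_piKronecker [∀ i, Fintype (O i)] {X Y A : ∀ i, Matrix (O i) (O i) R}
    (h : ∀ i, X i * A i = A i * Y i) :
    (∑ j, localAt j (X j)) * piKronecker A = piKronecker A * ∑ j, localAt j (Y j) := by
  rw [sum_mul, mul_sum]
  exact sum_congr rfl fun j _ => by rw [localAt_mul_piKronecker, piKronecker_mul_localAt, h]

end LocalDiagonal

section DiscreteSet

variable {α : Type*} [DecidableEq α]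

/-- The grading involution on the augmented chain complex of the discrete set `α`. That complex has
basis `Option α`, with `none` standing for the empty face and `some v` for the vertex `v`. -/
def grading (α : Type*) [DecidableEq α] : Matrix (Option α) (Option α) ℤ :=
  diagonal fun x => if x = none then 1 else -1

/-- The augmentation `some v ↦ none`, which is the boundary map of the augmented chain complex of
the discrete set `α`. -/
def augmentation (α : Type*) [DecidableEq α] : Matrix (Option α) (Option α) ℤ :=
  of fun x y => if x = none ∧ y ≠ none then 1 else 0

/-- The cone operator `none ↦ some a`, a homotopy on the augmented chain complex of `α` from the
identity to the projection `some v ↦ some v - some a`. -/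
def coneAt (a : α) : Matrix (Option α) (Option α) ℤ :=
  of fun x y => if x = some a ∧ y = none then 1 else 0

theorem grading_transpose : (grading α)ᵀ = grading α :=
  diagonal_transpose _

variable [Fintype α]

theorem grading_mul_self : grading α * grading α = 1 := by
  rw [grading, diagonal_mul_diagonal, ← diagonal_one]
  congr 1
  funext x
  cases x <;> simp

theorem grading_mul_augmentation :
    grading α * augmentation α = -(augmentation α * grading α) := by
  ext x y
  rw [grading, neg_apply, diagonal_mul, mul_diagonal]
  cases x <;> cases y <;> simp [augmentation]

theorem grading_mul_augmentation_transpose :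
    grading α * (augmentation α)ᵀ = -((augmentation α)ᵀ * grading α) := by
  ext x y
  rw [grading, neg_apply, diagonal_mul, mul_diagonal]
  cases x <;> cases y <;> simp [augmentation]

theorem grading_mul_coneAt (a : α) : grading α * coneAt a = -(coneAt a * grading α) := by
  ext x y
  rw [grading, neg_apply, diagonal_mul, mul_diagonal]
  cases x <;> cases y <;> simp [coneAt, apply_ite]

theorem augmentation_mul_self : augmentation α * augmentation α = 0 := by
  ext x y
  rw [mul_apply, Fintype.sum_option]
  cases x <;> cases y <;> simp [augmentation]

theorem one_sub_homotopy_apply_none (a : α) (x : Option α) :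
    (1 - (augmentation α * coneAt a + coneAt a * augmentation α)) x none = 0 := by
  rw [Matrix.sub_apply, Matrix.add_apply, mul_apply, mul_apply, Fintype.sum_option,
    Fintype.sum_option]
  cases x <;> simp [augmentation, coneAt]

/-- The Laplacian of the augmented chain complex of the discrete set `α`. -/
def discreteLaplacian (α : Type*) [DecidableEq α] [Fintype α] : Matrix (Option α) (Option α) ℤ :=
  augmentation α * (augmentation α)ᵀ + (augmentation α)ᵀ * augmentation α

/-- The matrix whose columns are eigenvectors of `discreteLaplacian α`: the empty face in column
`none`, the sum of all vertices in column `some a`, and `w - a` in column `some w` for `w ≠ a`. -/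
def eigenvectors (a : α) : Matrix (Option α) (Option α) ℤ
  | none, none => 1
  | none, some _ => 0
  | some _, none => 0
  | some v, some w => if w = a then 1 else (if v = w then 1 else 0) - if v = a then 1 else 0

/-- The inverse of `eigenvectors a`, scaled by the number of vertices to be integral. -/
def scaledInverse (a : α) : Matrix (Option α) (Option α) ℤ
  | none, none => Fintype.card α
  | none, some _ => 0
  | some _, none => 0
  | some w, some v => if w = a then 1 else (if w = v then (Fintype.card α : ℤ) else 0) - 1

/-- The eigenvalue of `discreteLaplacian α` on each column of `eigenvectors a`. -/
def eigenvalue (a : α) (x : Option α) : ℕ :=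
  if x = none ∨ x = some a then Fintype.card α else 0

theorem scaledInverse_mul_eigenvectors (a : α) :
    scaledInverse a * eigenvectors a = (Fintype.card α : ℤ) • 1 := by
  ext x y
  rw [mul_apply, Fintype.sum_option]
  rcases x with _ | w <;> rcases y with _ | v
  any_goals simp [scaledInverse, eigenvectors]
  by_cases hw : w = a <;> by_cases hv : v = a
  · simp [hw, hv, one_apply]
  · simp [hw, hv, Ne.symm hv]
  · simp [hw, hv]
  · simp [hw, hv, mul_sub, one_apply, eq_comm]

theorem discreteLaplacian_mul_eigenvectors (a : α) :
    discreteLaplacian α * eigenvectors a =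
      eigenvectors a * diagonal fun x => (eigenvalue a x : ℤ) := by
  have laplacian_apply (x y : Option α) : discreteLaplacian α x y =
      if x = none then if y = none then (Fintype.card α : ℤ) else 0
      else if y = none then 0 else 1 := by
    rw [discreteLaplacian, Matrix.add_apply, mul_apply, mul_apply, Fintype.sum_option,
      Fintype.sum_option]
    cases x <;> cases y <;> simp [augmentation]
  ext x y
  rw [mul_diagonal, mul_apply, Fintype.sum_option]
  simp only [laplacian_apply]
  rcases x with _ | v <;> rcases y with _ | w
  any_goals simp [eigenvectors, eigenvalue]
  by_cases hw : w = a <;> simp [hw]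

end DiscreteSet

section Join

variable {ι : Type*} [Fintype ι]

/-- A partial choice of elements `V i`, which is the same as a (possibly empty) face of the join of
the discrete sets `V i`. -/
abbrev PartialChoice (V : ι → Type*) :=
  ∀ i, Option (V i)

variable {V : ι → Type*}

/-- The set of indices at which a partial choice is defined. -/
def colors [∀ i, DecidableEq (V i)] (f : PartialChoice V) : Finset ι :=
  {i | f i ≠ none}

variable [∀ i, DecidableEq (V i)]

theorem mem_colors {f : PartialChoice V} {i : ι} : i ∈ colors f ↔ f i ≠ none := by
  simp [colors]

theorem colors_eq_of_piKronecker_ne_zero {R : Type*} [CommRing R]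
    {A : ∀ i, Matrix (Option (V i)) (Option (V i)) R} (hA₀ : ∀ i v, A i none (some v) = 0)
    (hA₁ : ∀ i v, A i (some v) none = 0) {f g : PartialChoice V} (h : piKronecker A f g ≠ 0) :
    colors f = colors g := by
  ext i
  have factor_ne_zero : A i (f i) (g i) ≠ 0 := fun h₀ => h (prod_eq_zero (mem_univ i) h₀)
  simp only [mem_colors]
  rcases hf : f i <;> rcases hg : g i <;> simp_all

variable [LinearOrder ι]

/-- The boundary matrix of the join of the discrete sets `V i`, in all degrees at once. -/
def joinBoundary (V : ι → Type*) [∀ i, DecidableEq (V i)] :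
    Matrix (PartialChoice V) (PartialChoice V) ℤ :=
  ∑ j, koszulAt (fun i => grading (V i)) j (augmentation (V j))

theorem koszulAt_augmentation_apply (j : ι) (f g : PartialChoice V) :
    koszulAt (fun i => grading (V i)) j (augmentation (V j)) f g =
      if g j ≠ none ∧ f = Function.update g j none then (-1) ^ #{i ∈ colors g | i < j} else 0 := by
  rw [koszulAt, piKronecker_apply]
  split_ifs with h
  · obtain ⟨hj, rfl⟩ := h
    rw [colors, filter_filter, ← prod_const, prod_filter]
    refine prod_congr rfl fun i _ => ?_
    rcases lt_trichotomy i j with h | rfl | h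
    · by_cases hi : g i = none <;> simp [h, h.ne, grading, hi]
    · simp [augmentation, hj]
    · simp [h.not_gt, h.ne']
  · obtain hj | ⟨i, hij, hi⟩ : ¬(f j = none ∧ g j ≠ none) ∨ ∃ i ≠ j, f i ≠ g i := by
      contrapose! h
      exact ⟨h.1.2, Function.eq_update_iff.2 ⟨h.1.1, h.2⟩⟩
    · exact prod_eq_zero (mem_univ j) (by simpa [augmentation] using hj)
    · refine prod_eq_zero (mem_univ i) ?_
      by_cases h' : i < j <;> simp [hij, h', hi, grading]

theorem card_colors_of_joinBoundary_ne_zero {f g : PartialChoice V} (h : joinBoundary V f g ≠ 0) :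
    #(colors g) = #(colors f) + 1 := by
  rw [joinBoundary, Matrix.sum_apply] at h
  obtain ⟨j, -, hj⟩ := exists_ne_zero_of_sum_ne_zero h
  rw [koszulAt_augmentation_apply] at hj
  obtain ⟨hgj, rfl⟩ := (ite_ne_right_iff.1 hj).1
  rw [← card_insert_of_notMem (a := j) (by simp [mem_colors])]
  congr 1
  ext i
  rcases eq_or_ne i j with rfl | hi <;> simp [mem_colors, *]

variable [∀ i, Fintype (V i)]

theorem joinBoundary_mul_self : joinBoundary V * joinBoundary V = 0 :=
  sum_koszulAt_mul_self (fun _ => grading_mul_self) (fun _ => grading_mul_augmentation)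
    fun _ => augmentation_mul_self

/-- The Laplacian of the join of the discrete sets `V i`, in all degrees at once. -/
def joinLaplacian (V : ι → Type*) [∀ i, DecidableEq (V i)] [∀ i, Fintype (V i)] :
    Matrix (PartialChoice V) (PartialChoice V) ℤ :=
  joinBoundary V * (joinBoundary V)ᵀ + (joinBoundary V)ᵀ * joinBoundary V

theorem joinLaplacian_eq_sum_localAt :
    joinLaplacian V = ∑ j, localAt j (discreteLaplacian (V j)) := by
  have transpose_eq : (joinBoundary V)ᵀ =
      ∑ j, koszulAt (fun i => grading (V i)) j (augmentation (V j))ᵀ := by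
    rw [joinBoundary, transpose_sum]
    exact sum_congr rfl fun j _ => koszulAt_transpose (fun _ => grading_transpose) j _
  rw [joinLaplacian, transpose_eq, mul_sum, sum_mul, ← sum_add_distrib]
  exact sum_congr rfl fun j _ => sum_koszulAt_anticommutator (fun _ => grading_mul_self)
    (fun _ => grading_mul_augmentation) grading_mul_augmentation_transpose

theorem exists_joinBoundary_mulVec_eq (a : ∀ i, V i) {z : PartialChoice V → ℤ}
    (hz : joinBoundary V *ᵥ z = 0) (hz_top : ∀ g, colors g = univ → z g = 0) :
    ∃ w, joinBoundary V *ᵥ w = z := by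
  obtain ⟨w, hw⟩ := exists_mulVec_sum_koszulAt_eq_sub_retractOn (fun _ => grading_mul_self)
    (fun _ => grading_mul_augmentation) (fun i => grading_mul_coneAt (a i))
    (fun _ => augmentation_mul_self) univ hz
  have retract_apply (f) {g : PartialChoice V} (hg : colors g ≠ univ) :
      retractOn (fun i => augmentation (V i)) (fun i => coneAt (a i)) univ f g = 0 := by
    obtain ⟨i, hi⟩ : ∃ i, g i = none := by simpa [eq_univ_iff_forall, mem_colors] using hg
    refine prod_eq_zero (mem_univ i) ?_
    simp only [mem_univ, if_true, hi, one_sub_homotopy_apply_none]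
  refine ⟨w, hw.trans (sub_eq_self.2 (funext fun f => sum_eq_zero fun g _ => ?_))⟩
  by_cases hg : colors g = univ
  · exact mul_eq_zero_of_right _ (hz_top g hg)
  · exact mul_eq_zero_of_left (retract_apply f hg) _

theorem joinLaplacian_mul_eigenvectors (a : ∀ i, V i) :
    joinLaplacian V * piKronecker (fun i => eigenvectors (a i)) =
      piKronecker (fun i => eigenvectors (a i)) *
        diagonal fun f => ∑ j, (eigenvalue (a j) (f j) : ℤ) := by
  rw [joinLaplacian_eq_sum_localAt,
    sum_localAt_mul_piKronecker fun i => discreteLaplacian_mul_eigenvectors (a i),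
    sum_localAt_diagonal]

end Join

section Submatrix

variable {R l l' m m' n n' : Type*} [NonUnitalNonAssocSemiring R] [Fintype m] [Fintype m']

theorem submatrix_mulVec_comp_of_support (A : Matrix n m R) (x : m → R) {u : n' → n} {v : m' → m}
    (hv : Function.Injective v) (h : ∀ i j, A (u i) j ≠ 0 → x j ≠ 0 → j ∈ Set.range v) :
    A.submatrix u v *ᵥ (x ∘ v) = (A *ᵥ x) ∘ u := by
  funext i
  refine Fintype.sum_of_injective v hv _ _ (fun j hj => ?_) fun _ => rfl
  by_contra hne
  exact hj (h i j (left_ne_zero_of_mul hne) (right_ne_zero_of_mul hne))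

theorem submatrix_mul_submatrix_of_support (A : Matrix n m R) (B : Matrix m l R) {u : n' → n}
    {v : m' → m} {w : l' → l} (hv : Function.Injective v)
    (h : ∀ i j k, A (u i) j ≠ 0 → B j (w k) ≠ 0 → j ∈ Set.range v) :
    A.submatrix u v * B.submatrix v w = (A * B).submatrix u w := by
  ext i k
  exact congrFun (submatrix_mulVec_comp_of_support A (fun j => B j (w k)) hv
    fun i j => h i j k) i

end Submatrix

section Faces

variable {r : ℕ} {n : Fin r → ℕ} {c : ℕ}

open Classical in
/-- The partial choice of vertices, one for each color, that a face amounts to. -/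
noncomputable def toChoice (σ : Face n c) : PartialChoice fun j => Fin (n j) :=
  fun j => if h : ∃ t, (⟨j, t⟩ : Vtx n) ∈ σ.1 then some h.choose else none

theorem toChoice_eq_some_iff (σ : Face n c) (v : Vtx n) :
    toChoice σ v.1 = some v.2 ↔ v ∈ σ.1 := by
  obtain ⟨j, t⟩ := v
  unfold toChoice
  split_ifs with h
  · rw [Option.some_inj]
    refine ⟨fun ht => ?_, fun hv => ?_⟩
    · rw [← show h.choose = t from ht]
      exact h.choose_spec
    · simpa using σ.2.2 _ h.choose_spec _ hv rfl
  · simpa using fun hv => h ⟨t, hv⟩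

theorem mem_colors_toChoice (σ : Face n c) (j : Fin r) :
    j ∈ colors (toChoice σ) ↔ ∃ t, (⟨j, t⟩ : Vtx n) ∈ σ.1 := by
  simp only [mem_colors, Option.ne_none_iff_exists', ← toChoice_eq_some_iff]

theorem injOn_fst_face (σ : Face n c) : Set.InjOn Sigma.fst (σ.1 : Set (Vtx n)) :=
  fun v hv w hw h => σ.2.2 v hv w hw h

theorem card_colors_toChoice (σ : Face n c) : #(colors (toChoice σ)) = c := by
  have image_fst : σ.1.image Sigma.fst = colors (toChoice σ) := by
    ext j
    simp [mem_colors_toChoice]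
  rw [← image_fst, card_image_of_injOn (injOn_fst_face σ), σ.2.1]

theorem toChoice_eq_iff (σ : Face n c) (f : PartialChoice fun j => Fin (n j)) :
    toChoice σ = f ↔ ∀ v : Vtx n, v ∈ σ.1 ↔ f v.1 = some v.2 := by
  simp only [← toChoice_eq_some_iff σ]
  exact ⟨fun h v => by rw [h], fun h => funext fun j => Option.ext fun t => h ⟨j, t⟩⟩

theorem toChoice_injective : Function.Injective (toChoice : Face n c → _) := fun σ τ h =>
  Subtype.ext <| Finset.ext fun v => by rw [← toChoice_eq_some_iff, ← toChoice_eq_some_iff, h]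

theorem range_toChoice :
    Set.range (toChoice : Face n c → _) = {f | #(colors f) = c} := by
  ext f
  refine ⟨?_, fun hf => ?_⟩
  · rintro ⟨σ, rfl⟩
    exact card_colors_toChoice σ
  let s : Finset (Vtx n) := {v | f v.1 = some v.2}
  have mem_s (v : Vtx n) : v ∈ s ↔ f v.1 = some v.2 := by simp [s]
  have injOn_fst : ∀ v ∈ s, ∀ w ∈ s, v.1 = w.1 → v = w := by
    rintro ⟨j, t⟩ hv ⟨_, t'⟩ hw rfl
    rw [mem_s] at hv hw
    exact congrArg (Sigma.mk j) (Option.some_inj.1 (hv.symm.trans hw))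
  have image_fst : s.image Sigma.fst = colors f := by
    ext j
    simp [mem_s, mem_colors, Option.ne_none_iff_exists']
  have card_s : #s = c := by
    rw [← hf, ← image_fst, card_image_of_injOn fun v hv w hw h => injOn_fst v hv w hw h]
  exact ⟨⟨s, card_s, injOn_fst⟩, (toChoice_eq_iff _ f).2 mem_s⟩

theorem ord_lt_of_fst_lt {v w : Vtx n} (h : v.1 < w.1) : ord n v < ord n w := by
  have sum_le : ∑ i with i < v.1, n i + n v.1 ≤ ∑ i with i < w.1, n i := by
    rw [add_comm, ← sum_insert (by simp)]
    refine sum_le_sum_of_subset fun i hi => ?_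
    rcases mem_insert.1 hi with rfl | hi
    · simpa using h
    · exact mem_filter.2 ⟨mem_univ i, (mem_filter.1 hi).2.trans h⟩
  have := v.2.2
  unfold ord
  omega

theorem ord_lt_iff_fst_lt (τ : Face n c) {v w : Vtx n} (hv : v ∈ τ.1) (hw : w ∈ τ.1) :
    ord n v < ord n w ↔ v.1 < w.1 := by
  refine ⟨fun h => ?_, ord_lt_of_fst_lt⟩
  rcases lt_trichotomy v.1 w.1 with hlt | heq | hgt
  · exact hlt
  · exact absurd h (injOn_fst_face τ hv hw heq ▸ lt_irrefl _)
  · exact absurd h (ord_lt_of_fst_lt hgt).not_gt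

theorem card_filter_ord_lt (τ : Face n c) {x : Vtx n} (hx : x ∈ τ.1) :
    #{y ∈ τ.1 | ord n y < ord n x} = #{i ∈ colors (toChoice τ) | i < x.1} := by
  rw [← card_image_of_injOn ((injOn_fst_face τ).mono (filter_subset _ _))]
  congr 1
  ext j
  simp only [mem_image, mem_filter, mem_colors_toChoice]
  constructor
  · rintro ⟨y, ⟨hy, hlt⟩, rfl⟩
    exact ⟨⟨y.2, hy⟩, (ord_lt_iff_fst_lt τ hy hx).1 hlt⟩
  · rintro ⟨⟨t, ht⟩, hlt⟩
    exact ⟨⟨j, t⟩, ⟨ht, (ord_lt_iff_fst_lt τ ht hx).2 hlt⟩, rfl⟩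

theorem mem_erase_iff_update_toChoice (τ : Face n c) {x : Vtx n} (hx : x ∈ τ.1) (v : Vtx n) :
    v ∈ τ.1.erase x ↔ Function.update (toChoice τ) x.1 none v.1 = some v.2 := by
  obtain ⟨j, t⟩ := v
  obtain ⟨j', t'⟩ := x
  rcases eq_or_ne j j' with rfl | hj
  · simpa using fun hne hv => hne (by simpa using injOn_fst_face τ hv hx rfl)
  · have hne : (⟨j, t⟩ : Vtx n) ≠ ⟨j', t'⟩ := fun h => hj (congrArg Sigma.fst h)
    rw [Function.update_of_ne hj, toChoice_eq_some_iff τ ⟨j, t⟩, mem_erase, and_iff_right hne]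

theorem eq_erase_iff_toChoice_eq {c' : ℕ} (σ : Face n c') (τ : Face n c) {x : Vtx n}
    (hx : x ∈ τ.1) : σ.1 = τ.1.erase x ↔ toChoice σ = Function.update (toChoice τ) x.1 none := by
  rw [toChoice_eq_iff, Finset.ext_iff]
  simp only [mem_erase_iff_update_toChoice τ hx]

theorem bdry_eq_submatrix_joinBoundary (n : Fin r → ℕ) (k : ℕ) :
    bdry n k = (joinBoundary fun j => Fin (n j)).submatrix toChoice toChoice := by
  ext σ τ
  set term := fun j => koszulAt (fun i => grading (Fin (n i))) j (augmentation (Fin (n j)))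
    (toChoice σ) (toChoice τ)
  calc bdry n k σ τ = ∑ x ∈ τ.1, term x.1 := by
        refine sum_congr rfl fun x hx => ?_
        have some_x : toChoice τ x.1 ≠ none := by
          rw [(toChoice_eq_some_iff τ x).2 hx]
          exact Option.some_ne_none _
        simp only [term, koszulAt_augmentation_apply, card_filter_ord_lt τ hx,
          eq_erase_iff_toChoice_eq σ τ hx, some_x, ne_eq, not_false_eq_true, true_and]
    _ = ∑ j ∈ τ.1.image Sigma.fst, term j := (sum_image (injOn_fst_face τ)).symm
    _ = ∑ j, term j := by
        refine sum_subset (subset_univ _) fun j _ hj => ?_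
        have none_j : ¬ j ∈ colors (toChoice τ) := by simpa [mem_colors_toChoice] using hj
        exact (koszulAt_augmentation_apply _ _ _).trans (if_neg fun h => none_j (mem_colors.2 h.1))
    _ = joinBoundary _ (toChoice σ) (toChoice τ) := by
        rw [joinBoundary, Matrix.sum_apply]

theorem mem_range_toChoice_of_joinBoundary_left_ne_zero {σ : Face n c}
    {f : PartialChoice fun j => Fin (n j)} (h : joinBoundary _ (toChoice σ) f ≠ 0) :
    f ∈ Set.range (toChoice : Face n (c + 1) → _) := by
  rw [range_toChoice]
  exact (card_colors_of_joinBoundary_ne_zero h).trans (by rw [card_colors_toChoice])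

theorem mem_range_toChoice_of_joinBoundary_right_ne_zero {τ : Face n (c + 1)}
    {f : PartialChoice fun j => Fin (n j)} (h : joinBoundary _ f (toChoice τ) ≠ 0) :
    f ∈ Set.range (toChoice : Face n c → _) := by
  have card_eq := card_colors_of_joinBoundary_ne_zero h
  rw [card_colors_toChoice] at card_eq
  rw [range_toChoice]
  exact (Nat.succ_injective card_eq).symm

theorem bdry_mul_bdry (n : Fin r → ℕ) (k : ℕ) : bdry n k * bdry n (k + 1) = 0 := by
  rw [bdry_eq_submatrix_joinBoundary, bdry_eq_submatrix_joinBoundary,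
    submatrix_mul_submatrix_of_support _ _ toChoice_injective
      fun _ _ _ h _ => mem_range_toChoice_of_joinBoundary_left_ne_zero h,
    joinBoundary_mul_self]
  rfl

/-- The diagonal block of a matrix on partial choices that corresponds to the faces with `c`
vertices. -/
noncomputable def faceBlock (c : ℕ)
    (A : Matrix (PartialChoice fun j => Fin (n j)) (PartialChoice fun j => Fin (n j)) ℤ) :
    Matrix (Face n c) (Face n c) ℤ :=
  A.submatrix toChoice toChoice

theorem bdry_mul_transpose (n : Fin r → ℕ) (k : ℕ) :
    bdry n k * (bdry n k)ᵀ = faceBlock k (joinBoundary _ * (joinBoundary _)ᵀ) := by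
  rw [bdry_eq_submatrix_joinBoundary, transpose_submatrix]
  exact submatrix_mul_submatrix_of_support _ _ toChoice_injective
    fun _ _ _ h _ => mem_range_toChoice_of_joinBoundary_left_ne_zero h

theorem transpose_mul_bdry (n : Fin r → ℕ) (k : ℕ) :
    (bdry n k)ᵀ * bdry n k = faceBlock (k + 1) ((joinBoundary _)ᵀ * joinBoundary _) := by
  rw [bdry_eq_submatrix_joinBoundary, transpose_submatrix]
  exact submatrix_mul_submatrix_of_support _ _ toChoice_injective
    fun _ _ _ h _ => mem_range_toChoice_of_joinBoundary_right_ne_zero h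

theorem joinBoundary_apply_toChoice_zero (f : PartialChoice fun j => Fin (n j)) (σ : Face n 0) :
    joinBoundary _ f (toChoice σ) = 0 := by
  by_contra h
  have card_eq := card_colors_of_joinBoundary_ne_zero h
  rw [card_colors_toChoice] at card_eq
  exact absurd card_eq (Nat.succ_ne_zero _).symm

theorem bdry_zero_laplacian (n : Fin r → ℕ) :
    bdry n 0 * (bdry n 0)ᵀ = faceBlock 0 (joinLaplacian _) := by
  rw [bdry_mul_transpose, joinLaplacian]
  ext σ τ
  simp [faceBlock, mul_apply, joinBoundary_apply_toChoice_zero]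

theorem bdry_succ_laplacian (n : Fin r → ℕ) (k : ℕ) :
    bdry n (k + 1) * (bdry n (k + 1))ᵀ + (bdry n k)ᵀ * bdry n k =
      faceBlock (k + 1) (joinLaplacian _) := by
  rw [bdry_mul_transpose, transpose_mul_bdry]
  rfl

end Faces

section Exactness

variable {r : ℕ} {n : Fin r → ℕ} {c : ℕ}

theorem exists_bdry_mulVec_eq_of_extend (hn : ∀ j, 1 ≤ n j) (hc : c < r) {z : Face n c → ℤ}
    (hz : joinBoundary _ *ᵥ Function.extend toChoice z 0 = 0) : ∃ w, bdry n c *ᵥ w = z := by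
  have extend_top (g : PartialChoice fun j => Fin (n j)) (hg : colors g = univ) :
      Function.extend toChoice z 0 g = 0 := by
    refine Function.extend_apply' _ _ _ ?_
    rintro ⟨σ, rfl⟩
    have card_eq := card_colors_toChoice σ
    rw [hg, card_univ, Fintype.card_fin] at card_eq
    exact hc.ne' card_eq
  obtain ⟨w, hw⟩ := exists_joinBoundary_mulVec_eq (fun j => ⟨0, hn j⟩) hz extend_top
  refine ⟨w ∘ toChoice, ?_⟩
  rw [bdry_eq_submatrix_joinBoundary, submatrix_mulVec_comp_of_support _ _ toChoice_injective
    fun _ _ h _ => mem_range_toChoice_of_joinBoundary_left_ne_zero h, hw]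
  exact Function.extend_comp toChoice_injective z 0

theorem joinBoundary_mulVec_extend (z : Face n c → ℤ) (f : PartialChoice fun j => Fin (n j)) :
    (joinBoundary _ *ᵥ Function.extend toChoice z 0) f =
      ∑ σ, joinBoundary _ f (toChoice σ) * z σ := by
  refine (Fintype.sum_of_injective toChoice toChoice_injective _ _ (fun g hg => ?_)
    fun σ => ?_).symm
  · rw [Function.extend_apply' _ _ _ hg, Pi.zero_apply, mul_zero]
  · rw [toChoice_injective.extend_apply]

theorem bdry_zero_mulVec_surjective (hn : ∀ j, 1 ≤ n j) (hr : 0 < r) :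
    Function.Surjective (bdry n 0).mulVec := fun z =>
  exists_bdry_mulVec_eq_of_extend hn hr <| funext fun f => by
    simp [joinBoundary_mulVec_extend, joinBoundary_apply_toChoice_zero]

theorem exact_bdry (hn : ∀ j, 1 ≤ n j) (hc : c + 1 < r) :
    Function.Exact (bdry n (c + 1)).mulVec (bdry n c).mulVec := by
  refine fun z => ⟨fun hz => exists_bdry_mulVec_eq_of_extend hn hc (funext fun f => ?_), ?_⟩
  · rw [joinBoundary_mulVec_extend]
    by_cases hf : f ∈ Set.range (toChoice : Face n c → _)
    · obtain ⟨σ, rfl⟩ := hf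
      rw [bdry_eq_submatrix_joinBoundary] at hz
      exact congrFun hz σ
    · refine sum_eq_zero fun σ _ => ?_
      by_contra h
      exact hf (mem_range_toChoice_of_joinBoundary_right_ne_zero (left_ne_zero_of_mul h))
  · rintro ⟨w, rfl⟩
    rw [mulVec_mulVec, bdry_mul_bdry, zero_mulVec]

end Exactness

section LaplacianDeterminant

variable {r : ℕ} {n : Fin r → ℕ} {c : ℕ}

theorem faceBlock_mul_piKronecker (A : Matrix _ _ ℤ)
    {B : ∀ j, Matrix (Option (Fin (n j))) (Option (Fin (n j))) ℤ}
    (hB₀ : ∀ j v, B j none (some v) = 0) (hB₁ : ∀ j v, B j (some v) none = 0) :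
    faceBlock c (A * piKronecker B) = faceBlock c A * faceBlock c (piKronecker B) := by
  refine (submatrix_mul_submatrix_of_support _ _ toChoice_injective fun _ f τ _ h => ?_).symm
  rw [range_toChoice]
  exact (congrArg card (colors_eq_of_piKronecker_ne_zero hB₀ hB₁ h)).trans (card_colors_toChoice τ)

theorem faceBlock_mul_eigenvectors (a : ∀ j, Fin (n j)) (A : Matrix _ _ ℤ) :
    faceBlock c (A * piKronecker fun j => eigenvectors (a j)) =
      faceBlock c A * faceBlock c (piKronecker fun j => eigenvectors (a j)) :=
  faceBlock_mul_piKronecker A (fun _ _ => rfl) fun _ _ => rfl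

theorem det_faceBlock_eigenvectors_ne_zero (a : ∀ j, Fin (n j)) (c : ℕ) :
    det (faceBlock c (piKronecker fun j => eigenvectors (a j))) ≠ 0 := by
  set Q := piKronecker fun j => eigenvectors (a j)
  set R := piKronecker fun j => scaledInverse (a j)
  have R_mul_Q : R * Q = (∏ j, (n j : ℤ)) • 1 := by
    rw [← piKronecker_smul_one, piKronecker_mul]
    simp only [scaledInverse_mul_eigenvectors, Fintype.card_fin]
  have block_mul_block : faceBlock c R * faceBlock c Q = (∏ j, (n j : ℤ)) • 1 := by
    rw [← faceBlock_mul_eigenvectors, R_mul_Q, ← submatrix_one toChoice toChoice_injective]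
    rfl
  refine right_ne_zero_of_mul (a := det (faceBlock c R)) ?_
  rw [← det_mul, block_mul_block, det_smul, det_one, mul_one]
  exact pow_ne_zero _ (prod_ne_zero_iff.2 fun j _ => Nat.cast_ne_zero.2 (a j).pos.ne')

theorem det_faceBlock_joinLaplacian (a : ∀ j, Fin (n j)) (c : ℕ) :
    det (faceBlock c (joinLaplacian fun j => Fin (n j))) =
      ∏ σ : Face n c, ∑ j, (eigenvalue (a j) (toChoice σ j) : ℤ) := by
  set Q := piKronecker fun j => eigenvectors (a j)
  have diagonalize : faceBlock c (joinLaplacian _) * faceBlock c Q =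
      faceBlock c Q * diagonal fun σ => ∑ j, (eigenvalue (a j) (toChoice σ j) : ℤ) := by
    rw [← faceBlock_mul_eigenvectors, joinLaplacian_mul_eigenvectors]
    ext σ τ
    rw [faceBlock, submatrix_apply, mul_diagonal, mul_diagonal]
    rfl
  refine mul_right_cancel₀ (det_faceBlock_eigenvectors_ne_zero a c) ?_
  rw [← det_mul, diagonalize, det_mul, det_diagonal, mul_comm]

end LaplacianDeterminant

section AdinProduct

variable {ι : Type*} [Fintype ι] [DecidableEq ι] {n : ι → ℕ} {c : ℕ}

/-- The right-hand side of Adin's formula in dimension `c`, with the parameter `r - 2` of the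
binomial coefficients replaced by `m`. The truncation of `m - #D` is harmless for `c ≤ m + 1`: it
occurs only for `#D = c`, where the binomial coefficient is `1` by convention. -/
def adinProduct (n : ι → ℕ) (m c : ℕ) : ℕ :=
  ∏ D : Finset ι with #D ≤ c,
    (∑ i ∈ Dᶜ, n i) ^ ((m - #D).choose (c - #D) * ∏ i ∈ D, (n i - 1))

theorem adinProduct_zero (n : ι → ℕ) (m : ℕ) : adinProduct n m 0 = ∑ i, n i := by
  simp [adinProduct, filter_eq']

theorem adinProduct_pos (hn : ∀ i, 1 ≤ n i) (m : ℕ) (hc : c < Fintype.card ι) :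
    0 < adinProduct n m c := by
  refine prod_pos fun D hD => pow_pos (sum_pos (fun i _ => hn i) ?_) _
  rw [← card_pos, card_compl]
  exact Nat.sub_pos_of_lt ((mem_filter.1 hD).2.trans_lt hc)

theorem adinProduct_succ_succ (n : ι → ℕ) {m : ℕ} (hc : c ≤ m) :
    adinProduct n (m + 1) (c + 1) = adinProduct n m (c + 1) * adinProduct n m c := by
  simp only [adinProduct, prod_filter]
  rw [← prod_mul_distrib]
  refine prod_congr rfl fun D _ => ?_
  rcases lt_trichotomy #D (c + 1) with h | h | h
  · have hD : #D ≤ c := Nat.lt_succ_iff.1 h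
    rw [if_pos h.le, if_pos h.le, if_pos hD, ← pow_add, ← add_mul, Nat.succ_sub hD,
      Nat.succ_sub (hD.trans hc), Nat.choose_succ_succ', add_comm]
  · simp [h]
  · rw [if_neg h.not_ge, if_neg h.not_ge, if_neg ((Nat.lt_succ_self c).trans h).not_ge, one_mul]

end AdinProduct

section CountingChoices

variable {ι : Type*} [Fintype ι] {V : ι → Type*} [∀ i, DecidableEq (V i)]

/-- The colors at which a partial choice takes the base point. -/
def basePart (a : ∀ i, V i) (f : PartialChoice V) : Finset ι :=
  {i | f i = some (a i)}

/-- The colors at which a partial choice takes a value different from the base point. -/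
def freePart (a : ∀ i, V i) (f : PartialChoice V) : Finset ι :=
  {i | f i ≠ none ∧ f i ≠ some (a i)}

theorem disjoint_freePart_basePart (a : ∀ i, V i) (f : PartialChoice V) :
    Disjoint (freePart a f) (basePart a f) :=
  disjoint_filter.2 fun _ _ h => h.2

theorem freePart_union_basePart [DecidableEq ι] (a : ∀ i, V i) (f : PartialChoice V) :
    freePart a f ∪ basePart a f = colors f := by
  ext i
  cases hi : f i <;> simp [freePart, basePart, mem_colors, hi, em']

theorem card_colors_eq_add (a : ∀ i, V i) (f : PartialChoice V) :
    #(colors f) = #(freePart a f) + #(basePart a f) := by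
  classical
  rw [← freePart_union_basePart a, card_union_of_disjoint (disjoint_freePart_basePart a f)]

variable [DecidableEq ι] [∀ i, Fintype (V i)]

theorem sum_eigenvalue (a : ∀ i, V i) (f : PartialChoice V) :
    ∑ j, eigenvalue (a j) (f j) = ∑ j ∈ (freePart a f)ᶜ, Fintype.card (V j) := by
  have compl_eq : (freePart a f)ᶜ = ({j | f j = none ∨ f j = some (a j)} : Finset ι) := by
    ext j
    simp only [freePart, mem_compl, mem_filter, mem_univ, true_and]
    tauto
  rw [compl_eq, sum_filter]
  rfl

theorem card_filter_freePart_basePart (a : ∀ i, V i) {D E : Finset ι} (h : Disjoint D E) :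
    #{f : PartialChoice V | freePart a f = D ∧ basePart a f = E} =
      ∏ i ∈ D, (Fintype.card (V i) - 1) := by
  let allowed (i : ι) : Finset (Option (V i)) :=
    {x | (x ≠ none ∧ x ≠ some (a i) ↔ i ∈ D) ∧ (x = some (a i) ↔ i ∈ E)}
  have eq_piFinset : ({f : PartialChoice V | freePart a f = D ∧ basePart a f = E} : Finset _) =
      Fintype.piFinset allowed := by
    ext f
    simp [allowed, freePart, basePart, Finset.ext_iff, forall_and]
  have card_allowed (i : ι) : #(allowed i) = if i ∈ D then Fintype.card (V i) - 1 else 1 := by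
    by_cases hD : i ∈ D
    · have hE : i ∉ E := disjoint_left.1 h hD
      have : allowed i = (univ.erase none).erase (some (a i)) := by
        ext x
        simp [allowed, hD, hE]
        tauto
      rw [this, if_pos hD, card_erase_of_mem (by simp), card_erase_of_mem (by simp)]
      simp
    · have : allowed i = {if i ∈ E then some (a i) else none} := by
        ext x
        by_cases hE : i ∈ E <;> cases x <;> simp [allowed, hD, hE]
      rw [this, if_neg hD, card_singleton]
  rw [eq_piFinset, Fintype.card_piFinset, prod_congr rfl fun i _ => card_allowed i,
    prod_ite_mem, univ_inter]

theorem card_filter_colors_freePart (a : ∀ i, V i) {c : ℕ} {D : Finset ι} (hD : #D ≤ c) :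
    #{f : PartialChoice V | #(colors f) = c ∧ freePart a f = D} =
      (Fintype.card ι - #D).choose (c - #D) * ∏ i ∈ D, (Fintype.card (V i) - 1) := by
  rw [card_eq_sum_card_fiberwise (f := basePart a) (t := powersetCard (c - #D) Dᶜ)]
  · rw [← card_compl, ← card_powersetCard, ← smul_eq_mul, ← sum_const]
    refine sum_congr rfl fun E hE => ?_
    obtain ⟨hED, hcard⟩ := mem_powersetCard.1 hE
    rw [← card_filter_freePart_basePart a (subset_compl_iff_disjoint_left.1 hED), filter_filter]
    congr 1
    refine filter_congr fun f _ => ⟨fun h => ⟨h.1.2, h.2⟩, fun h => ⟨⟨?_, h.1⟩, h.2⟩⟩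
    rw [card_colors_eq_add a, h.1, h.2, hcard, Nat.add_sub_cancel' hD]
  · intro f hf
    obtain ⟨hc, rfl⟩ := (mem_filter.1 hf).2
    refine mem_powersetCard.2
      ⟨subset_compl_iff_disjoint_left.2 (disjoint_freePart_basePart a f), ?_⟩
    rw [← hc, card_colors_eq_add a, Nat.add_sub_cancel_left]

theorem prod_sum_eigenvalue (a : ∀ i, V i) (c : ℕ) :
    ∏ f : PartialChoice V with #(colors f) = c, ∑ j, eigenvalue (a j) (f j) =
      adinProduct (fun i => Fintype.card (V i)) (Fintype.card ι) c := by
  rw [← prod_fiberwise_of_maps_to (g := freePart a) (t := {D | #D ≤ c})]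
  · refine prod_congr rfl fun D hD => ?_
    rw [← card_filter_colors_freePart a (mem_filter.1 hD).2, filter_filter]
    refine prod_eq_pow_card fun f hf => ?_
    rw [sum_eigenvalue, (mem_filter.1 hf).2.2]
  · intro f hf
    rw [mem_filter, ← (mem_filter.1 hf).2, card_colors_eq_add a]
    exact ⟨mem_univ _, Nat.le_add_right _ _⟩

end CountingChoices

section Recursion

theorem eq_of_mul_succ_eq {M : Type*} [Mul M] [Zero M] [IsRightCancelMulZero M] {f g : ℕ → M}
    {N : ℕ} (hg : ∀ c < N, g c ≠ 0) (h0 : f 0 = g 0)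
    (hsucc : ∀ c, c + 1 < N → f (c + 1) * f c = g (c + 1) * g c) {c : ℕ} (hc : c < N) :
    f c = g c := by
  induction c with
  | zero => exact h0
  | succ c ih =>
    have hc' : c < N := (Nat.lt_succ_self c).trans hc
    exact mul_right_cancel₀ (hg c hc') (ih hc' ▸ hsucc c hc)

variable {r : ℕ} {n : Fin r → ℕ}

theorem adinProduct_cast_ne_zero (hn : ∀ j, 1 ≤ n j) (m c : ℕ) (hc : c < r) :
    (adinProduct n m c : ℤ) ≠ 0 :=
  Nat.cast_ne_zero.2 (adinProduct_pos hn m (by rwa [Fintype.card_fin])).ne'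

theorem det_faceBlock_joinLaplacian_eq_adinProduct (hn : ∀ j, 1 ≤ n j) (c : ℕ) :
    det (faceBlock c (joinLaplacian fun j => Fin (n j))) = adinProduct n r c := by
  let a (j : Fin r) : Fin (n j) := ⟨0, hn j⟩
  have prod_faces : ∏ σ : Face n c, ∑ j, eigenvalue (a j) (toChoice σ j) = adinProduct n r c := by
    have prod_choices := prod_sum_eigenvalue a c
    simp only [Fintype.card_fin] at prod_choices
    have image_toChoice : univ.image (toChoice : Face n c → _) =
        ({f | #(colors f) = c} : Finset _) := by
      simpa [← coe_inj] using range_toChoice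
    rw [← prod_choices, ← image_toChoice, prod_image toChoice_injective.injOn]
  rw [det_faceBlock_joinLaplacian a, ← prod_faces]
  push_cast
  rfl

theorem coordGram_mul_imageGram_bdry (hn : ∀ j, 1 ≤ n j) {c : ℕ} (hc : c < r) :
    coordGram (bdry n c) * imageGram (bdry n c) = adinProduct n (r - 1) c := by
  refine eq_of_mul_succ_eq (f := fun c => coordGram (bdry n c) * imageGram (bdry n c))
    (g := fun c => (adinProduct n (r - 1) c : ℤ)) (adinProduct_cast_ne_zero hn _) ?_
    (fun c hc => ?_) hc
  · rw [← det_mul_transpose_of_surjective (bdry_zero_mulVec_surjective hn (Nat.zero_lt_of_lt hc)),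
      bdry_zero_laplacian, det_faceBlock_joinLaplacian_eq_adinProduct hn, adinProduct_zero,
      adinProduct_zero]
  · rw [← det_laplacian_of_exact (exact_bdry hn hc), bdry_succ_laplacian,
      det_faceBlock_joinLaplacian_eq_adinProduct hn, ← Nat.cast_mul,
      ← adinProduct_succ_succ n (by omega), Nat.sub_add_cancel (Nat.zero_lt_of_lt hc)]

theorem coordGram_bdry (hn : ∀ j, 1 ≤ n j) {c : ℕ} (hc : c < r) :
    coordGram (bdry n c) = adinProduct n (r - 2) c := by
  refine eq_of_mul_succ_eq (f := fun c => coordGram (bdry n c))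
    (g := fun c => (adinProduct n (r - 2) c : ℤ)) (adinProduct_cast_ne_zero hn _) ?_
    (fun c hc => ?_) hc
  · have hr : 0 < r := Nat.zero_lt_of_lt hc
    have h := coordGram_mul_imageGram_bdry hn hr
    rwa [imageGram_of_surjective (bdry_zero_mulVec_surjective hn hr), mul_one,
      adinProduct_zero, ← adinProduct_zero n (r - 2)] at h
  · rw [← imageGram_eq_coordGram_of_exact (exact_bdry hn hc), coordGram_mul_imageGram_bdry hn hc,
      ← Nat.cast_mul, ← adinProduct_succ_succ n (by omega)]
    congr 2
    omega

end Recursion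

section Forests

variable {r : ℕ} {n : Fin r → ℕ} {e : ℕ}

theorem isForest_iff_maxMinor_ne_zero (T : Finset (Face n (e + 2))) :
    IsForest n e T ↔ maxMinor (coordMatrix (bdry n (e + 1))) T ≠ 0 :=
  linearIndependent_cols_and_card_eq_rank_iff (bdry n (e + 1)) T

theorem torsionCount_eq_natAbs_maxMinor (hn : ∀ j, 1 ≤ n j) (he : e + 1 < r)
    {T : Finset (Face n (e + 2))} (hT : maxMinor (coordMatrix (bdry n (e + 1))) T ≠ 0) :
    torsionCount n e T = (maxMinor (coordMatrix (bdry n (e + 1))) T).natAbs := by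
  have ker_eq_range : LinearMap.ker (bdry n e).mulVecLin = (bdry n (e + 1)).mulVecLin.range :=
    SetLike.ext (exact_bdry hn he)
  rw [← card_torsion_range_quotient_eq_natAbs_maxMinor _ hT, ← ker_eq_range]
  rfl

theorem sum_torsionCount_sq (hn : ∀ j, 1 ≤ n j) (he : e + 1 < r) :
    ((∑ᶠ T ∈ {T | IsForest n e T}, torsionCount n e T ^ 2 : ℕ) : ℤ) =
      coordGram (bdry n (e + 1)) := by
  classical
  rw [coordGram, det_mul_transpose_eq_sum_maxMinor, finsum_mem_def, finsum_eq_sum_of_fintype,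
    Nat.cast_sum]
  refine sum_congr rfl fun T _ => ?_
  by_cases hT : maxMinor (coordMatrix (bdry n (e + 1))) T = 0
  · rw [Set.indicator_of_notMem (by simp [isForest_iff_maxMinor_ne_zero, hT]), hT]
    simp
  · rw [Set.indicator_of_mem (by simp [isForest_iff_maxMinor_ne_zero, hT]),
      torsionCount_eq_natAbs_maxMinor hn he hT, Nat.cast_pow, Int.natAbs_sq, sq]

end Forests

end AdinFormula

/-- **Adin's formula** for the torsion-weighted count of maximal spanning `k`-forests of
the complete colorful complex `K_{n_1,…,n_r}`, for `1 ≤ k ≤ r - 1` (here `k = e + 1`):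
`∑_T t(T)² = ∏_{D ⊆ [r], |D| ≤ k} σ_D ^ (C(r-2-|D|, k-|D|) · π_D)`. -/
theorem adin_formula (r e : ℕ) (hr : 2 ≤ r) (n : Fin r → ℕ) (hn : ∀ j, 1 ≤ n j)
    (hk : e + 1 ≤ r - 1) :
    (∑ᶠ T ∈ {T | IsForest n e T}, (torsionCount n e T) ^ 2) =
      ∏ D ∈ Finset.univ.powerset.filter (fun D : Finset (Fin r) => D.card ≤ e + 1),
        (∑ i ∈ Dᶜ, n i) ^
          (Nat.choose (r - 2 - D.card) (e + 1 - D.card) * ∏ i ∈ D, (n i - 1)) := by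
  have he : e + 1 < r := by omega
  have sum_eq_adinProduct :
      ((∑ᶠ T ∈ {T | IsForest n e T}, torsionCount n e T ^ 2 : ℕ) : ℤ) =
        AdinFormula.adinProduct n (r - 2) (e + 1) :=
    (AdinFormula.sum_torsionCount_sq hn he).trans (AdinFormula.coordGram_bdry hn he)
  rw [Finset.powerset_univ]
  exact_mod_cast sum_eq_adinProduct
end

section
/- Let r ≥ 2 and n_1,…,n_r be positive integers, let K = K_{n_1,…,n_r} be the complete colorful complex, fix 1 ≤ k ≤ r−1, and introduce indeterminates v_{j,t} for j∈[r], t∈[n_j], one for each vertex. For a maximal spanning k-forest T of K (a set T ⊆ F_k with ℚ-linearly independent columns of ∂_k and |T| = rank_ℚ(∂_k)), let t(T) be the cardinality of the torsion subgroup of ker_ℤ(∂_{k−1}) / (the subgroup generated by the columns of ∂_k indexed by T). Set p_j = ∏_{t=1}^{n_j} v_{j,t}, s_j = ∑_{t=1}^{n_j} v_{j,t}, and e_{k,j} = ∑_{D⊆[r]∖{j}, |D|≤k−1} (−1)^{k−1−|D|} ∏_{t∈D} n_t. Then, as an identity of rational functions in the v_{j,t}: ∑_T t(T)² · ∏_{σ∈T}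 ∏_{(j,t): the t-th vertex of color j lies in σ} v_{j,t} = (∏_{j=1}^r p_j^{e_{k,j}}) · ∏_{D⊆[r], |D|≤k} (∑_{j∈[r]∖D} s_j)^{C(r−2−|D|, k−|D|)·π_D}, where π_D = ∏_{i∈D}(n_i−1) and the binomial coefficient C(a,b) is taken to be 1 when b = 0 (even when a < 0) and 0 when 0 ≤ a < b. -/
open Matrix MvPolynomial

open ColorfulComplex

/-!
Two Gram determinants are attached to a factorization of `∂_k` through a basis of its image
lattice: by Cauchy–Binet, the one on the right is the enumerator `τ_k` of maximal spanning
`k`-forests weighted by `t(T)²`, and the one on the left, formed with the inverse vertex weights, is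
a number `γ_k`. As the integral homology vanishes below the top dimension, the weighted Laplacian on
`k`-element faces has determinant `τ_k γ_k τ_{k-1} γ_{k-1}`, and Jacobi's complementary minor
identity gives `τ_{k-1} = det W_k · γ_k` for the diagonal matrix `W_k` of face weights.

The complex is a join of discrete spaces, so its chain complex is a tensor product of complexes
`K^{V_j} → K` and its Laplacian a sum of commuting operators, each acting on one factor with
eigenvalues `s_j` and `0`. This gives its determinant as a product of powers of the
`∑_{j ∉ D} s_j`. Dividing out the Laplacian of one degree from the next, and then one `τ_k` from the
next, lowers the upper index of the binomial exponents from `r` to `r - 1` and to `r - 2` by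
Pascal's rule; the powers of `det W_k` collect into the `p_j ^ e_{k,j}`.
-/

namespace ColorfulComplex

section CauchyBinet

variable {m F R : Type*} [Fintype m] [DecidableEq m] [CommRing R]

theorem det_mul_transpose_submatrix_eq_sq (A : Matrix m F R) {T : Finset F} (e : m ≃ T) :
    (A.submatrix id ((↑) : T → F) * (A.submatrix id ((↑) : T → F))ᵀ).det =
      (A.submatrix id (fun i => (e i : F))).det ^ 2 := by
  have reindex : A.submatrix id ((↑) : T → F) * (A.submatrix id ((↑) : T → F))ᵀ =
      A.submatrix id (fun i => (e i : F)) * (A.submatrix id (fun i => (e i : F)))ᵀ := by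
    ext i j
    simp only [mul_apply, submatrix_apply, transpose_apply, id]
    exact (e.sum_comp fun f => A i f * A j f).symm
  rw [reindex, det_mul, det_transpose, sq]

variable [Fintype F] [DecidableEq F]

theorem det_mul_diagonal_mul_transpose_eq_sum_embedding (A : Matrix m F R) (x : F → R) :
    (A * diagonal x * Aᵀ).det =
      ∑ φ : m ↪ F, (∏ i, A i (φ i)) * (A.submatrix id φ).det * ∏ i, x (φ i) := by
  have rows : A * diagonal x * Aᵀ = fun i => ∑ f, (A i f * x f) • Aᵀ f := by
    ext i j
    simp [mul_apply, diagonal_apply, Finset.sum_apply]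
  have expand : (A * diagonal x * Aᵀ).det =
      ∑ φ : m → F, (∏ i, A i (φ i)) * (A.submatrix id φ).det * ∏ i, x (φ i) := by
    rw [rows]
    change detRowAlternating.toMultilinearMap _ = _
    rw [MultilinearMap.map_sum]
    refine Finset.sum_congr rfl fun φ _ => ?_
    rw [MultilinearMap.map_smul_univ, smul_eq_mul, Finset.prod_mul_distrib,
      mul_right_comm, ← det_transpose (A.submatrix id φ)]
    rfl
  rw [expand]
  refine (Fintype.sum_of_injective (fun φ : m ↪ F => (φ : m → F))
    DFunLike.coe_injective _ _ (fun φ hφ => ?_) fun _ => rfl).symm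
  have not_inj : ¬ Function.Injective φ := fun h => hφ ⟨⟨φ, h⟩, rfl⟩
  obtain ⟨a, b, hab, hne⟩ := Function.not_injective_iff.mp not_inj
  rw [det_zero_of_column_eq hne (fun k => by simp [hab]), mul_zero, zero_mul]

theorem det_mul_transpose_submatrix_eq_sum_embedding (A : Matrix m F R) {T : Finset F}
    (hT : T.card = Fintype.card m) :
    (A.submatrix id ((↑) : T → F) * (A.submatrix id ((↑) : T → F))ᵀ).det =
      ∑ φ : m ↪ F with Finset.univ.map φ = T, (∏ i, A i (φ i)) * (A.submatrix id φ).det := by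
  have := det_mul_diagonal_mul_transpose_eq_sum_embedding (A.submatrix id ((↑) : T → F)) 1
  simp only [diagonal_one', Matrix.mul_one, Pi.one_apply, Finset.prod_const_one, mul_one] at this
  rw [this]
  refine Finset.sum_bij (fun ψ _ => ψ.trans (Function.Embedding.subtype _)) ?_ ?_ ?_ ?_
  · intro ψ _
    refine Finset.mem_filter.mpr ⟨Finset.mem_univ _, Finset.eq_of_subset_of_card_le ?_ ?_⟩
    · exact Finset.map_subset_iff_subset_preimage.mpr fun i _ => by simp
    · rw [Finset.card_map, hT, Finset.card_univ]
  · exact fun ψ _ ψ' _ h => by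
      ext i
      exact DFunLike.congr_fun h i
  · intro φ hφ
    have mem : ∀ i, φ i ∈ T := fun i => by
      rw [← (Finset.mem_filter.mp hφ).2]
      exact Finset.mem_map_of_mem φ (Finset.mem_univ i)
    exact ⟨φ.codRestrict (↑T) mem, Finset.mem_univ _, by ext; rfl⟩
  · exact fun ψ _ => rfl

theorem cauchy_binet (A : Matrix m F R) (x : F → R) :
    (A * diagonal x * Aᵀ).det = ∑ T ∈ Finset.univ.powersetCard (Fintype.card m),
      (A.submatrix id ((↑) : T → F) * (A.submatrix id ((↑) : T → F))ᵀ).det * ∏ f ∈ T, x f := by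
  have image_mem : ∀ φ ∈ (Finset.univ : Finset (m ↪ F)),
      Finset.univ.map φ ∈ Finset.univ.powersetCard (Fintype.card m) := fun φ _ =>
    Finset.mem_powersetCard.mpr ⟨Finset.subset_univ _, by rw [Finset.card_map, Finset.card_univ]⟩
  rw [det_mul_diagonal_mul_transpose_eq_sum_embedding,
    ← Finset.sum_fiberwise_of_maps_to image_mem]
  refine Finset.sum_congr rfl fun T hT => ?_
  rw [det_mul_transpose_submatrix_eq_sum_embedding A (Finset.mem_powersetCard.mp hT).2,
    Finset.sum_mul]
  refine Finset.sum_congr rfl fun φ hφ => ?_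
  rw [← (Finset.mem_filter.mp hφ).2, Finset.prod_map]

end CauchyBinet

section RankFactorization

/-- A factorization `D = left * right` of an integer matrix through a free abelian group of rank
`rank`, in which `right` is split onto by `sec` and `left` is injective. Equivalently, the columns
of `left` are a basis of the lattice spanned by the columns of `D`. -/
structure RankFactorization {F G : Type*} [Fintype G] (D : Matrix F G ℤ) where
  rank : ℕ
  left : Matrix F (Fin rank) ℤ
  right : Matrix (Fin rank) G ℤ
  sec : Matrix G (Fin rank) ℤ
  left_mul_right : left * right = D
  right_mul_sec : right * sec = 1
  left_injective : Function.Injective left.mulVec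

namespace RankFactorization

variable {F G H K : Type*} [Fintype G]

theorem nonempty [Finite F] (D : Matrix F G ℤ) : Nonempty (RankFactorization D) := by
  classical
  let columns := LinearMap.range D.mulVecLin
  let basis := Module.finBasis ℤ columns
  let toCoords : (G → ℤ) →ₗ[ℤ] _ := basis.equivFun.toLinearMap ∘ₗ D.mulVecLin.rangeRestrict
  let ofCoords : _ →ₗ[ℤ] (F → ℤ) := columns.subtype ∘ₗ basis.equivFun.symm.toLinearMap
  have toCoords_surjective : Function.Surjective toCoords :=
    basis.equivFun.surjective.comp D.mulVecLin.surjective_rangeRestrict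
  obtain ⟨lift, toCoords_lift⟩ :=
    Module.projective_lifting_property toCoords LinearMap.id toCoords_surjective
  refine ⟨⟨_, LinearMap.toMatrix' ofCoords, LinearMap.toMatrix' toCoords,
    LinearMap.toMatrix' lift, ?_, ?_, ?_⟩⟩
  · have factor : ofCoords ∘ₗ toCoords = toLin' D :=
      LinearMap.ext fun v => congrArg Subtype.val (basis.equivFun.symm_apply_apply _)
    rw [← LinearMap.toMatrix'_comp, factor, LinearMap.toMatrix'_toLin']
  · rw [← LinearMap.toMatrix'_comp, toCoords_lift, LinearMap.toMatrix'_id]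
  · have mulVec_eq : (LinearMap.toMatrix' ofCoords).mulVec = ofCoords :=
      funext fun v => LinearMap.toMatrix'_mulVec ofCoords v
    rw [mulVec_eq]
    exact columns.injective_subtype.comp basis.equivFun.symm.injective

variable {D : Matrix F G ℤ} (φ : RankFactorization D)

theorem eq_of_left_mul_eq {A B : Matrix (Fin φ.rank) H ℤ} (h : φ.left * A = φ.left * B) :
    A = B := by
  ext i j
  refine congrFun (φ.left_injective (?_ : φ.left *ᵥ A.col j = φ.left *ᵥ B.col j)) i
  ext f
  exact congrFun (congrFun h f) j

theorem mul_sec : D * φ.sec = φ.left := by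
  calc D * φ.sec = φ.left * φ.right * φ.sec := by rw [φ.left_mul_right]
    _ = φ.left := by rw [Matrix.mul_assoc, φ.right_mul_sec, Matrix.mul_one]

variable (K) in
theorem left_map_mul_right_map [Ring K] :
    φ.left.map (Int.castRingHom K) * φ.right.map (Int.castRingHom K) =
      D.map (Int.castRingHom K) := by
  rw [← Matrix.map_mul, φ.left_mul_right]

variable (K) in
theorem right_map_mul_sec_map [Ring K] :
    φ.right.map (Int.castRingHom K) * φ.sec.map (Int.castRingHom K) = 1 := by
  rw [← Matrix.map_mul, φ.right_mul_sec, Matrix.map_one _ (map_zero _) (map_one _)]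

theorem left_map_rat_injective : Function.Injective (φ.left.map (Int.castRingHom ℚ)).mulVec := by
  have columns_int : LinearIndependent ℤ φ.left.col := mulVec_injective_iff.mp φ.left_injective
  rw [mulVec_injective_iff, ← LinearIndependent.iff_fractionRing ℤ ℚ]
  let castMap : (F → ℤ) →ₗ[ℤ] (F → ℚ) := (Algebra.linearMap ℤ ℚ).compLeft F
  have cast_injective : Function.Injective castMap := fun v w h =>
    funext fun f => Int.cast_injective (congrFun h f)
  exact columns_int.map' castMap (LinearMap.ker_eq_bot.mpr cast_injective)

theorem rank_map_rat [Finite F] : (D.map (Int.castRingHom ℚ)).rank = φ.rank := by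
  have := Fintype.ofFinite F
  have left_rank : (φ.left.map (Int.castRingHom ℚ)).rank = φ.rank := by
    have := LinearIndependent.rank_matrix (M := (φ.left.map (Int.castRingHom ℚ))ᵀ)
      (mulVec_injective_iff.mp φ.left_map_rat_injective)
    rwa [rank_transpose, Fintype.card_fin] at this
  refine le_antisymm ?_ ?_
  · rw [← φ.left_map_mul_right_map ℚ]
    exact (rank_mul_le_left _ _).trans left_rank.le
  · calc φ.rank = (D.map (Int.castRingHom ℚ) * φ.sec.map (Int.castRingHom ℚ)).rank := by
          rw [← φ.left_map_mul_right_map ℚ, Matrix.mul_assoc, φ.right_map_mul_sec_map ℚ,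
            Matrix.mul_one, left_rank]
      _ ≤ (D.map (Int.castRingHom ℚ)).rank := rank_mul_le_left _ _

end RankFactorization
end RankFactorization

section Determinants

variable {F p q R : Type*} [Fintype F] [DecidableEq F] [Fintype p] [DecidableEq p]
  [Fintype q] [DecidableEq q] [CommRing R]

theorem det_toBlocks₂₂_of_mul_eq_one {A B : Matrix (p ⊕ q) (p ⊕ q) R} (h : A * B = 1) :
    A.toBlocks₂₂.det = A.det * B.toBlocks₁₁.det := by
  rw [← A.fromBlocks_toBlocks, ← B.fromBlocks_toBlocks, fromBlocks_multiply, ← fromBlocks_one,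
    fromBlocks_inj] at h
  have triangular : A * fromBlocks B.toBlocks₁₁ 0 B.toBlocks₂₁ 1 =
      fromBlocks 1 A.toBlocks₁₂ 0 A.toBlocks₂₂ := by
    conv_lhs => rw [← A.fromBlocks_toBlocks, fromBlocks_multiply]
    simp only [h.1, h.2.2.1, Matrix.mul_zero, Matrix.mul_one, zero_add]
  have := congrArg det triangular
  rwa [det_mul, det_fromBlocks_zero₁₂, det_fromBlocks_zero₂₁, det_one, det_one, mul_one, one_mul,
    eq_comm] at this

theorem det_unimodular_congruence {V : Matrix p F ℤ} {W : Matrix F p ℤ} (hVW : V * W = 1)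
    (hWV : W * V = 1) (X : Matrix F F R) :
    (V.map (Int.castRingHom R) * X * (V.map (Int.castRingHom R))ᵀ).det = X.det := by
  let e : F ≃ p := Fintype.equivOfCardEq (square_of_invertible _ _ hWV hVW)
  let V' : Matrix F F ℤ := V.submatrix e id
  have hV' : V' * W.submatrix id e = 1 := by
    rw [← submatrix_mul _ _ _ id _ Function.bijective_id, hVW, submatrix_one_equiv]
  have sq_det : (V'.map (Int.castRingHom R)).det * (V'.map (Int.castRingHom R)).det = 1 := by
    have unit_det : IsUnit V'.det := .of_mul_eq_one (W.submatrix id e).det (by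
      rw [← det_mul, hV', det_one])
    rw [← RingHom.mapMatrix_apply, ← RingHom.map_det, ← map_mul, Int.isUnit_mul_self unit_det,
      map_one]
  calc (V.map (Int.castRingHom R) * X * (V.map (Int.castRingHom R))ᵀ).det
      = (V'.map (Int.castRingHom R) * X * (V'.map (Int.castRingHom R))ᵀ).det :=
        (det_submatrix_equiv_self e _).symm
    _ = X.det := by
        rw [det_mul, det_mul, det_transpose, mul_right_comm, sq_det, one_mul]

theorem det_mul_add_mul_of_fromRows_mul_fromCols {c : Matrix p F R} {m : Matrix q F R}
    {b : Matrix F p R} {s : Matrix F q R} (hVW : fromRows c m * fromCols b s = 1)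
    (hWV : fromCols b s * fromRows c m = 1) (P : Matrix p F R) (Q : Matrix F q R) :
    (b * P + Q * m).det = (P * b).det * (m * Q).det := by
  have blocks := hVW
  rw [fromRows_mul_fromCols, ← fromBlocks_one, fromBlocks_inj] at blocks
  obtain ⟨hcb, -, hmb, hms⟩ := blocks
  have triangular : fromRows c m * (b * P + Q * m) * fromCols b s =
      fromBlocks (P * b) (P * s + c * Q) 0 (m * Q) := by
    rw [fromRows_mul, fromRows_mul_fromCols]
    simp only [Matrix.mul_add, Matrix.add_mul, ← Matrix.mul_assoc, hcb, hmb, Matrix.one_mul,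
      Matrix.zero_mul]
    simp only [Matrix.mul_assoc, hmb, hms, Matrix.mul_zero, Matrix.mul_one, add_zero, zero_add]
  rw [← det_conj_of_mul_eq_one hVW hWV, triangular, det_fromBlocks_zero₂₁]

end Determinants

section ExactPair

namespace RankFactorization

variable {F G H K : Type*} [Fintype G] [Fintype H] [CommRing K]
  {D : Matrix F G ℤ} {D' : Matrix G H ℤ}

/-- The Gram determinant, with respect to the form `X`, of the rows of `φ.right`, a basis of the
saturated row lattice of `D`. -/
def gramRight (φ : RankFactorization D) (X : Matrix G G K) : K :=
  (φ.right.map (Int.castRingHom K) * X * (φ.right.map (Int.castRingHom K))ᵀ).det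

/-- The Gram determinant, with respect to the form `Y`, of the columns of `φ.left`, a basis of the
column lattice of `D`. -/
def gramLeft [Fintype F] (φ : RankFactorization D) (Y : Matrix F F K) : K :=
  ((φ.left.map (Int.castRingHom K))ᵀ * Y * φ.left.map (Int.castRingHom K)).det

theorem right_mul_left_eq_zero (φ : RankFactorization D) (φ' : RankFactorization D')
    (hexact : Function.Exact D'.mulVec D.mulVec) : φ.right * φ'.left = 0 := by
  classical
  apply φ.eq_of_left_mul_eq
  rw [← Matrix.mul_assoc, φ.left_mul_right, ← φ'.mul_sec, ← Matrix.mul_assoc, Matrix.mul_zero]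
  have mul_eq_zero : D * D' = 0 := by
    ext f h
    have := congrFun (hexact.apply_apply_eq_zero (Pi.single h 1)) f
    rwa [mulVec_mulVec, mulVec_single_one] at this
  rw [mul_eq_zero, Matrix.zero_mul]

variable [DecidableEq G]

theorem exists_splitting (φ : RankFactorization D) (φ' : RankFactorization D')
    (hexact : Function.Exact D'.mulVec D.mulVec) :
    ∃ C : Matrix (Fin φ'.rank) G ℤ,
      fromRows C φ.right * fromCols φ'.left φ.sec = 1 ∧
        fromCols φ'.left φ.sec * fromRows C φ.right = 1 := by
  have cycle : D * (1 - φ.sec * φ.right) = 0 := by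
    rw [Matrix.mul_sub, Matrix.mul_one, ← Matrix.mul_assoc, φ.mul_sec, φ.left_mul_right, sub_self]
  have lift (g : G) : ∃ c : Fin φ'.rank → ℤ, φ'.left *ᵥ c = (1 - φ.sec * φ.right).col g := by
    have col_cycle : D *ᵥ (1 - φ.sec * φ.right).col g = 0 :=
      funext fun f => congrFun (congrFun cycle f) g
    obtain ⟨w, hw⟩ := (hexact _).mp col_cycle
    exact ⟨φ'.right *ᵥ w, by rw [mulVec_mulVec, φ'.left_mul_right, hw]⟩
  choose c left_mulVec_c using lift
  have left_mul : φ'.left * (of c)ᵀ = 1 - φ.sec * φ.right := by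
    ext a g
    exact congrFun (left_mulVec_c g) a
  have right_mul_left := right_mul_left_eq_zero φ φ' hexact
  refine ⟨(of c)ᵀ, ?_, ?_⟩
  · rw [fromRows_mul_fromCols, right_mul_left, φ.right_mul_sec, ← fromBlocks_one]
    congr 1 <;> apply φ'.eq_of_left_mul_eq <;>
      rw [← Matrix.mul_assoc, left_mul, Matrix.sub_mul, Matrix.mul_assoc φ.sec]
    · rw [right_mul_left, Matrix.mul_zero, Matrix.one_mul, Matrix.mul_one, sub_zero]
    · rw [φ.right_mul_sec, Matrix.mul_one, Matrix.one_mul, sub_self, Matrix.mul_zero]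
  · rw [fromCols_mul_fromRows, left_mul, sub_add_cancel]

theorem gramRight_eq_det_mul_gramLeft (φ : RankFactorization D) (φ' : RankFactorization D')
    (hexact : Function.Exact D'.mulVec D.mulVec) {X Y : Matrix G G K} (hYX : Y * X = 1) :
    φ.gramRight X = X.det * φ'.gramLeft Y := by
  obtain ⟨C, hVW, hWV⟩ := exists_splitting φ φ' hexact
  set V := (fromRows C φ.right).map (Int.castRingHom K)
  set W := (fromCols φ'.left φ.sec).map (Int.castRingHom K)
  have hVW' : V * W = 1 := by
    rw [← Matrix.map_mul, hVW, Matrix.map_one _ (map_zero _) (map_one _)]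
  have hWV' : Vᵀ * Wᵀ = 1 := by
    rw [← transpose_mul, ← Matrix.map_mul, hWV, Matrix.map_one _ (map_zero _) (map_one _),
      transpose_one]
  have inverse : V * X * Vᵀ * (Wᵀ * Y * W) = 1 := by
    calc V * X * Vᵀ * (Wᵀ * Y * W) = V * (X * (Vᵀ * Wᵀ) * Y) * W := by
          simp only [Matrix.mul_assoc]
      _ = 1 := by rw [hWV', Matrix.mul_one, mul_eq_one_comm.mp hYX, Matrix.mul_one, hVW']
  have jacobi := det_toBlocks₂₂_of_mul_eq_one inverse
  rw [det_unimodular_congruence hVW hWV] at jacobi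
  exact jacobi

theorem det_laplacian [Fintype F] (φ : RankFactorization D) (φ' : RankFactorization D')
    (hexact : Function.Exact D'.mulVec D.mulVec) (X Y : Matrix G G K) (Z : Matrix H H K)
    (U : Matrix F F K) :
    (D'.map (Int.castRingHom K) * Z * (D'.map (Int.castRingHom K))ᵀ * Y +
        X * (D.map (Int.castRingHom K))ᵀ * U * D.map (Int.castRingHom K)).det =
      φ'.gramRight Z * φ'.gramLeft Y * (φ.gramRight X * φ.gramLeft U) := by
  obtain ⟨C, hVW, hWV⟩ := exists_splitting φ φ' hexact
  have split := congrArg (fun A => A.map (Int.castRingHom K)) hVW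
  have split' := congrArg (fun A => A.map (Int.castRingHom K)) hWV
  simp only [Matrix.map_mul, fromRows_map, fromCols_map,
    Matrix.map_one _ (map_zero (Int.castRingHom K)) (map_one _)] at split split'
  rw [← φ.left_map_mul_right_map K, ← φ'.left_map_mul_right_map K]
  simp only [gramRight, gramLeft, ← det_mul]
  simp only [transpose_mul, Matrix.mul_assoc]
  have := det_mul_add_mul_of_fromRows_mul_fromCols split split'
    (φ'.right.map (Int.castRingHom K) * Z * (φ'.right.map (Int.castRingHom K))ᵀ *
      (φ'.left.map (Int.castRingHom K))ᵀ * Y)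
    (X * (φ.right.map (Int.castRingHom K))ᵀ * (φ.left.map (Int.castRingHom K))ᵀ * U *
      φ.left.map (Int.castRingHom K))
  simpa only [Matrix.mul_assoc, det_mul] using this

end RankFactorization
end ExactPair

section ZeroMatrix

variable {F G K : Type*} [Fintype G] [CommRing K]

namespace RankFactorization

theorem isEmpty_fin_rank_of_zero [Finite F] (φ : RankFactorization (0 : Matrix F G ℤ)) :
    IsEmpty (Fin φ.rank) := by
  have hrank : φ.rank = 0 := by
    rw [← φ.rank_map_rat, Matrix.map_zero _ (map_zero _), rank_zero]
  exact hrank ▸ Fin.isEmpty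

theorem gramRight_of_zero [Finite F] (φ : RankFactorization (0 : Matrix F G ℤ))
    (X : Matrix G G K) : φ.gramRight X = 1 :=
  have := φ.isEmpty_fin_rank_of_zero
  det_isEmpty

theorem gramLeft_of_zero [Fintype F] (φ : RankFactorization (0 : Matrix F G ℤ))
    (Y : Matrix F F K) : φ.gramLeft Y = 1 :=
  have := φ.isEmpty_fin_rank_of_zero
  det_isEmpty

end RankFactorization
end ZeroMatrix

section MatrixTree

/-- The columns of the integer matrix `D` indexed by `T` are a `ℚ`-basis of its column space. For
`D = bdry n (e + 1)` this is the notion `IsForest`. -/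
def IsColumnBasis {G H : Type*} [Fintype H] (D : Matrix G H ℤ) (T : Finset H) : Prop :=
  LinearIndependent ℚ (fun τ : T => fun σ => ((D σ τ.1 : ℤ) : ℚ)) ∧
    T.card = (D.map (Int.cast : ℤ → ℚ)).rank

/-- The number of torsion elements of the quotient of `ker D` by the lattice spanned by the columns
of `D'` indexed by `T`. For two consecutive boundary matrices this is `torsionCount`. -/
noncomputable def torsionIndex {F G H : Type*} [Fintype G] (D : Matrix F G ℤ) (D' : Matrix G H ℤ)
    (T : Finset H) : ℕ :=
  Nat.card (Submodule.torsion ℤ (LinearMap.ker D.mulVecLin ⧸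
    Submodule.comap (LinearMap.ker D.mulVecLin).subtype
      (Submodule.span ℤ ((fun τ => D'ᵀ τ) '' ↑T))))

theorem card_torsion_of_finite (A : Type*) [AddCommGroup A] [Finite A] :
    Nat.card (Submodule.torsion ℤ A) = Nat.card A := by
  have torsion_eq_top : Submodule.torsion ℤ A = ⊤ := by
    refine eq_top_iff.mpr fun a _ => (Submodule.mem_torsion_iff a).mpr ?_
    have card_ne_zero : (Nat.card A : ℤ) ≠ 0 := by exact_mod_cast Nat.card_pos.ne'
    refine ⟨⟨Nat.card A, mem_nonZeroDivisors_of_ne_zero card_ne_zero⟩, ?_⟩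
    rw [Submonoid.mk_smul, Nat.cast_smul_eq_nsmul, card_nsmul_eq_zero']
  rw [torsion_eq_top]
  exact Nat.card_congr (Submodule.topEquiv (R := ℤ) (M := A)).toEquiv

theorem card_quotient_range_mulVecLin {m : Type*} [Fintype m] [DecidableEq m] {S : Matrix m m ℤ}
    (hS : S.det ≠ 0) :
    Nat.card ((m → ℤ) ⧸ LinearMap.range S.mulVecLin) = S.det.natAbs := by
  have injective : Function.Injective S.mulVecLin :=
    LinearMap.ker_eq_bot.mp <| LinearMap.ker_eq_bot'.mpr fun _ => eq_zero_of_mulVec_eq_zero hS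
  rw [← LinearMap.det_toLin' S]
  exact (Submodule.natAbs_det_equiv _ (LinearEquiv.ofInjective _ injective)).symm

namespace RankFactorization

variable {F G H K : Type*} [Fintype H] {D' : Matrix G H ℤ} {T : Finset H}

theorem span_columns_eq_map_left (φ : RankFactorization D') (e : Fin φ.rank ≃ T) :
    Submodule.span ℤ ((fun τ => D'ᵀ τ) '' (↑T : Set H)) =
      (LinearMap.range (φ.right.submatrix id (fun i => (e i : H))).mulVecLin).map
        φ.left.mulVecLin := by
  have columns : φ.left * φ.right.submatrix id (fun i => (e i : H)) =
      D'.submatrix id (fun i => (e i : H)) := by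
    ext σ i
    exact congrFun (congrFun φ.left_mul_right σ) (e i)
  rw [← LinearMap.range_comp, ← mulVecLin_mul, columns, range_mulVecLin]
  congr 1
  ext v
  constructor
  · rintro ⟨τ, hτ, rfl⟩
    exact ⟨e.symm ⟨τ, hτ⟩, by ext σ; simp [Matrix.col]⟩
  · rintro ⟨i, rfl⟩
    exact ⟨e i, (e i).2, rfl⟩

theorem isColumnBasis_iff_det_ne_zero [Finite G] (φ : RankFactorization D') (e : Fin φ.rank ≃ T) :
    IsColumnBasis D' T ↔ (φ.right.submatrix id (fun i => (e i : H))).det ≠ 0 := by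
  set S := φ.right.submatrix id (fun i => (e i : H))
  have card_eq : T.card = (D'.map (Int.cast : ℤ → ℚ)).rank := by
    rw [← Fintype.card_coe, ← Fintype.card_congr e, Fintype.card_fin]
    exact φ.rank_map_rat.symm
  have columns : ((fun τ : T => fun σ => ((D' σ τ.1 : ℤ) : ℚ)) ∘ e) =
      (φ.left.map (Int.castRingHom ℚ) * S.map (Int.castRingHom ℚ)).col := by
    funext i σ
    exact congrFun (congrFun (φ.left_map_mul_right_map ℚ).symm σ) (e i)
  have injective_iff : Function.Injective
      (φ.left.map (Int.castRingHom ℚ) * S.map (Int.castRingHom ℚ)).mulVec ↔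
        Function.Injective (S.map (Int.castRingHom ℚ)).mulVec := by
    rw [← φ.left_map_rat_injective.of_comp_iff]
    simp only [Function.comp_def, mulVec_mulVec]
  have det_map : (S.map (Int.castRingHom ℚ)).det = (S.det : ℚ) :=
    ((Int.castRingHom ℚ).map_det S).symm
  rw [IsColumnBasis, and_iff_left card_eq, ← linearIndependent_equiv e, columns,
    ← mulVec_injective_iff, injective_iff, mulVec_injective_iff_isUnit, isUnit_iff_isUnit_det,
    isUnit_iff_ne_zero, det_map, Int.cast_ne_zero]

variable [Fintype G] {D : Matrix F G ℤ}

theorem range_left (φ : RankFactorization D') (hexact : Function.Exact D'.mulVec D.mulVec) :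
    LinearMap.range φ.left.mulVecLin = LinearMap.ker D.mulVecLin := by
  have right_surjective : LinearMap.range φ.right.mulVecLin = ⊤ :=
    LinearMap.range_eq_top.mpr fun v =>
      ⟨φ.sec *ᵥ v, by rw [mulVecLin_apply, mulVec_mulVec, φ.right_mul_sec, one_mulVec]⟩
  have factor : D'.mulVecLin = φ.left.mulVecLin ∘ₗ φ.right.mulVecLin := by
    rw [← mulVecLin_mul, φ.left_mul_right]
  have exact_lin : Function.Exact D'.mulVecLin D.mulVecLin := hexact
  rw [exact_lin.linearMap_ker_eq, factor, LinearMap.range_comp_of_range_eq_top _ right_surjective]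

theorem torsionIndex_eq_natAbs_det (φ : RankFactorization D')
    (hexact : Function.Exact D'.mulVec D.mulVec) (e : Fin φ.rank ≃ T)
    (hdet : (φ.right.submatrix id (fun i => (e i : H))).det ≠ 0) :
    torsionIndex D D' T = (φ.right.submatrix id (fun i => (e i : H))).det.natAbs := by
  set S := φ.right.submatrix id (fun i => (e i : H))
  let kerEquiv : (Fin φ.rank → ℤ) ≃ₗ[ℤ] LinearMap.ker D.mulVecLin :=
    (LinearEquiv.ofInjective φ.left.mulVecLin φ.left_injective).trans
      (LinearEquiv.ofEq _ _ (φ.range_left hexact))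
  have subtype_comp : (LinearMap.ker D.mulVecLin).subtype ∘ₗ kerEquiv.toLinearMap =
      φ.left.mulVecLin := rfl
  have map_range : (LinearMap.range S.mulVecLin).map kerEquiv.toLinearMap =
      Submodule.comap (LinearMap.ker D.mulVecLin).subtype
        (Submodule.span ℤ ((fun τ => D'ᵀ τ) '' (↑T : Set H))) := by
    rw [φ.span_columns_eq_map_left e, ← subtype_comp, Submodule.map_comp,
      Submodule.comap_map_eq_of_injective (Submodule.injective_subtype _)]
  have quotient := Submodule.Quotient.equiv _ _ kerEquiv map_range
  have card_quotient := card_quotient_range_mulVecLin hdet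
  have : Finite ((Fin φ.rank → ℤ) ⧸ LinearMap.range S.mulVecLin) :=
    Nat.finite_of_card_ne_zero (card_quotient ▸ Int.natAbs_ne_zero.mpr hdet)
  have := Finite.of_equiv _ quotient.toEquiv
  rw [torsionIndex, card_torsion_of_finite, ← card_quotient, Nat.card_congr quotient.toEquiv]

open Classical in
theorem det_right_submatrix_mul_transpose [CommRing K] (φ : RankFactorization D')
    (hexact : Function.Exact D'.mulVec D.mulVec) (hT : T.card = φ.rank) :
    ((φ.right.map (Int.castRingHom K)).submatrix id ((↑) : T → H) *
        ((φ.right.map (Int.castRingHom K)).submatrix id ((↑) : T → H))ᵀ).det =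
      if IsColumnBasis D' T then ((torsionIndex D D' T ^ 2 : ℕ) : K) else 0 := by
  have e : Fin φ.rank ≃ T := Fintype.equivOfCardEq (by simp [hT])
  have det_map : ((φ.right.map (Int.castRingHom K)).submatrix id (fun i => (e i : H))).det =
      ((φ.right.submatrix id (fun i => (e i : H))).det : K) :=
    ((Int.castRingHom K).map_det (φ.right.submatrix id (fun i => (e i : H)))).symm
  rw [det_mul_transpose_submatrix_eq_sq _ e, det_map]
  split_ifs with forest <;> rw [φ.isColumnBasis_iff_det_ne_zero e] at forest
  · rw [φ.torsionIndex_eq_natAbs_det hexact e forest, ← Int.cast_natCast, Nat.cast_pow,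
      Int.natCast_natAbs, sq_abs, Int.cast_pow]
  · rw [not_not.mp forest, Int.cast_zero, sq, mul_zero]

theorem finsum_torsionIndex_sq_mul_prod [DecidableEq H] [CommRing K] (φ : RankFactorization D')
    (hexact : Function.Exact D'.mulVec D.mulVec) (x : H → K) :
    ∑ᶠ T ∈ {T | IsColumnBasis D' T}, ((torsionIndex D D' T ^ 2 : ℕ) : K) * ∏ τ ∈ T, x τ =
      φ.gramRight (diagonal x) := by
  classical
  have forests : (Set.toFinite {T | IsColumnBasis D' T}).toFinset =
      (Finset.univ.powersetCard φ.rank).filter (IsColumnBasis D') := by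
    ext T
    simp only [Set.Finite.mem_toFinset, Set.mem_ofPred_eq, Finset.mem_filter,
      Finset.mem_powersetCard_univ, iff_and_self]
    exact fun hT => hT.2.trans φ.rank_map_rat
  rw [finsum_mem_eq_finite_toFinset_sum _ (Set.toFinite _), forests, Finset.sum_filter, gramRight,
    cauchy_binet, Fintype.card_fin]
  refine Finset.sum_congr rfl fun T hT => ?_
  rw [φ.det_right_submatrix_mul_transpose hexact (Finset.mem_powersetCard_univ.mp hT), ite_mul,
    zero_mul]

end RankFactorization
end MatrixTree

section PiKronecker

variable {ι : Type*} [Fintype ι] {α : ι → Type*} {K : Type*} [CommRing K]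

/-- The tensor (Kronecker) product of a finite family of square matrices, with rows and columns
indexed by the dependent functions `∀ i, α i`. -/
def piKronecker (A : ∀ i, Matrix (α i) (α i) K) : Matrix (∀ i, α i) (∀ i, α i) K :=
  of fun f g => ∏ i, A i (f i) (g i)

theorem piKronecker_apply_eq_zero {A : ∀ i, Matrix (α i) (α i) K} {f g : ∀ i, α i} {i : ι}
    (h : A i (f i) (g i) = 0) : piKronecker A f g = 0 :=
  Finset.prod_eq_zero (Finset.mem_univ i) h

theorem piKronecker_transpose (A : ∀ i, Matrix (α i) (α i) K) :
    (piKronecker A)ᵀ = piKronecker fun i => (A i)ᵀ :=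
  rfl

theorem piKronecker_diagonal [∀ i, DecidableEq (α i)] (d : ∀ i, α i → K) :
    piKronecker (fun i => diagonal (d i)) = diagonal fun f : ∀ i, α i => ∏ i, d i (f i) := by
  ext f g
  rcases eq_or_ne f g with rfl | hfg
  · simp [piKronecker]
  · obtain ⟨i, hi⟩ := Function.ne_iff.mp hfg
    rw [diagonal_apply_ne _ hfg, piKronecker_apply_eq_zero (diagonal_apply_ne _ hi)]

theorem piKronecker_one [∀ i, DecidableEq (α i)] :
    piKronecker (1 : ∀ i, Matrix (α i) (α i) K) = 1 := by
  simpa [← Pi.one_def] using piKronecker_diagonal (K := K) fun i (_ : α i) => (1 : K)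

variable [DecidableEq ι]

theorem piKronecker_mul [∀ i, Fintype (α i)] (A B : ∀ i, Matrix (α i) (α i) K) :
    piKronecker A * piKronecker B = piKronecker fun i => A i * B i := by
  ext f g
  simp only [piKronecker, mul_apply, of_apply, ← Finset.prod_mul_distrib]
  rw [Finset.prod_univ_sum, Fintype.piFinset_univ]

theorem piKronecker_update_apply (A : ∀ i, Matrix (α i) (α i) K) (j : ι)
    (M : Matrix (α j) (α j) K) (f g : ∀ i, α i) :
    piKronecker (Function.update A j M) f g =
      M (f j) (g j) * ∏ i ∈ Finset.univ.erase j, A i (f i) (g i) := by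
  rw [piKronecker, of_apply, ← Finset.mul_prod_erase _ _ (Finset.mem_univ j)]
  congr 1
  · simp
  · exact Finset.prod_congr rfl fun i hi => by
      rw [Function.update_of_ne (Finset.ne_of_mem_erase hi)]

theorem piKronecker_update_add (A : ∀ i, Matrix (α i) (α i) K) (j : ι)
    (M N : Matrix (α j) (α j) K) :
    piKronecker (Function.update A j (M + N)) =
      piKronecker (Function.update A j M) + piKronecker (Function.update A j N) := by
  ext f g
  simp only [Matrix.add_apply, piKronecker_update_apply, add_mul]

theorem piKronecker_update_zero (A : ∀ i, Matrix (α i) (α i) K) (j : ι) :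
    piKronecker (Function.update A j 0) = 0 := by
  ext f g
  simp [piKronecker_update_apply]

theorem isUnit_piKronecker [∀ i, Fintype (α i)] [∀ i, DecidableEq (α i)]
    {P : ∀ i, Matrix (α i) (α i) K}
    (hP : ∀ i, IsUnit (P i)) : IsUnit (piKronecker P) := by
  choose Q hPQ using fun i => (hP i).exists_right_inv
  have hinverse : piKronecker P * piKronecker Q = 1 := by
    rw [piKronecker_mul, funext hPQ]
    exact piKronecker_one
  exact (isUnit_iff_isUnit_det _).mpr (isUnit_det_of_right_inverse hinverse)

end PiKronecker

section OnFactor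

variable {ι : Type*} [Fintype ι] [LinearOrder ι] {α : ι → Type*} [∀ i, DecidableEq (α i)]
  {K : Type*} [CommRing K]

/-- The matrix `A` acting on the `j`-th tensor factor, with the `i`-th factor acted on by `ε i`
for all `i < j`. For `ε = 1` this is the plain extension of `A`; the sign operators of a graded
space give the Koszul sign rule. -/
def onFactor (ε : ∀ i, Matrix (α i) (α i) K) (j : ι) (A : Matrix (α j) (α j) K) :
    Matrix (∀ i, α i) (∀ i, α i) K :=
  piKronecker (Function.update (fun i => if i < j then ε i else 1) j A)

theorem onFactor_add (ε : ∀ i, Matrix (α i) (α i) K) (j : ι) (A B : Matrix (α j) (α j) K) :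
    onFactor ε j (A + B) = onFactor ε j A + onFactor ε j B :=
  piKronecker_update_add _ j A B

theorem onFactor_zero (ε : ∀ i, Matrix (α i) (α i) K) (j : ι) : onFactor ε j 0 = 0 :=
  piKronecker_update_zero _ j

theorem onFactor_diagonal_apply (s : ∀ i, α i → K) (j : ι) (A : Matrix (α j) (α j) K)
    (f g : ∀ i, α i) :
    onFactor (fun i => diagonal (s i)) j A f g =
      if g = Function.update f j (g j) then (∏ i with i < j, s i (f i)) * A (f j) (g j)
      else 0 := by
  rw [onFactor, piKronecker_update_apply]
  split_ifs with hg
  · rw [mul_comm, Finset.prod_filter, ← Finset.mul_prod_erase _ _ (Finset.mem_univ j),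
      if_neg (lt_irrefl j), one_mul]
    congr 1
    refine Finset.prod_congr rfl fun i hi => ?_
    rw [hg, Function.update_of_ne (Finset.ne_of_mem_erase hi)]
    split_ifs <;> simp
  · obtain ⟨i, hi⟩ := Function.ne_iff.mp hg
    have hij : i ≠ j := by
      rintro rfl
      simp at hi
    rw [Function.update_of_ne hij] at hi
    refine mul_eq_zero_of_right _ (Finset.prod_eq_zero (i := i) (by simp [hij]) ?_)
    split_ifs
    · exact diagonal_apply_ne _ hi.symm
    · exact one_apply_ne hi.symm

theorem onFactor_one_diagonal (j : ι) (d : α j → K) :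
    onFactor 1 j (diagonal d) = diagonal fun f : ∀ i, α i => d (f j) := by
  ext f g
  have hone : (1 : ∀ i, Matrix (α i) (α i) K) = fun i => diagonal fun _ => 1 := by
    ext1 i
    exact diagonal_one.symm
  rw [hone, onFactor_diagonal_apply]
  rcases eq_or_ne f g with rfl | hfg
  · simp
  · rw [diagonal_apply_ne _ hfg]
    refine ite_eq_right_iff.mpr fun hg => ?_
    rw [diagonal_apply_ne, mul_zero]
    exact fun hj => hfg (by rw [hg, ← hj, Function.update_eq_self])

variable [∀ i, Fintype (α i)]

theorem onFactor_mul_onFactor (ε ε' : ∀ i, Matrix (α i) (α i) K) (j : ι)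
    (A B : Matrix (α j) (α j) K) :
    onFactor ε j A * onFactor ε' j B = onFactor (ε * ε') j (A * B) := by
  rw [onFactor, onFactor, onFactor, piKronecker_mul]
  congr 1
  ext1 i
  rcases eq_or_ne i j with rfl | hij
  · simp
  · simp only [Function.update_of_ne hij, Pi.mul_apply]
    split_ifs <;> simp

theorem onFactor_mul_add_mul_of_lt {ε : ∀ i, Matrix (α i) (α i) K} {i j : ι} (hij : i < j)
    {A : Matrix (α i) (α i) K} (hA : A * ε i + ε i * A = 0) (B : Matrix (α j) (α j) K) :
    onFactor ε i A * onFactor ε j B + onFactor ε j B * onFactor ε i A = 0 := by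
  let rest : ∀ l, Matrix (α l) (α l) K :=
    Function.update (fun l => if l < i then ε l * ε l else if l < j then ε l else 1) j B
  let left (l : ι) := Function.update (fun l => if l < i then ε l else 1) i A l
  let right (l : ι) := Function.update (fun l => if l < j then ε l else 1) j B l
  have products_eq_rest : ∀ l, l ≠ i → left l * right l = rest l ∧ right l * left l = rest l := by
    intro l hli
    rcases eq_or_ne l j with rfl | hlj
    · simp [left, right, rest, hli, hij.not_gt]
    · by_cases hlt : l < i
      · simp [left, right, rest, hli, hlj, hlt, hlt.trans hij]
      · simp [left, right, rest, hli, hlj, hlt]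
  have left_mul_right : (fun l => left l * right l) = Function.update rest i (A * ε i) :=
    Function.eq_update_iff.mpr
      ⟨by simp [left, right, hij, hij.ne], fun l hl => (products_eq_rest l hl).1⟩
  have right_mul_left : (fun l => right l * left l) = Function.update rest i (ε i * A) :=
    Function.eq_update_iff.mpr
      ⟨by simp [left, right, hij, hij.ne], fun l hl => (products_eq_rest l hl).2⟩
  calc onFactor ε i A * onFactor ε j B + onFactor ε j B * onFactor ε i A
      = piKronecker (fun l => left l * right l) + piKronecker fun l => right l * left l :=
        congrArg₂ _ (piKronecker_mul _ _) (piKronecker_mul _ _)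
    _ = 0 := by
        rw [left_mul_right, right_mul_left, ← piKronecker_update_add, hA, piKronecker_update_zero]

theorem sum_onFactor_mul_add_mul {ε A B : ∀ i, Matrix (α i) (α i) K}
    (hε : ∀ i, ε i * ε i = 1) (hA : ∀ i, A i * ε i + ε i * A i = 0)
    (hB : ∀ i, B i * ε i + ε i * B i = 0) :
    (∑ i, onFactor ε i (A i)) * (∑ i, onFactor ε i (B i)) +
        (∑ i, onFactor ε i (B i)) * (∑ i, onFactor ε i (A i)) =
      ∑ i, onFactor 1 i (A i * B i + B i * A i) := by
  have hεε : ε * ε = 1 := funext hε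
  have hne : ∀ i j, j ≠ i → onFactor ε i (A i) * onFactor ε j (B j) +
      onFactor ε j (B j) * onFactor ε i (A i) = 0 := by
    intro i j hji
    rcases hji.lt_or_gt with hlt | hgt
    · rw [add_comm, onFactor_mul_add_mul_of_lt hlt (hB j)]
    · exact onFactor_mul_add_mul_of_lt hgt (hA i) _
  simp only [Finset.sum_mul_sum]
  rw [Finset.sum_comm (s := Finset.univ) (f := fun i j => onFactor ε i (B i) * _),
    ← Finset.sum_add_distrib]
  refine Finset.sum_congr rfl fun i _ => ?_
  rw [← Finset.sum_add_distrib, Fintype.sum_eq_single i (hne i), onFactor_mul_onFactor,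
    onFactor_mul_onFactor, hεε, onFactor_add]

theorem sum_onFactor_mul_piKronecker {A P : ∀ i, Matrix (α i) (α i) K} {d : ∀ i, α i → K}
    (h : ∀ i, A i * P i = P i * diagonal (d i)) :
    (∑ j, onFactor 1 j (A j)) * piKronecker P =
      piKronecker P * diagonal fun f : ∀ i, α i => ∑ j, d j (f j) := by
  have hdiag : (diagonal fun f : ∀ i, α i => ∑ j, d j (f j)) =
      ∑ j, onFactor 1 j (diagonal (d j)) := by
    simp_rw [onFactor_one_diagonal]
    ext f g
    rcases eq_or_ne f g with rfl | hfg
    · simp [Matrix.sum_apply]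
    · simp [Matrix.sum_apply, hfg]
  rw [hdiag, Finset.sum_mul, Finset.mul_sum]
  refine Finset.sum_congr rfl fun j _ => ?_
  rw [onFactor, onFactor, piKronecker_mul, piKronecker_mul]
  congr 1
  ext1 i
  rcases eq_or_ne i j with rfl | hij
  · simp [h]
  · simp [hij]

end OnFactor

section Factor

variable {β : Type*} {K : Type*} [CommRing K]

/-- The sign operator of the augmented chain complex of the discrete space `β`, given by its
diagonal entries. The empty face is `none` and the vertices are `some t`. -/
def factorSign (K : Type*) [CommRing K] (a : Option β) : K := a.elim 1 fun _ => -1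

/-- The boundary matrix of the augmented chain complex of the discrete space `β`. -/
def factorBoundary (β K : Type*) [CommRing K] : Matrix (Option β) (Option β) K :=
  of fun a b => match a, b with
    | none, some _ => 1
    | _, _ => 0

/-- The coboundary matrix of the augmented chain complex of the discrete space `β`, with vertex
weights `x`. -/
def factorCoboundary (x : β → K) : Matrix (Option β) (Option β) K :=
  of fun a b => match a, b with
    | some t, none => x t
    | _, _ => 0

/-- The weighted Laplacian of the discrete space `β`, with vertex weights `x`. -/
def factorLaplacian [Fintype β] (x : β → K) : Matrix (Option β) (Option β) K :=
  of fun a b => match a, b with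
    | none, none => ∑ t, x t
    | some t, some _ => x t
    | _, _ => 0

variable [Fintype β]

theorem factorBoundary_mul_self : factorBoundary β K * factorBoundary β K = 0 := by
  ext a b
  cases a <;> simp [factorBoundary, mul_apply]

theorem factorBoundary_mul_coboundary_add (x : β → K) :
    factorBoundary β K * factorCoboundary x + factorCoboundary x * factorBoundary β K =
      factorLaplacian x := by
  ext a b
  cases a <;> cases b <;>
    simp [factorBoundary, factorCoboundary, factorLaplacian, mul_apply]

variable [DecidableEq β]

theorem factorSign_mul_self :
    diagonal (factorSign K (β := β)) * diagonal (factorSign K) = 1 := by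
  rw [diagonal_mul_diagonal, ← diagonal_one]
  congr 1
  ext a
  cases a <;> simp [factorSign]

theorem factorBoundary_anticomm_sign :
    factorBoundary β K * diagonal (factorSign K) + diagonal (factorSign K) * factorBoundary β K =
      0 := by
  ext a b
  cases a <;> cases b <;> simp [factorBoundary, factorSign]

theorem factorCoboundary_anticomm_sign (x : β → K) :
    factorCoboundary x * diagonal (factorSign K) + diagonal (factorSign K) * factorCoboundary x =
      0 := by
  ext a b
  cases a <;> cases b <;> simp [factorCoboundary, factorSign]

/-- The weights of the faces of the discrete space `β` with vertex weights `x`. -/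
def factorWeight (x : β → K) (a : Option β) : K := a.elim 1 x

theorem factorCoboundary_mul_weight (x : β → K) :
    factorCoboundary x * diagonal (factorWeight x) =
      diagonal (factorWeight x) * (factorBoundary β K)ᵀ := by
  ext a b
  cases a <;> cases b <;> simp [factorCoboundary, factorBoundary, factorWeight]

theorem one_sub_factorLaplacian_single_none (b : β) (a : Option β) :
    (1 - factorLaplacian (Pi.single b 1 : β → K)) a none = 0 := by
  cases a <;> simp [factorLaplacian]

/-- The eigenvalues of `factorLaplacian x`. The nonzero eigenvalue `∑ t, x t` is attached to the
empty face and to a base point `b`, the eigenvalue `0` to all other vertices. -/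
def factorEigenvalue (b : β) (x : β → K) (a : Option β) : K :=
  if a = none ∨ a = some b then ∑ t, x t else 0

/-- A matrix of eigenvectors of `factorLaplacian x`: `x` itself at the base point `b`, and the
difference of the vertices `t` and `b` at every other vertex `t`. -/
def factorEigenvectors (b : β) (x : β → K) : Matrix (Option β) (Option β) K :=
  of fun a c => match a, c with
    | none, none => 1
    | some t, some u => if u = b then x t else (1 : Matrix β β K) t u - (1 : Matrix β β K) t b
    | _, _ => 0

theorem factorLaplacian_mul_eigenvectors (b : β) (x : β → K) :
    factorLaplacian x * factorEigenvectors b x =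
      factorEigenvectors b x * diagonal (factorEigenvalue b x) := by
  ext a c
  rw [mul_apply, mul_diagonal, Fintype.sum_option]
  rcases a with _ | a <;> rcases c with _ | c
  · simp [factorLaplacian, factorEigenvectors, factorEigenvalue]
  · simp [factorLaplacian, factorEigenvectors]
  · simp [factorLaplacian, factorEigenvectors]
  · simp only [factorLaplacian, factorEigenvectors, factorEigenvalue, of_apply, zero_mul, zero_add,
      ← Finset.mul_sum]
    by_cases hc : c = b <;> simp [hc, one_apply]

theorem isUnit_factorEigenvectors {K : Type*} [Field K] (b : β) {x : β → K}
    (hx : ∑ t, x t ≠ 0) : IsUnit (factorEigenvectors b x) := by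
  let inverse : Matrix (Option β) (Option β) K := of fun a c => match a, c with
    | none, none => 1
    | some t, some u =>
      if t = b then (∑ i, x i)⁻¹ else (1 : Matrix β β K) t u - x t * (∑ i, x i)⁻¹
    | _, _ => 0
  refine (isUnit_iff_isUnit_det _).mpr (isUnit_det_of_left_inverse (B := inverse) ?_)
  ext a c
  rw [mul_apply, Fintype.sum_option]
  rcases a with _ | a <;> rcases c with _ | c
  · simp [inverse, factorEigenvectors]
  · simp [inverse, factorEigenvectors]
  · simp [inverse, factorEigenvectors]
  · simp only [inverse, factorEigenvectors, of_apply, zero_mul, zero_add, one_apply,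
      Option.some.injEq]
    by_cases ha : a = b <;> by_cases hc : c = b
    · simp [ha, hc, ← Finset.mul_sum, hx]
    · simp [ha, hc, ← Finset.mul_sum, Ne.symm hc]
    · simp [ha, hc, sub_mul, mul_assoc, ← Finset.mul_sum, hx]
    · simp [ha, hc, mul_sub]

end Factor

section Colors

variable {ι : Type*} [Fintype ι] {β : ι → Type*}

/-- The set of colors of a face `f` of the join of the discrete spaces `β i`, where `f` has the
vertices `t` with `f i = some t`. -/
def colors (f : ∀ i, Option (β i)) : Finset ι := {i | (f i).isSome}

theorem piKronecker_apply_eq_zero_of_colors_ne {K : Type*} [CommRing K]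
    {A : ∀ i, Matrix (Option (β i)) (Option (β i)) K}
    (hA : ∀ i a b, a.isSome ≠ b.isSome → A i a b = 0) {f g : ∀ i, Option (β i)}
    (hfg : colors f ≠ colors g) : piKronecker A f g = 0 := by
  have hex : ∃ i, (f i).isSome ≠ (g i).isSome := by
    by_contra! hall
    exact hfg (by simp only [colors, hall])
  obtain ⟨i, hi⟩ := hex
  exact piKronecker_apply_eq_zero (hA i _ _ hi)

end Colors

section Join

variable {ι : Type*} [Fintype ι] [LinearOrder ι] {β : ι → Type*} [∀ i, DecidableEq (β i)]
  {K : Type*} [CommRing K]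

/-- The boundary matrix of the augmented chain complex of the join of the discrete spaces `β i`,
on the span of the faces of all dimensions. The face `f` has the vertices `t` with
`f i = some t`; the complete colorful complex is the case `β i = Fin (n i)`. -/
def joinBoundary (β : ι → Type*) [∀ i, DecidableEq (β i)] (K : Type*) [CommRing K] :
    Matrix (∀ i, Option (β i)) (∀ i, Option (β i)) K :=
  ∑ i, onFactor (fun _ => diagonal (factorSign K)) i (factorBoundary (β i) K)

/-- The coboundary matrix of the join of the discrete spaces `β i` with vertex weights `x`. -/
def joinCoboundary (x : ∀ i, β i → K) : Matrix (∀ i, Option (β i)) (∀ i, Option (β i)) K :=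
  ∑ i, onFactor (fun _ => diagonal (factorSign K)) i (factorCoboundary (x i))

/-- The weighted Laplacian of the join of the discrete spaces `β i`, whose summands act on one
tensor factor each. -/
def joinLaplacian [∀ i, Fintype (β i)] (x : ∀ i, β i → K) :
    Matrix (∀ i, Option (β i)) (∀ i, Option (β i)) K :=
  ∑ i, onFactor 1 i (factorLaplacian (x i))

/-- The weight of a face of the join: the product of the weights of its vertices. -/
def joinWeight (x : ∀ i, β i → K) (f : ∀ i, Option (β i)) : K :=
  ∏ i, factorWeight (x i) (f i)

theorem joinBoundary_apply (f g : ∀ i, Option (β i)) :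
    joinBoundary β K f g = ∑ j, if g = Function.update f j (g j)
      then (∏ i with i < j, factorSign K (f i)) * factorBoundary (β j) K (f j) (g j) else 0 := by
  simp only [joinBoundary, Matrix.sum_apply, onFactor_diagonal_apply]

theorem joinBoundary_map_intCast :
    (joinBoundary β ℤ).map (Int.castRingHom K) = joinBoundary β K := by
  have hsign : ∀ i (a : Option (β i)), ((factorSign ℤ a : ℤ) : K) = factorSign K a := by
    intro i a
    cases a <;> simp [factorSign]
  have hboundary : ∀ i a b,
      ((factorBoundary (β i) ℤ a b : ℤ) : K) = factorBoundary (β i) K a b := by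
    intro i a b
    cases a <;> cases b <;> simp [factorBoundary]
  ext f g
  simp [joinBoundary_apply, apply_ite (Int.cast : ℤ → K), hsign, hboundary]

theorem card_colors_of_joinBoundary_ne_zero {f g : ∀ i, Option (β i)}
    (h : joinBoundary β K f g ≠ 0) : (colors g).card = (colors f).card + 1 := by
  rw [joinBoundary_apply] at h
  obtain ⟨j, -, hj⟩ := Finset.exists_ne_zero_of_sum_ne_zero h
  have hgf : g = Function.update f j (g j) := by_contra fun hg => hj (if_neg hg)
  rw [if_pos hgf] at hj
  have hentry : f j = none ∧ (g j).isSome := by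
    have hne := right_ne_zero_of_mul hj
    revert hne
    cases f j <;> cases g j <;> simp [factorBoundary]
  have hcolors : colors g = insert j (colors f) := by
    ext i
    rcases eq_or_ne i j with rfl | hij
    · simp [colors, hentry.2]
    · rw [hgf]
      simp [colors, hij]
  rw [hcolors, Finset.card_insert_of_notMem (by simp [colors, hentry.1])]

variable [∀ i, Fintype (β i)]

theorem joinBoundary_mul_coboundary_add (x : ∀ i, β i → K) :
    joinBoundary β K * joinCoboundary x + joinCoboundary x * joinBoundary β K =
      joinLaplacian x := by
  rw [joinBoundary, joinCoboundary, sum_onFactor_mul_add_mul (fun _ => factorSign_mul_self)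
    (fun _ => factorBoundary_anticomm_sign) (fun _ => factorCoboundary_anticomm_sign _)]
  simp only [factorBoundary_mul_coboundary_add, joinLaplacian]

theorem joinBoundary_mul_self : joinBoundary β ℤ * joinBoundary β ℤ = 0 := by
  have htwice : joinBoundary β ℤ * joinBoundary β ℤ + joinBoundary β ℤ * joinBoundary β ℤ = 0 := by
    rw [joinBoundary, sum_onFactor_mul_add_mul (fun _ => factorSign_mul_self)
      (fun _ => factorBoundary_anticomm_sign) (fun _ => factorBoundary_anticomm_sign)]
    simp only [factorBoundary_mul_self, add_zero, onFactor_zero, Finset.sum_const_zero]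
  ext f g
  exact add_self_eq_zero.mp (congrFun₂ htwice f g)

theorem joinCoboundary_mul_weight (x : ∀ i, β i → K) :
    joinCoboundary x * diagonal (joinWeight x) =
      diagonal (joinWeight x) * (joinBoundary β K)ᵀ := by
  have hweight : diagonal (joinWeight x) = piKronecker fun i => diagonal (factorWeight (x i)) :=
    (piKronecker_diagonal _).symm
  rw [hweight, joinCoboundary, joinBoundary, transpose_sum, Finset.sum_mul, Finset.mul_sum]
  refine Finset.sum_congr rfl fun j _ => ?_
  rw [onFactor, onFactor, piKronecker_transpose, piKronecker_mul, piKronecker_mul]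
  congr 1
  ext1 i
  rcases eq_or_ne i j with rfl | hij
  · simp [factorCoboundary_mul_weight]
  · by_cases hlt : i < j
    · simp [hij, hlt, mul_comm]
    · simp [hij, hlt]

theorem joinLaplacian_apply_eq_zero_of_colors_ne (x : ∀ i, β i → K) {f g : ∀ i, Option (β i)}
    (hfg : colors f ≠ colors g) : joinLaplacian x f g = 0 := by
  rw [joinLaplacian, Matrix.sum_apply]
  refine Finset.sum_eq_zero fun j _ => piKronecker_apply_eq_zero_of_colors_ne ?_ hfg
  intro i a c hac
  rcases eq_or_ne i j with rfl | hij
  · cases a <;> cases c <;> simp_all [factorLaplacian]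
  · have hne : a ≠ c := fun h => hac (by rw [h])
    simp [hij, hne]

theorem joinLaplacian_mulVec_of_cycle (x : ∀ i, β i → K) {v : (∀ i, Option (β i)) → K}
    (hv : joinBoundary β K *ᵥ v = 0) :
    joinLaplacian x *ᵥ v = joinBoundary β K *ᵥ (joinCoboundary x *ᵥ v) := by
  rw [← joinBoundary_mul_coboundary_add, add_mulVec, ← mulVec_mulVec, ← mulVec_mulVec, hv,
    mulVec_zero, add_zero]

theorem joinLaplacian_single (j : ι) (y : β j → K) :
    joinLaplacian (Pi.single j y) = onFactor 1 j (factorLaplacian y) := by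
  have hzero : ∀ i, factorLaplacian (0 : β i → K) = 0 := by
    intro i
    ext a c
    cases a <;> cases c <;> simp [factorLaplacian]
  rw [joinLaplacian, Fintype.sum_eq_single j, Pi.single_eq_same]
  intro i hij
  rw [Pi.single_eq_of_ne hij, hzero, onFactor_zero]

/-- The tensor product over the colors `j ∈ J` of the projections `1 - factorLaplacian e_j`, where
`e_j` is concentrated at the base point `b j`. It is chain homotopic to the identity, and for
`J = univ` it vanishes on the faces that miss a color. -/
def retraction (b : ∀ i, β i) (J : Finset ι) : Matrix (∀ i, Option (β i)) (∀ i, Option (β i)) ℤ :=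
  piKronecker fun i => if i ∈ J then 1 - factorLaplacian (Pi.single (b i) 1) else 1

theorem retraction_insert (b : ∀ i, β i) {J : Finset ι} {j : ι} (hj : j ∉ J) :
    retraction b (insert j J) =
      retraction b J - joinLaplacian (Pi.single j (Pi.single (b j) 1)) * retraction b J := by
  let rest (i : ι) : Matrix (Option (β i)) (Option (β i)) ℤ :=
    if i ∈ J then 1 - factorLaplacian (Pi.single (b i) 1) else 1
  have hlaplacian : joinLaplacian (Pi.single j (Pi.single (b j) 1)) * retraction b J =
      piKronecker (Function.update rest j (factorLaplacian (Pi.single (b j) 1))) := by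
    rw [joinLaplacian_single, onFactor, retraction, piKronecker_mul]
    congr 1
    refine Function.eq_update_iff.mpr ⟨by simp [hj], fun i hij => by simp [rest, hij]⟩
  have hinsert : retraction b (insert j J) =
      piKronecker (Function.update rest j (1 - factorLaplacian (Pi.single (b j) 1))) := by
    rw [retraction]
    congr 1
    refine Function.eq_update_iff.mpr ⟨by simp, fun i hij => by simp [rest, hij]⟩
  have hself : retraction b J = piKronecker (Function.update rest j 1) := by
    have hrest : rest j = 1 := if_neg hj
    rw [← hrest, Function.update_eq_self, retraction]
  rw [eq_sub_iff_add_eq, hlaplacian, hinsert, ← piKronecker_update_add, sub_add_cancel, hself]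

theorem joinBoundary_retraction_mulVec (b : ∀ i, β i) {v : (∀ i, Option (β i)) → ℤ}
    (hv : joinBoundary β ℤ *ᵥ v = 0) (J : Finset ι) :
    joinBoundary β ℤ *ᵥ (retraction b J *ᵥ v) = 0 ∧
      ∃ w, v = retraction b J *ᵥ v + joinBoundary β ℤ *ᵥ w := by
  induction J using Finset.induction_on with
  | empty =>
    have hone : retraction b ∅ = 1 := by
      rw [← piKronecker_one]
      simp [retraction, Pi.one_def]
    rw [hone, one_mulVec]
    exact ⟨hv, 0, by simp⟩
  | insert j J hj ih =>
    obtain ⟨hcycle, w, hw⟩ := ih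
    rw [retraction_insert b hj, sub_mulVec, ← mulVec_mulVec, joinLaplacian_mulVec_of_cycle _ hcycle]
    set c := joinCoboundary (Pi.single j (Pi.single (b j) 1)) *ᵥ (retraction b J *ᵥ v)
    refine ⟨?_, w + c, ?_⟩
    · rw [mulVec_sub, hcycle, mulVec_mulVec, joinBoundary_mul_self, zero_mulVec, sub_zero]
    · rw [mulVec_add]
      nth_rw 1 [hw]
      abel

theorem exists_joinBoundary_mulVec_eq (b : ∀ i, β i) {v : (∀ i, Option (β i)) → ℤ}
    (hv : joinBoundary β ℤ *ᵥ v = 0) (hsupport : ∀ f, colors f = Finset.univ → v f = 0) :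
    ∃ w, joinBoundary β ℤ *ᵥ w = v := by
  have hkill : retraction b Finset.univ *ᵥ v = 0 := by
    ext f
    refine Finset.sum_eq_zero fun g _ => ?_
    by_cases hg : colors g = Finset.univ
    · rw [hsupport g hg, mul_zero]
    · obtain ⟨i, hi⟩ : ∃ i, i ∉ colors g := by
        simpa [Finset.eq_univ_iff_forall] using hg
      have hgi : g i = none := by simpa [colors] using hi
      refine mul_eq_zero_of_left (piKronecker_apply_eq_zero (i := i) ?_) _
      rw [if_pos (Finset.mem_univ i), hgi, one_sub_factorLaplacian_single_none]
  obtain ⟨-, w, hw⟩ := joinBoundary_retraction_mulVec b hv Finset.univ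
  exact ⟨w, by rw [hw, hkill, zero_add]⟩

end Join

section Selection

variable {r : ℕ} {n : Fin r → ℕ} {k : ℕ}

open Classical in
/-- The face `σ` of the complete colorful complex, regarded as a face of the join of the discrete
spaces `Fin (n j)`: the vertex of color `j` in `σ`, if there is one. -/
noncomputable def selection (σ : Face n k) (j : Fin r) : Option (Fin (n j)) :=
  if h : ∃ t, (⟨j, t⟩ : Vtx n) ∈ σ.1 then some h.choose else none

theorem selection_eq_some_iff {σ : Face n k} {j : Fin r} {t : Fin (n j)} :
    selection σ j = some t ↔ (⟨j, t⟩ : Vtx n) ∈ σ.1 := by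
  rw [selection]
  split_ifs with h
  · rw [Option.some_inj]
    refine ⟨fun ht => ht ▸ h.choose_spec, fun ht => ?_⟩
    exact eq_of_heq (Sigma.mk.inj (σ.2.2 _ h.choose_spec _ ht rfl)).2
  · simpa using fun ht => h ⟨t, ht⟩

theorem isSome_selection_iff {σ : Face n k} {j : Fin r} :
    (selection σ j).isSome ↔ ∃ t, (⟨j, t⟩ : Vtx n) ∈ σ.1 := by
  simp only [Option.isSome_iff_exists, selection_eq_some_iff]

theorem selection_injective : Function.Injective (selection : Face n k → _) := by
  refine fun σ τ h => Subtype.ext (Finset.ext fun ⟨j, t⟩ => ?_)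
  rw [← selection_eq_some_iff, h, selection_eq_some_iff]

theorem card_colors_selection (σ : Face n k) : (colors (selection σ)).card = k := by
  have hcolors : colors (selection σ) = σ.1.image Sigma.fst := by
    ext j
    simp [colors, isSome_selection_iff]
  rw [hcolors, Finset.card_image_of_injOn fun v hv w hw => σ.2.2 v hv w hw, σ.2.1]

theorem exists_selection_eq {f : ∀ j, Option (Fin (n j))} (hf : (colors f).card = k) :
    ∃ σ : Face n k, selection σ = f := by
  let s : Finset (Vtx n) := {v | f v.1 = some v.2}
  have hcolorful : ∀ v ∈ s, ∀ w ∈ s, v.1 = w.1 → v = w := by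
    rintro ⟨j, t⟩ ht ⟨_, u⟩ hu rfl
    simp only [s, Finset.mem_filter_univ] at ht hu
    rw [Option.some_inj.mp (ht.symm.trans hu)]
  have hcolors : s.image Sigma.fst = colors f := by
    ext j
    simp [s, colors, Option.isSome_iff_exists]
  refine ⟨⟨s, ?_, hcolorful⟩, ?_⟩
  · rw [← hf, ← hcolors, Finset.card_image_of_injOn fun v hv w hw => hcolorful v hv w hw]
  · ext1 j
    exact Option.ext fun t => selection_eq_some_iff.trans (by simp [s])

theorem mem_range_selection_iff {f : ∀ j, Option (Fin (n j))} :
    f ∈ Set.range (selection : Face n k → _) ↔ (colors f).card = k :=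
  ⟨fun ⟨σ, hσ⟩ => hσ ▸ card_colors_selection σ, exists_selection_eq⟩

@[to_additive]
theorem prod_face_eq_prod_selection {M : Type*} [CommMonoid M] (σ : Face n k) (h : Vtx n → M) :
    ∏ v ∈ σ.1, h v = ∏ j, (selection σ j).elim 1 fun t => h ⟨j, t⟩ := by
  have hsplit : ∏ v ∈ σ.1, h v = ∏ v : Vtx n, if v ∈ σ.1 then h v else 1 := by
    simp
  rw [hsplit, Fintype.prod_sigma]
  refine Finset.prod_congr rfl fun j _ => ?_
  simp only [← selection_eq_some_iff]
  cases selection σ j <;> simp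

theorem ord_lt_ord_of_fst_lt {v w : Vtx n} (h : v.1 < w.1) : ord n v < ord n w := by
  have hsubset : insert v.1 (Finset.univ.filter (· < v.1)) ⊆ Finset.univ.filter (· < w.1) := by
    simp only [Finset.insert_subset_iff, Finset.mem_filter_univ, h, true_and]
    exact Finset.monotone_filter_right _ fun i _ hi => hi.trans h
  have hsum := Finset.sum_le_sum_of_subset (f := n) hsubset
  rw [Finset.sum_insert (by simp)] at hsum
  have := v.2.isLt
  unfold ord
  omega

theorem eq_erase_iff_selection_eq_update {σ : Face n k} {τ : Face n (k + 1)} {j : Fin r}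
    {t : Fin (n j)} (ht : selection τ j = some t) :
    σ.1 = τ.1.erase ⟨j, t⟩ ↔
      selection τ = Function.update (selection σ) j (some t) ∧ selection σ j = none := by
  constructor
  · intro h
    have hmem : ∀ i (u : Fin (n i)), selection σ i = some u ↔
        (⟨i, u⟩ : Vtx n) ≠ ⟨j, t⟩ ∧ selection τ i = some u := by
      intro i u
      rw [selection_eq_some_iff, h, Finset.mem_erase, selection_eq_some_iff]
    refine ⟨Function.eq_update_iff.mpr ⟨ht, fun i hij => Option.ext fun u => ?_⟩, ?_⟩
    · simp [hmem, hij]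
    · refine Option.eq_none_iff_forall_ne_some.mpr fun u hu => ?_
      obtain ⟨hne, hu'⟩ := (hmem j u).mp hu
      exact hne (by rw [Option.some_inj.mp (hu'.symm.trans ht)])
  · rintro ⟨hτ, hσ⟩
    ext ⟨i, u⟩
    rw [Finset.mem_erase, ← selection_eq_some_iff, ← selection_eq_some_iff, hτ]
    rcases eq_or_ne i j with rfl | hij
    · simp [hσ, eq_comm]
    · simp [hij]

theorem neg_one_pow_card_filter_ord_lt {σ : Face n k} {τ : Face n (k + 1)} {x : Vtx n}
    (hx : x ∈ τ.1) (hσ : σ.1 = τ.1.erase x) :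
    (-1) ^ (τ.1.filter fun y => ord n y < ord n x).card =
      ∏ i with i < x.1, factorSign ℤ (selection σ i) := by
  have hfilter : (τ.1.filter fun y => ord n y < ord n x) = σ.1.filter fun y => y.1 < x.1 := by
    rw [hσ]
    ext y
    simp only [Finset.mem_filter, Finset.mem_erase]
    refine ⟨fun ⟨hy, hlt⟩ => ?_, fun ⟨⟨_, hy⟩, hlt⟩ => ⟨hy, ord_lt_ord_of_fst_lt hlt⟩⟩
    have hyx : y ≠ x := fun h => hlt.ne (by rw [h])
    refine ⟨⟨hyx, hy⟩, lt_of_le_of_ne ?_ fun h => hyx (τ.2.2 y hy x hx h)⟩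
    exact not_lt.mp fun h => hlt.asymm (ord_lt_ord_of_fst_lt h)
  rw [hfilter, ← Finset.prod_const, Finset.prod_filter, prod_face_eq_prod_selection,
    Finset.prod_filter]
  refine Finset.prod_congr rfl fun i _ => ?_
  cases selection σ i <;> simp [factorSign]

theorem bdry_eq_submatrix_joinBoundary (n : Fin r → ℕ) (k : ℕ) :
    bdry n k = (joinBoundary (fun j => Fin (n j)) ℤ).submatrix selection selection := by
  ext σ τ
  rw [bdry, sum_face_eq_sum_selection, submatrix_apply, joinBoundary_apply]
  refine Finset.sum_congr rfl fun j _ => ?_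
  rcases ht : selection τ j with _ | t
  · cases selection σ j <;> simp [factorBoundary]
  · simp only [Option.elim_some, eq_erase_iff_selection_eq_update ht]
    by_cases hτ : selection τ = Function.update (selection σ) j (some t)
    · rw [if_pos hτ]
      rcases hσ : selection σ j with _ | u
      · rw [if_pos ⟨hτ, rfl⟩, neg_one_pow_card_filter_ord_lt (selection_eq_some_iff.mp ht)
          ((eq_erase_iff_selection_eq_update ht).mpr ⟨hτ, hσ⟩)]
        simp [factorBoundary]
      · simp [factorBoundary]
    · simp [hτ]

end Selection

section Submatrix

variable {F G H L R : Type*} [Fintype G] [Fintype H] [CommRing R]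

theorem submatrix_mul_submatrix_of_injective {u : H → G} (hu : u.Injective) {A B : Matrix G G R}
    {v : F → G} {w : L → G}
    (h : ∀ i j, ∀ g ∉ Set.range u, A (v i) g * B g (w j) = 0) :
    A.submatrix v u * B.submatrix u w = (A * B).submatrix v w := by
  ext i j
  exact Fintype.sum_of_injective u hu _ _ (h i j) fun _ => rfl

variable [DecidableEq G] [DecidableEq H]

theorem det_submatrix_of_mul_eq_mul_diagonal {u : H → G} (hu : u.Injective) {A P : Matrix G G R}
    {d : G → R} (hP : IsUnit P) (hAP : A * P = P * diagonal d)
    (hAu : ∀ i, ∀ g ∉ Set.range u, A (u i) g = 0) (hPu : ∀ i, ∀ g ∉ Set.range u, P (u i) g = 0) :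
    (A.submatrix u u).det = ∏ i, d (u i) := by
  obtain ⟨Q, hPQ⟩ := hP.exists_right_inv
  have hdiagonal : (diagonal d).submatrix u u = diagonal (d ∘ u) := submatrix_diagonal _ _ hu
  have hconj : A.submatrix u u * P.submatrix u u = P.submatrix u u * diagonal (d ∘ u) := by
    rw [← hdiagonal,
      submatrix_mul_submatrix_of_injective hu fun i j g hg => by rw [hAu i g hg, zero_mul],
      submatrix_mul_submatrix_of_injective hu fun i j g hg => by rw [hPu i g hg, zero_mul], hAP]
  have hinverse : P.submatrix u u * Q.submatrix u u = 1 := by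
    rw [submatrix_mul_submatrix_of_injective hu fun i j g hg => by rw [hPu i g hg, zero_mul], hPQ,
      submatrix_one _ hu]
  have hunit : IsUnit (P.submatrix u u).det := isUnit_det_of_right_inverse hinverse
  refine hunit.mul_right_cancel ?_
  rw [← det_mul, hconj, det_mul, det_diagonal, mul_comm]
  rfl

end Submatrix

section Exactness

variable {r : ℕ} {n : Fin r → ℕ} {k : ℕ}

theorem bdry_mulVec_comp_selection (w : (∀ j, Option (Fin (n j))) → ℤ) :
    bdry n k *ᵥ (w ∘ selection) = (joinBoundary _ ℤ *ᵥ w) ∘ selection := by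
  ext σ
  rw [bdry_eq_submatrix_joinBoundary]
  refine Fintype.sum_of_injective selection selection_injective _ _ (fun g hg => ?_) fun _ => rfl
  refine mul_eq_zero_of_left (not_not.mp fun hne => hg ?_) _
  rw [mem_range_selection_iff, card_colors_of_joinBoundary_ne_zero hne, card_colors_selection]

theorem joinBoundary_mulVec_extend_selection (v : Face n (k + 1) → ℤ) (σ : Face n k) :
    (joinBoundary _ ℤ *ᵥ Function.extend selection v 0) (selection σ) = (bdry n k *ᵥ v) σ := by
  rw [← Function.comp_apply (f := joinBoundary _ ℤ *ᵥ _), ← bdry_mulVec_comp_selection,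
    Function.extend_comp selection_injective]

theorem joinBoundary_mulVec_extend_selection_eq_zero {v : Face n k → ℤ}
    {f : ∀ j, Option (Fin (n j))} (hf : (colors f).card + 1 ≠ k) :
    (joinBoundary _ ℤ *ᵥ Function.extend selection v 0) f = 0 := by
  refine Finset.sum_eq_zero fun g _ => ?_
  by_cases hg : g ∈ Set.range (selection : Face n k → _)
  · refine mul_eq_zero_of_left (not_not.mp fun hne => hf ?_) _
    rw [← card_colors_of_joinBoundary_ne_zero hne, mem_range_selection_iff.mp hg]
  · rw [Function.extend_apply' _ _ _ hg, Pi.zero_apply, mul_zero]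

theorem exists_bdry_mulVec_eq (hn : ∀ j, 1 ≤ n j) (hk : k < r) {v : Face n k → ℤ}
    (hv : joinBoundary _ ℤ *ᵥ Function.extend selection v 0 = 0) :
    ∃ w, bdry n k *ᵥ w = v := by
  have hsupport : ∀ f, colors f = Finset.univ → Function.extend selection v 0 f = 0 := by
    refine fun f hf => Function.extend_apply' _ _ _ fun hmem => hk.ne ?_
    rw [← mem_range_selection_iff.mp hmem, hf, Finset.card_fin]
  obtain ⟨w, hw⟩ := exists_joinBoundary_mulVec_eq (fun j => ⟨0, hn j⟩) hv hsupport
  exact ⟨w ∘ selection, by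
    rw [bdry_mulVec_comp_selection, hw, Function.extend_comp selection_injective]⟩

theorem exact_bdry_zero (hn : ∀ j, 1 ≤ n j) (hr : 0 < r) :
    Function.Exact (bdry n 0).mulVec (0 : Matrix Empty (Face n 0) ℤ).mulVec := by
  refine fun v => ⟨fun _ => exists_bdry_mulVec_eq hn hr (funext fun f => ?_),
    fun _ => Subsingleton.elim _ _⟩
  exact joinBoundary_mulVec_extend_selection_eq_zero (Nat.succ_ne_zero _)

theorem exact_bdry (hn : ∀ j, 1 ≤ n j) (hk : k + 1 < r) :
    Function.Exact (bdry n (k + 1)).mulVec (bdry n k).mulVec := by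
  intro v
  constructor
  · refine fun hv => exists_bdry_mulVec_eq hn hk (funext fun f => ?_)
    by_cases hf : (colors f).card + 1 = k + 1
    · obtain ⟨σ, rfl⟩ := exists_selection_eq (Nat.succ_injective hf)
      rw [joinBoundary_mulVec_extend_selection, hv]
      rfl
    · exact joinBoundary_mulVec_extend_selection_eq_zero hf
  · rintro ⟨w, rfl⟩
    have hmul : bdry n k * bdry n (k + 1) = 0 := by
      rw [bdry_eq_submatrix_joinBoundary, bdry_eq_submatrix_joinBoundary,
        submatrix_mul_submatrix_of_injective selection_injective, joinBoundary_mul_self]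
      · rfl
      · refine fun σ τ g hg => mul_eq_zero_of_left (not_not.mp fun hne => hg ?_) _
        rw [mem_range_selection_iff, card_colors_of_joinBoundary_ne_zero hne,
          card_colors_selection]
    rw [mulVec_mulVec, hmul, zero_mulVec]

end Exactness

section Laplacian

variable {r : ℕ} {n : Fin r → ℕ} {k : ℕ} {K : Type*} [Field K]

/-- The weight of a face: the product of the weights of its vertices. -/
def faceWeight (x : Vtx n → K) (σ : Face n k) : K := ∏ v ∈ σ.1, x v

theorem joinWeight_selection (x : Vtx n → K) (σ : Face n k) :
    joinWeight (fun j t => x ⟨j, t⟩) (selection σ) = faceWeight x σ :=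
  (prod_face_eq_prod_selection σ x).symm

/-- The diagonal matrix of the weights of the `k`-element faces. -/
def weightMatrix (x : Vtx n → K) (k : ℕ) : Matrix (Face n k) (Face n k) K :=
  diagonal (faceWeight x)

theorem isUnit_det_weightMatrix {x : Vtx n → K} (hx : ∀ v, x v ≠ 0) (k : ℕ) :
    IsUnit (weightMatrix x k).det := by
  rw [weightMatrix, det_diagonal, isUnit_iff_ne_zero]
  exact Finset.prod_ne_zero_iff.mpr fun σ _ => Finset.prod_ne_zero_iff.mpr fun v _ => hx v

theorem bdry_map_intCast_eq_submatrix (n : Fin r → ℕ) (k : ℕ) :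
    (bdry n k).map (Int.castRingHom K) = (joinBoundary _ K).submatrix selection selection := by
  rw [bdry_eq_submatrix_joinBoundary, ← submatrix_map, joinBoundary_map_intCast]

theorem joinCoboundary_submatrix_selection {x : Vtx n → K} (hx : ∀ v, x v ≠ 0) :
    (joinCoboundary fun j t => x ⟨j, t⟩).submatrix selection selection =
      weightMatrix x (k + 1) * ((bdry n k).map (Int.castRingHom K))ᵀ * (weightMatrix x k)⁻¹ := by
  have hconj : (joinCoboundary fun j t => x ⟨j, t⟩).submatrix (selection (k := k + 1))
        (selection (k := k)) * weightMatrix x k =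
      weightMatrix x (k + 1) * ((bdry n k).map (Int.castRingHom K))ᵀ := by
    ext τ σ
    have hentry := congrFun₂ (joinCoboundary_mul_weight fun j t => x ⟨j, t⟩)
      (selection τ) (selection σ)
    rw [mul_diagonal, diagonal_mul, joinWeight_selection, joinWeight_selection] at hentry
    rw [weightMatrix, weightMatrix, mul_diagonal, diagonal_mul, bdry_map_intCast_eq_submatrix]
    exact hentry
  rw [← hconj, mul_nonsing_inv_cancel_right _ _ (isUnit_det_weightMatrix hx k)]

theorem bdry_mul_coboundary_eq_submatrix {x : Vtx n → K} (hx : ∀ v, x v ≠ 0) :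
    (bdry n k).map (Int.castRingHom K) * weightMatrix x (k + 1) *
        ((bdry n k).map (Int.castRingHom K))ᵀ * (weightMatrix x k)⁻¹ =
      (joinBoundary _ K * joinCoboundary fun j t => x ⟨j, t⟩).submatrix selection selection := by
  rw [Matrix.mul_assoc, Matrix.mul_assoc, ← Matrix.mul_assoc (weightMatrix x _),
    ← joinCoboundary_submatrix_selection hx, bdry_map_intCast_eq_submatrix]
  refine submatrix_mul_submatrix_of_injective selection_injective fun σ τ g hg => ?_
  refine mul_eq_zero_of_left (not_not.mp fun hne => hg ?_) _
  rw [mem_range_selection_iff, card_colors_of_joinBoundary_ne_zero hne, card_colors_selection]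

theorem coboundary_mul_bdry_eq_submatrix {x : Vtx n → K} (hx : ∀ v, x v ≠ 0) :
    weightMatrix x (k + 1) * ((bdry n k).map (Int.castRingHom K))ᵀ * (weightMatrix x k)⁻¹ *
        (bdry n k).map (Int.castRingHom K) =
      ((joinCoboundary fun j t => x ⟨j, t⟩) * joinBoundary _ K).submatrix selection selection := by
  rw [← joinCoboundary_submatrix_selection hx, bdry_map_intCast_eq_submatrix]
  refine submatrix_mul_submatrix_of_injective selection_injective fun σ τ g hg => ?_
  refine mul_eq_zero_of_right _ (not_not.mp fun hne => hg ?_)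
  rw [mem_range_selection_iff]
  have := card_colors_of_joinBoundary_ne_zero hne
  rwa [card_colors_selection, Nat.add_right_cancel_iff, eq_comm] at this

/-- The weighted Laplacian of the complete colorful complex on the `k`-element faces. -/
noncomputable def faceLaplacian (x : Vtx n → K) (k : ℕ) : Matrix (Face n k) (Face n k) K :=
  (joinLaplacian fun j t => x ⟨j, t⟩).submatrix selection selection

theorem faceLaplacian_zero {x : Vtx n → K} (hx : ∀ v, x v ≠ 0) :
    faceLaplacian x 0 =
      (bdry n 0).map (Int.castRingHom K) * weightMatrix x 1 *
        ((bdry n 0).map (Int.castRingHom K))ᵀ * (weightMatrix x 0)⁻¹ := by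
  rw [faceLaplacian, ← joinBoundary_mul_coboundary_add, bdry_mul_coboundary_eq_submatrix hx]
  ext σ τ
  refine add_eq_left.mpr (Finset.sum_eq_zero fun g _ => ?_)
  refine mul_eq_zero_of_right _ (not_not.mp fun hne => ?_)
  have := card_colors_of_joinBoundary_ne_zero hne
  rw [card_colors_selection] at this
  exact Nat.succ_ne_zero _ this.symm

theorem faceLaplacian_succ {x : Vtx n → K} (hx : ∀ v, x v ≠ 0) (k : ℕ) :
    faceLaplacian x (k + 1) =
      (bdry n (k + 1)).map (Int.castRingHom K) * weightMatrix x (k + 2) *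
          ((bdry n (k + 1)).map (Int.castRingHom K))ᵀ * (weightMatrix x (k + 1))⁻¹ +
        weightMatrix x (k + 1) * ((bdry n k).map (Int.castRingHom K))ᵀ * (weightMatrix x k)⁻¹ *
          (bdry n k).map (Int.castRingHom K) := by
  rw [faceLaplacian, ← joinBoundary_mul_coboundary_add, bdry_mul_coboundary_eq_submatrix hx,
    coboundary_mul_bdry_eq_submatrix hx]
  rfl

theorem det_faceLaplacian_eq_prod_eigenvalues (b : ∀ j, Fin (n j)) {x : Vtx n → K}
    (hx : ∀ j, ∑ t, x ⟨j, t⟩ ≠ 0) (k : ℕ) :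
    (faceLaplacian x k).det =
      ∏ σ : Face n k, ∑ j, factorEigenvalue (b j) (fun t => x ⟨j, t⟩) (selection σ j) := by
  refine det_submatrix_of_mul_eq_mul_diagonal selection_injective
    (isUnit_piKronecker fun j => isUnit_factorEigenvectors (x := fun t => x ⟨j, t⟩) (b j) (hx j))
    (sum_onFactor_mul_piKronecker fun j => factorLaplacian_mul_eigenvectors _ _) ?_ ?_
  all_goals
    intro σ f hf
    have hcolors : colors (selection σ) ≠ colors f := fun h =>
      hf (mem_range_selection_iff.mpr (by rw [← h, card_colors_selection]))
  · exact joinLaplacian_apply_eq_zero_of_colors_ne _ hcolors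
  · refine piKronecker_apply_eq_zero_of_colors_ne (fun i a c hac => ?_) hcolors
    cases a <;> cases c <;> simp_all [factorEigenvectors]

end Laplacian

section Counting

variable {ι : Type*} [Fintype ι] {β : ι → Type*} [∀ i, DecidableEq (β i)]

/-- The colors of the vertices of `f` other than the base points `b i`. The eigenvalue of the
join Laplacian at `f` is the sum of the total weights of the remaining colors. -/
def nonbase (b : ∀ i, β i) (f : ∀ i, Option (β i)) : Finset ι := {i | f i ≠ none ∧ f i ≠ some (b i)}

theorem nonbase_subset_colors (b : ∀ i, β i) (f : ∀ i, Option (β i)) : nonbase b f ⊆ colors f := by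
  refine Finset.monotone_filter_right _ fun i _ hi => ?_
  exact Option.isSome_iff_ne_none.mpr hi.1

variable [DecidableEq ι] [∀ i, Fintype (β i)]

theorem sum_factorEigenvalue {K : Type*} [CommRing K] (b : ∀ i, β i) (x : ∀ i, β i → K)
    (f : ∀ i, Option (β i)) :
    ∑ i, factorEigenvalue (b i) (x i) (f i) = ∑ i ∈ (nonbase b f)ᶜ, ∑ t, x i t := by
  rw [nonbase, Finset.compl_filter, Finset.sum_filter]
  refine Finset.sum_congr rfl fun i _ => ?_
  simp only [factorEigenvalue, not_and_or, not_not]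

theorem card_nonbase_eq_and_colors_eq (b : ∀ i, β i) {B D : Finset ι} (hBD : Disjoint B D) :
    Finset.card {f : ∀ i, Option (β i) | nonbase b f = D ∧ colors f = B ∪ D} =
      ∏ i ∈ D, (Fintype.card (β i) - 1) := by
  let choices (i : ι) : Finset (Option (β i)) :=
    if i ∈ D then {none, some (b i)}ᶜ else if i ∈ B then {some (b i)} else {none}
  have hchoices : ({f | nonbase b f = D ∧ colors f = B ∪ D} : Finset _) =
      Fintype.piFinset choices := by
    ext f
    rw [Finset.mem_filter_univ, Fintype.mem_piFinset, Finset.ext_iff, Finset.ext_iff,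
      ← forall_and]
    refine forall_congr' fun i => ?_
    have hi : i ∈ B → i ∉ D := fun h => Finset.disjoint_left.mp hBD h
    simp only [nonbase, colors, choices, Finset.mem_filter_univ, Finset.mem_union]
    rcases f i with _ | t <;> split_ifs <;> simp_all
  have hcard (i : ι) : (choices i).card = if i ∈ D then Fintype.card (β i) - 1 else 1 := by
    simp only [choices]
    split_ifs
    · rw [Finset.card_compl, Finset.card_pair (Option.some_ne_none _).symm, Fintype.card_option,
        Nat.add_sub_add_right]
    all_goals exact Finset.card_singleton _
  rw [hchoices, Fintype.card_piFinset, Finset.prod_congr rfl fun i _ => hcard i,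
    Finset.prod_ite_mem, Finset.univ_inter]

theorem card_nonbase_eq_and_card_colors_eq (b : ∀ i, β i) (D : Finset ι) {k : ℕ} (hD : D.card ≤ k) :
    Finset.card {f : ∀ i, Option (β i) | nonbase b f = D ∧ (colors f).card = k} =
      (Fintype.card ι - D.card).choose (k - D.card) * ∏ i ∈ D, (Fintype.card (β i) - 1) := by
  rw [← Finset.card_compl, ← Finset.card_powersetCard, ← smul_eq_mul, ← Finset.sum_const,
    Finset.card_eq_sum_card_fiberwise (f := fun f => colors f \ D)]
  · refine Finset.sum_congr rfl fun B hB => ?_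
    rw [Finset.mem_powersetCard] at hB
    have hBD : Disjoint B D := Finset.disjoint_left.mpr fun i hi => Finset.mem_compl.mp (hB.1 hi)
    rw [← card_nonbase_eq_and_colors_eq b hBD, Finset.filter_filter]
    refine congrArg _ (Finset.filter_congr fun f _ => ?_)
    constructor
    · rintro ⟨⟨rfl, -⟩, rfl⟩
      exact ⟨rfl, (Finset.sdiff_union_of_subset (nonbase_subset_colors b f)).symm⟩
    · rintro ⟨hf, hcolors⟩
      rw [hcolors, Finset.card_union_of_disjoint hBD, hB.2, Nat.sub_add_cancel hD]
      exact ⟨⟨hf, rfl⟩, Finset.union_sdiff_cancel_right hBD⟩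
  · intro f hf
    simp only [Finset.coe_filter, Finset.mem_univ, true_and, Set.mem_ofPred_eq] at hf
    obtain ⟨rfl, rfl⟩ := hf
    rw [Finset.mem_coe, Finset.mem_powersetCard]
    exact ⟨fun i hi => Finset.mem_compl.mpr (Finset.mem_sdiff.mp hi).2,
      Finset.card_sdiff_of_subset (nonbase_subset_colors b f)⟩

theorem card_apply_eq_some_and_colors_eq {j : ι} (t : β j) {D : Finset ι} (hj : j ∉ D) :
    Finset.card {f : ∀ i, Option (β i) | f j = some t ∧ colors f = insert j D} =
      ∏ i ∈ D, Fintype.card (β i) := by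
  let choices : ∀ i, Finset (Option (β i)) :=
    Function.update (fun i => if i ∈ D then {none}ᶜ else {none}) j {some t}
  have hchoices : ({f | f j = some t ∧ colors f = insert j D} : Finset _) =
      Fintype.piFinset choices := by
    ext f
    rw [Finset.mem_filter_univ, Fintype.mem_piFinset,
      Function.forall_update_iff _ fun i s => f i ∈ s, Finset.mem_singleton, Finset.ext_iff]
    refine and_congr_right fun ht => forall_congr' fun i => ?_
    rcases eq_or_ne i j with rfl | hij
    · simp [colors, ht]
    · by_cases hi : i ∈ D <;> simp [colors, hij, hi, Option.isSome_iff_ne_none]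
  have hcard (i : ι) : (choices i).card = if i ∈ D then Fintype.card (β i) else 1 := by
    rcases eq_or_ne i j with rfl | hij
    · simp [choices, hj]
    · by_cases hi : i ∈ D <;> simp [choices, hij, hi, Finset.card_compl]
  rw [hchoices, Fintype.card_piFinset, Finset.prod_congr rfl fun i _ => hcard i,
    Finset.prod_ite_mem, Finset.univ_inter]

theorem card_apply_eq_some_and_card_colors_eq {j : ι} (t : β j) (k : ℕ) :
    Finset.card {f : ∀ i, Option (β i) | f j = some t ∧ (colors f).card = k + 1} =
      ∑ D ∈ (Finset.univ.erase j).powersetCard k, ∏ i ∈ D, Fintype.card (β i) := by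
  have hmem {f : ∀ i, Option (β i)} (hf : f j = some t) : j ∈ colors f := by simp [colors, hf]
  rw [Finset.card_eq_sum_card_fiberwise (f := fun f => (colors f).erase j)
    (t := (Finset.univ.erase j).powersetCard k)]
  · refine Finset.sum_congr rfl fun D hD => ?_
    rw [Finset.mem_powersetCard] at hD
    have hj : j ∉ D := fun h => Finset.notMem_erase j _ (hD.1 h)
    rw [← card_apply_eq_some_and_colors_eq t hj, Finset.filter_filter]
    refine congrArg _ (Finset.filter_congr fun f _ => ?_)
    constructor
    · rintro ⟨⟨hf, -⟩, rfl⟩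
      exact ⟨hf, (Finset.insert_erase (hmem hf)).symm⟩
    · rintro ⟨hf, hcolors⟩
      rw [hcolors, Finset.card_insert_of_notMem hj, hD.2]
      exact ⟨⟨hf, rfl⟩, Finset.erase_insert hj⟩
  · intro f hf
    simp only [Finset.coe_filter, Finset.mem_univ, true_and, Set.mem_ofPred_eq] at hf
    rw [Finset.mem_coe, Finset.mem_powersetCard, Finset.card_erase_of_mem (hmem hf.1), hf.2]
    exact ⟨Finset.erase_subset_erase _ (Finset.subset_univ _), rfl⟩

end Counting

section BinomialProduct

variable {r : ℕ} {n : Fin r → ℕ} {M : Type*} [CommMonoidWithZero M]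

variable (n) in
/-- The product of the powers `Λ D ^ (C(a - |D|, k - |D|) * π_D)` over the sets `D` of at most `k`
colors. With `Λ D` the total weight of the colors outside `D`, it is the determinant of the
Laplacian on `k`-element faces for `a = r`, and the second factor of the enumerator of maximal
spanning forests for `a = r - 2`. -/
def binomialProduct (Λ : Finset (Fin r) → M) (a k : ℕ) : M :=
  ∏ D ∈ Finset.univ.powerset.filter (fun D : Finset (Fin r) => D.card ≤ k),
    Λ D ^ ((a - D.card).choose (k - D.card) * ∏ i ∈ D, (n i - 1))

theorem binomialProduct_zero_right (Λ : Finset (Fin r) → M) (a : ℕ) :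
    binomialProduct n Λ a 0 = Λ ∅ := by
  have hfilter : Finset.univ.powerset.filter (fun D : Finset (Fin r) => D.card ≤ 0) = {∅} := by
    ext D
    simp
  rw [binomialProduct, hfilter, Finset.prod_singleton]
  simp

theorem binomialProduct_succ_succ (Λ : Finset (Fin r) → M) {a k : ℕ} (hk : k ≤ a) :
    binomialProduct n Λ (a + 1) (k + 1) =
      binomialProduct n Λ a (k + 1) * binomialProduct n Λ a k := by
  have hextend : binomialProduct n Λ a k =
      ∏ D ∈ Finset.univ.powerset.filter (fun D : Finset (Fin r) => D.card ≤ k + 1),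
        if D.card ≤ k then Λ D ^ ((a - D.card).choose (k - D.card) * ∏ i ∈ D, (n i - 1))
        else 1 := by
    rw [binomialProduct, ← Finset.prod_filter, Finset.filter_filter]
    exact Finset.prod_congr (Finset.filter_congr fun D _ => by omega) fun _ _ => rfl
  rw [hextend, binomialProduct, binomialProduct, ← Finset.prod_mul_distrib]
  refine Finset.prod_congr rfl fun D hD => ?_
  rcases (Finset.mem_filter.mp hD).2.lt_or_eq with hlt | heq
  · have hDk : D.card ≤ k := Nat.lt_succ_iff.mp hlt
    rw [if_pos hDk, ← pow_add, ← add_mul, Nat.succ_sub (hDk.trans hk), Nat.succ_sub hDk,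
      Nat.choose_succ_succ, add_comm]
  · simp [heq]

theorem binomialProduct_ne_zero [Nontrivial M] [NoZeroDivisors M] {Λ : Finset (Fin r) → M}
    (hΛ : ∀ D, D.card < r → Λ D ≠ 0) (a : ℕ) {k : ℕ} (hk : k < r) : binomialProduct n Λ a k ≠ 0 :=
  Finset.prod_ne_zero_iff.mpr fun D hD =>
    pow_ne_zero _ (hΛ D ((Finset.mem_filter.mp hD).2.trans_lt hk))

end BinomialProduct

section Exponents

variable {r : ℕ} {n : Fin r → ℕ} {K : Type*} [Field K]

variable (n) in
/-- The exponent `e_{k,j}` of the product of the vertices of color `j` in the enumerator of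
maximal spanning forests. -/
def alternatingExponent (k : ℕ) (j : Fin r) : ℤ :=
  ∑ D ∈ (Finset.univ.erase j).powerset.filter (fun D => D.card < k),
    (-1) ^ (k - 1 - D.card) * ∏ t ∈ D, (n t : ℤ)

theorem alternatingExponent_zero (j : Fin r) : alternatingExponent n 0 j = 0 := by
  simp [alternatingExponent]

theorem alternatingExponent_succ_add (k : ℕ) (j : Fin r) :
    alternatingExponent n (k + 1) j + alternatingExponent n k j =
      ((∑ D ∈ (Finset.univ.erase j).powersetCard k, ∏ t ∈ D, n t : ℕ) : ℤ) := by
  have hsplit : (Finset.univ.erase j).powerset.filter (fun D => D.card < k + 1) =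
      (Finset.univ.erase j).powerset.filter (fun D => D.card < k) ∪
        (Finset.univ.erase j).powersetCard k := by
    rw [Finset.powersetCard_eq_filter, ← Finset.filter_or]
    exact Finset.filter_congr fun D _ => Nat.lt_succ_iff_lt_or_eq
  have hdisjoint : Disjoint ((Finset.univ.erase j).powerset.filter (fun D => D.card < k))
      ((Finset.univ.erase j).powersetCard k) := by
    rw [Finset.powersetCard_eq_filter]
    exact Finset.disjoint_filter.mpr fun D _ hlt => hlt.ne
  rw [alternatingExponent, hsplit, Finset.sum_union hdisjoint, add_right_comm, alternatingExponent,
    ← Finset.sum_add_distrib, Finset.sum_eq_zero, zero_add, Nat.cast_sum]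
  · refine Finset.sum_congr rfl fun D hD => ?_
    simp [(Finset.mem_powersetCard.mp hD).2]
  · intro D hD
    have hDk : D.card < k := (Finset.mem_filter.mp hD).2
    rw [← add_mul, show k + 1 - 1 - D.card = k - 1 - D.card + 1 by omega, pow_succ]
    ring

theorem prod_zpow_alternatingExponent_succ_mul {p : Fin r → K} (hp : ∀ j, p j ≠ 0) (k : ℕ) :
    (∏ j, p j ^ alternatingExponent n (k + 1) j) * ∏ j, p j ^ alternatingExponent n k j =
      ∏ j, p j ^ ∑ D ∈ (Finset.univ.erase j).powersetCard k, ∏ t ∈ D, n t := by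
  rw [← Finset.prod_mul_distrib]
  refine Finset.prod_congr rfl fun j _ => ?_
  rw [← zpow_add₀ (hp j), alternatingExponent_succ_add, zpow_natCast]

theorem prod_selection_eq_prod_filter {M : Type*} [CommMonoid M] (k : ℕ)
    (h : (∀ j, Option (Fin (n j))) → M) :
    ∏ σ : Face n k, h (selection σ) = ∏ f with (colors f).card = k, h f := by
  rw [← Finset.prod_image fun σ _ τ _ hστ => selection_injective hστ]
  refine Finset.prod_congr (Finset.ext fun f => ?_) fun _ _ => rfl
  simpa using mem_range_selection_iff

theorem det_faceLaplacian (hn : ∀ j, 1 ≤ n j) {x : Vtx n → K} (hx : ∀ j, ∑ t, x ⟨j, t⟩ ≠ 0)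
    (k : ℕ) :
    (faceLaplacian x k).det = binomialProduct n (fun D => ∑ j ∈ Dᶜ, ∑ t, x ⟨j, t⟩) r k := by
  let b (j : Fin r) : Fin (n j) := ⟨0, hn j⟩
  simp only [det_faceLaplacian_eq_prod_eigenvalues b hx,
    sum_factorEigenvalue b fun j t => x ⟨j, t⟩]
  rw [prod_selection_eq_prod_filter k fun f => ∑ j ∈ (nonbase b f)ᶜ, ∑ t, x ⟨j, t⟩,
    ← Finset.prod_fiberwise_of_maps_to (g := nonbase b)
      (t := Finset.univ.powerset.filter fun D => D.card ≤ k)]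
  · refine Finset.prod_congr rfl fun D hD => ?_
    have hcount := card_nonbase_eq_and_card_colors_eq b D (Finset.mem_filter.mp hD).2
    simp only [Fintype.card_fin] at hcount
    rw [Finset.prod_congr rfl fun f hf => by rw [(Finset.mem_filter.mp hf).2], Finset.prod_const,
      Finset.filter_filter, ← hcount]
    simp only [and_comm]
  · intro f hf
    rw [Finset.mem_filter_univ] at hf
    simpa [← hf] using Finset.card_le_card (nonbase_subset_colors b f)

theorem det_weightMatrix_succ (x : Vtx n → K) (k : ℕ) :
    (weightMatrix x (k + 1)).det =
      ∏ j, (∏ t, x ⟨j, t⟩) ^ ∑ D ∈ (Finset.univ.erase j).powersetCard k, ∏ t ∈ D, n t := by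
  have hweight (σ : Face n (k + 1)) :
      faceWeight x σ = ∏ v : Vtx n, if selection σ v.1 = some v.2 then x v else 1 := by
    simp only [selection_eq_some_iff, Sigma.eta, Finset.prod_ite_mem, Finset.univ_inter]
    rfl
  simp only [weightMatrix, det_diagonal, hweight]
  rw [prod_selection_eq_prod_filter (k + 1) fun f =>
    ∏ v : Vtx n, if f v.1 = some v.2 then x v else 1, Finset.prod_comm, Fintype.prod_sigma]
  refine Finset.prod_congr rfl fun j _ => ?_
  rw [← Finset.prod_pow]
  refine Finset.prod_congr rfl fun t _ => ?_
  have hcount := card_apply_eq_some_and_card_colors_eq (β := fun i => Fin (n i)) t k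
  simp only [Fintype.card_fin] at hcount
  rw [← Finset.prod_filter, Finset.prod_const, Finset.filter_filter, ← hcount]
  simp only [and_comm]

end Exponents

section Induction

variable {r : ℕ} {n : Fin r → ℕ} {K : Type*} [Field K] {x : Vtx n → K}

theorem nonsing_inv_weightMatrix_mul (hx : ∀ v, x v ≠ 0) (k : ℕ) :
    (weightMatrix x k)⁻¹ * weightMatrix x k = 1 :=
  nonsing_inv_mul _ (isUnit_det_weightMatrix hx k)

theorem det_weightMatrix_zero (x : Vtx n → K) : (weightMatrix x 0).det = 1 := by
  rw [weightMatrix, det_diagonal]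
  refine Finset.prod_eq_one fun σ _ => ?_
  rw [faceWeight, Finset.card_eq_zero.mp σ.2.1, Finset.prod_empty]

theorem gramLeft_bdry_zero (hn : ∀ j, 1 ≤ n j) (hr : 0 < r) (hx : ∀ v, x v ≠ 0)
    (φ : RankFactorization (bdry n 0)) : φ.gramLeft (weightMatrix x 0)⁻¹ = 1 := by
  obtain ⟨ψ⟩ := RankFactorization.nonempty (0 : Matrix Empty (Face n 0) ℤ)
  have hduality := ψ.gramRight_eq_det_mul_gramLeft φ (exact_bdry_zero hn hr)
    (nonsing_inv_weightMatrix_mul hx 0)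
  rwa [ψ.gramRight_of_zero, det_weightMatrix_zero, one_mul, eq_comm] at hduality

theorem gramRight_bdry_eq (hn : ∀ j, 1 ≤ n j) (hx : ∀ v, x v ≠ 0) {k : ℕ} (hk : k + 1 < r)
    (φ : RankFactorization (bdry n k)) (φ' : RankFactorization (bdry n (k + 1))) :
    φ.gramRight (weightMatrix x (k + 1)) =
      (weightMatrix x (k + 1)).det * φ'.gramLeft (weightMatrix x (k + 1))⁻¹ :=
  φ.gramRight_eq_det_mul_gramLeft φ' (exact_bdry hn hk) (nonsing_inv_weightMatrix_mul hx _)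

theorem det_faceLaplacian_zero_eq_gramRight (hn : ∀ j, 1 ≤ n j) (hr : 0 < r) (hx : ∀ v, x v ≠ 0)
    (φ : RankFactorization (bdry n 0)) :
    (faceLaplacian x 0).det = φ.gramRight (weightMatrix x 1) := by
  obtain ⟨ψ⟩ := RankFactorization.nonempty (0 : Matrix Empty (Face n 0) ℤ)
  have hdet := ψ.det_laplacian φ (exact_bdry_zero hn hr) 0 (weightMatrix x 0)⁻¹
    (weightMatrix x 1) 0
  rwa [ψ.gramRight_of_zero, ψ.gramLeft_of_zero, gramLeft_bdry_zero hn hr hx, mul_one, mul_one,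
    mul_one, Matrix.zero_mul, Matrix.zero_mul, Matrix.zero_mul, add_zero,
    ← faceLaplacian_zero hx] at hdet

theorem det_faceLaplacian_succ_eq_gram (hn : ∀ j, 1 ≤ n j) (hx : ∀ v, x v ≠ 0) {k : ℕ}
    (hk : k + 1 < r) (φ : RankFactorization (bdry n k))
    (φ' : RankFactorization (bdry n (k + 1))) :
    (faceLaplacian x (k + 1)).det =
      φ'.gramRight (weightMatrix x (k + 2)) * φ'.gramLeft (weightMatrix x (k + 1))⁻¹ *
        (φ.gramRight (weightMatrix x (k + 1)) * φ.gramLeft (weightMatrix x k)⁻¹) := by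
  rw [faceLaplacian_succ hx, φ.det_laplacian φ' (exact_bdry hn hk)]

theorem sum_ne_zero_of_sum_compl_ne_zero {s : Fin r → K}
    (hs : ∀ D : Finset (Fin r), D.card < r → ∑ j ∈ Dᶜ, s j ≠ 0) (j : Fin r) : s j ≠ 0 := by
  have hj := hs {j}ᶜ (by
    rw [Finset.card_compl, Fintype.card_fin, Finset.card_singleton]
    have := j.pos
    omega)
  rwa [compl_compl, Finset.sum_singleton] at hj

theorem gramRight_mul_gramLeft_eq_binomialProduct (hn : ∀ j, 1 ≤ n j) (hx : ∀ v, x v ≠ 0)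
    (hs : ∀ D : Finset (Fin r), D.card < r → ∑ j ∈ Dᶜ, ∑ t, x ⟨j, t⟩ ≠ 0)
    (φ : ∀ k, RankFactorization (bdry n k)) {k : ℕ} (hk : k < r) :
    (φ k).gramRight (weightMatrix x (k + 1)) * (φ k).gramLeft (weightMatrix x k)⁻¹ =
      binomialProduct n (fun D => ∑ j ∈ Dᶜ, ∑ t, x ⟨j, t⟩) (r - 1) k := by
  have hlaplacian := det_faceLaplacian hn (sum_ne_zero_of_sum_compl_ne_zero hs)
  induction k with
  | zero =>
    rw [gramLeft_bdry_zero hn hk hx, mul_one, ← det_faceLaplacian_zero_eq_gramRight hn hk hx,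
      hlaplacian, binomialProduct_zero_right, binomialProduct_zero_right]
  | succ k ih =>
    have hk' : k < r := Nat.lt_of_succ_lt hk
    have hdet := det_faceLaplacian_succ_eq_gram hn hx hk (φ k) (φ (k + 1))
    obtain ⟨a, rfl⟩ : ∃ a, r = a + 1 := ⟨r - 1, by omega⟩
    rw [ih hk', hlaplacian, Nat.add_sub_cancel,
      binomialProduct_succ_succ _ (Nat.lt_succ_iff.mp hk')] at hdet
    exact (mul_right_cancel₀ (binomialProduct_ne_zero hs _ hk') hdet).symm

theorem gramRight_bdry_succ_mul (hn : ∀ j, 1 ≤ n j) (hx : ∀ v, x v ≠ 0)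
    (hs : ∀ D : Finset (Fin r), D.card < r → ∑ j ∈ Dᶜ, ∑ t, x ⟨j, t⟩ ≠ 0)
    (φ : ∀ k, RankFactorization (bdry n k)) {k : ℕ} (hk : k + 1 < r) :
    (φ (k + 1)).gramRight (weightMatrix x (k + 2)) * (φ k).gramRight (weightMatrix x (k + 1)) =
      (weightMatrix x (k + 1)).det *
        binomialProduct n (fun D => ∑ j ∈ Dᶜ, ∑ t, x ⟨j, t⟩) (r - 1) (k + 1) := by
  rw [← gramRight_mul_gramLeft_eq_binomialProduct hn hx hs φ hk,
    gramRight_bdry_eq hn hx hk (φ k) (φ (k + 1)), mul_left_comm]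

theorem gramRight_bdry_eq_mul_binomialProduct (hn : ∀ j, 1 ≤ n j) (hx : ∀ v, x v ≠ 0)
    (hs : ∀ D : Finset (Fin r), D.card < r → ∑ j ∈ Dᶜ, ∑ t, x ⟨j, t⟩ ≠ 0)
    (φ : ∀ k, RankFactorization (bdry n k)) {k : ℕ} (hk : k < r) :
    (φ k).gramRight (weightMatrix x (k + 1)) =
      (∏ j, (∏ t, x ⟨j, t⟩) ^ alternatingExponent n k j) *
        binomialProduct n (fun D => ∑ j ∈ Dᶜ, ∑ t, x ⟨j, t⟩) (r - 2) k := by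
  have hp (j : Fin r) : ∏ t, x ⟨j, t⟩ ≠ 0 := Finset.prod_ne_zero_iff.mpr fun t _ => hx _
  induction k with
  | zero =>
    simp only [alternatingExponent_zero, zpow_zero, Finset.prod_const_one, one_mul]
    rw [binomialProduct_zero_right, ← det_faceLaplacian_zero_eq_gramRight hn hk hx,
      det_faceLaplacian hn (sum_ne_zero_of_sum_compl_ne_zero hs), binomialProduct_zero_right]
  | succ k ih =>
    have hk' : k < r := Nat.lt_of_succ_lt hk
    obtain ⟨a, rfl⟩ : ∃ a, r = a + 2 := ⟨r - 2, by omega⟩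
    have hne : (φ k).gramRight (weightMatrix x (k + 1)) ≠ 0 := by
      rw [ih hk']
      exact mul_ne_zero (Finset.prod_ne_zero_iff.mpr fun j _ => zpow_ne_zero _ (hp j))
        (binomialProduct_ne_zero hs _ hk')
    refine mul_right_cancel₀ hne ?_
    rw [gramRight_bdry_succ_mul hn hx hs φ hk, ih hk', mul_mul_mul_comm,
      prod_zpow_alternatingExponent_succ_mul hp, ← det_weightMatrix_succ, Nat.add_sub_cancel,
      Nat.add_succ_sub_one, ← binomialProduct_succ_succ _ (by omega)]

end Induction

section Generic

variable {r : ℕ} {n : Fin r → ℕ}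

theorem algebraMap_X_ne_zero (v : Vtx n) :
    algebraMap (MvPolynomial (Vtx n) ℚ) (FractionRing (MvPolynomial (Vtx n) ℚ)) (X v) ≠ 0 :=
  (map_ne_zero_iff _ (IsFractionRing.injective _ _)).mpr (X_ne_zero v)

theorem sum_compl_algebraMap_X_ne_zero (hn : ∀ j, 1 ≤ n j) {D : Finset (Fin r)}
    (hD : D.card < r) :
    ∑ j ∈ Dᶜ, ∑ t : Fin (n j), algebraMap (MvPolynomial (Vtx n) ℚ)
      (FractionRing (MvPolynomial (Vtx n) ℚ)) (X ⟨j, t⟩) ≠ 0 := by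
  simp only [← map_sum]
  refine (map_ne_zero_iff _ (IsFractionRing.injective _ _)).mpr fun hzero => ?_
  have heval := congrArg (eval fun _ => (1 : ℚ)) hzero
  simp only [map_sum, eval_X, map_zero, Finset.sum_const, Finset.card_fin, nsmul_eq_mul,
    mul_one] at heval
  have hnonempty : Dᶜ.Nonempty := by
    rw [← Finset.card_pos, Finset.card_compl, Fintype.card_fin]
    exact Nat.sub_pos_of_lt hD
  have hpos : (0 : ℚ) < ∑ j ∈ Dᶜ, (n j : ℚ) :=
    Finset.sum_pos (fun j _ => Nat.cast_pos.mpr (hn j)) hnonempty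
  exact hpos.ne' heval

end Generic

end ColorfulComplex

theorem aalipour_duval_formula_general {r e : ℕ} {n : Fin r → ℕ} (hn : ∀ j, 1 ≤ n j)
    (hk : e + 1 < r) {K : Type*} [Field K] {x : Vtx n → K} (hx : ∀ v, x v ≠ 0)
    (hs : ∀ D : Finset (Fin r), D.card < r → ∑ j ∈ Dᶜ, ∑ t, x ⟨j, t⟩ ≠ 0) :
    (∑ᶠ T ∈ {T | IsForest n e T},
        ((torsionCount n e T ^ 2 : ℕ) : K) * ∏ σ ∈ T, ∏ v ∈ σ.1, x v) =
      (∏ j : Fin r, (∏ t, x ⟨j, t⟩) ^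
        ∑ D ∈ (Finset.univ.erase j).powerset.filter (fun D => D.card ≤ e),
          (-1 : ℤ) ^ (e - D.card) * ∏ t ∈ D, (n t : ℤ)) *
        ∏ D ∈ Finset.univ.powerset.filter (fun D : Finset (Fin r) => D.card ≤ e + 1),
          (∑ j ∈ Dᶜ, ∑ t, x ⟨j, t⟩) ^
            (Nat.choose (r - 2 - D.card) (e + 1 - D.card) * ∏ i ∈ D, (n i - 1)) := by
  let φ (k : ℕ) : RankFactorization (bdry n k) := (RankFactorization.nonempty _).some
  have hforests := (φ (e + 1)).finsum_torsionIndex_sq_mul_prod (exact_bdry hn hk) (faceWeight x)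
  have hgram := gramRight_bdry_eq_mul_binomialProduct hn hx hs φ hk
  simp only [alternatingExponent, Nat.lt_succ_iff, Nat.add_sub_cancel] at hgram
  exact hforests.trans hgram

/-- **The weighted Adin formula of Aalipour–Duval–Martin** for the complete colorful
complex `K_{n_1,…,n_r}` and `1 ≤ k ≤ r - 1` (here `k = e + 1`), as an identity of
rational functions in the vertex variables `v_{j,t}`. -/
theorem aalipour_duval_formula (r e : ℕ) (hr : 2 ≤ r) (n : Fin r → ℕ)
    (hn : ∀ j, 1 ≤ n j) (hk : e + 1 ≤ r - 1) :
    letI K := FractionRing (MvPolynomial (Vtx n) ℚ)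
    letI φ : MvPolynomial (Vtx n) ℚ →+* K := algebraMap _ _
    letI p : Fin r → K := fun j => ∏ t : Fin (n j), φ (X ⟨j, t⟩)
    letI s : Fin r → K := fun j => ∑ t : Fin (n j), φ (X ⟨j, t⟩)
    letI ee : Fin r → ℤ := fun j =>
      ∑ D ∈ (Finset.univ.erase j).powerset.filter (fun D => D.card ≤ e),
        (-1 : ℤ) ^ (e - D.card) * ∏ t ∈ D, (n t : ℤ)
    (∑ᶠ T ∈ {T | IsForest n e T},
        ((torsionCount n e T ^ 2 : ℕ) : K) * ∏ σ ∈ T, ∏ v ∈ σ.1, φ (X v)) =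
      (∏ j : Fin r, p j ^ ee j) *
        ∏ D ∈ Finset.univ.powerset.filter (fun D : Finset (Fin r) => D.card ≤ e + 1),
          (∑ j ∈ Dᶜ, s j) ^
            (Nat.choose (r - 2 - D.card) (e + 1 - D.card) * ∏ i ∈ D, (n i - 1)) := by
  exact aalipour_duval_formula_general hn (by omega) algebraMap_X_ne_zero
    fun _ => sum_compl_algebraMap_X_ne_zero hn
end
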